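/- arXiv:0808.1442 — 3 statements merged into one kernel-verified Lean document; each statement's English description precedes it below -/
import Mathlib

section
/- For every τ in the complex upper half-plane ℍ, one has 𝒬(q) + 4·ℱ₀(q)/Θ₄(τ) = E*(4τ)/η(8τ)³; explicitly, 28·η(16τ)⁸/η(8τ)⁷ + η(8τ)⁵/η(16τ)⁴ + 48·η(32τ)⁸/(η(8τ)³·η(16τ)⁴) + 4·M(q) + 4·ℱ₀(q)/Θ₄(τ) = E*(4τ)/η(8τ)³. -/
noncomputable section
open Complex Real

/-- `q = e^{2πiτ}`. -/
def nome (τ : ℂ) : ℂ := Complex.exp (2 * (π : ℂ) * I * τ)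

/-- Dedekind eta function `η(τ) = e^{πiτ/12} ∏_{n≥1} (1 − qⁿ)`. -/
def dedekindEta (τ : ℂ) : ℂ :=
  Complex.exp ((π : ℂ) * I * τ / 12) * ∏' n : ℕ, (1 - nome τ ^ (n + 1))

/-- `Θ₄(τ) = 1 + 2 Σ_{n≥1} (−1)ⁿ q^{4n²}`. -/
def Theta4 (τ : ℂ) : ℂ := 1 + 2 * ∑' n : ℕ, (-1 : ℂ) ^ (n + 1) * nome τ ^ (4 * (n + 1) ^ 2)

/-- `ℱ_t(x) = Σ_{β≥0} Σ_{α≥β+1} (−1)^{α+β} (2β+1)^t x^{4α²−(2β+1)²}`, with `α = β+1+j`. -/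
def Fser (t : ℕ) (x : ℂ) : ℂ :=
  ∑' (β : ℕ) (j : ℕ), (-1 : ℂ) ^ (β + 1 + j + β) * (2 * (β : ℂ) + 1) ^ t *
    x ^ (4 * (β + 1 + j) ^ 2 - (2 * β + 1) ^ 2)

/-- The mock theta function `M`. -/
def Mser (x : ℂ) : ℂ :=
  x⁻¹ * ∑' n : ℕ, (-1 : ℂ) ^ (n + 1) * x ^ (8 * (n + 1) ^ 2) *
    (∏ k ∈ Finset.range n, (1 - x ^ (16 * (k + 1) - 8))) /
    (∏ k ∈ Finset.range (n + 1), (1 + x ^ (16 * (k + 1) - 8)) ^ 2)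

/-- Sum of the positive odd divisors of `n`. -/
def sigmaOdd (n : ℕ) : ℕ := ∑ d ∈ n.divisors.filter (fun d => Odd d), d

/-- `E*(τ) = 1 + 24 Σ_{n≥1} σ_odd(n) qⁿ`. -/
def Estar (τ : ℂ) : ℂ := 1 + 24 * ∑' n : ℕ, (sigmaOdd (n + 1) : ℂ) * nome τ ^ (n + 1)


open Filter Topology

/-- finite q-Pochhammer symbol -/
def pfin (a q : ℂ) (n : ℕ) : ℂ := ∏ k ∈ Finset.range n, (1 - a * q ^ k)
/-- infinite q-Pochhammer symbol -/
def pinf (a q : ℂ) : ℂ := ∏' k : ℕ, (1 - a * q ^ k)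

lemma pfin_zero (a q : ℂ) : pfin a q 0 = 1 := by simp [pfin]

lemma pfin_succ (a q : ℂ) (n : ℕ) : pfin a q (n + 1) = pfin a q n * (1 - a * q ^ n) := by
  simp [pfin, Finset.prod_range_succ]

lemma pfin_add (a q : ℂ) (n m : ℕ) : pfin a q (n + m) = pfin a q n * pfin (a * q ^ n) q m := by
  simp only [pfin, Finset.prod_range_add]
  congr 1
  refine Finset.prod_congr rfl fun k _ => ?_
  rw [pow_add]; ring

lemma pfin_succ' (a q : ℂ) (n : ℕ) : pfin a q (n + 1) = (1 - a) * pfin (a * q) q n := by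
  rw [add_comm, pfin_add]; simp [pfin]

lemma summable_pq (a : ℂ) {q : ℂ} (hq : ‖q‖ < 1) : Summable fun k : ℕ => ‖-(a * q ^ k)‖ := by
  simp only [norm_neg, norm_mul, norm_pow]
  exact (summable_geometric_of_lt_one (norm_nonneg _) hq).mul_left _

lemma mult_p (a : ℂ) {q : ℂ} (hq : ‖q‖ < 1) : Multipliable fun k : ℕ => (1 - a * q ^ k) := by
  simpa [sub_eq_add_neg] using multipliable_one_add_of_summable (summable_pq a hq)

lemma pfin_tendsto (a : ℂ) {q : ℂ} (hq : ‖q‖ < 1) :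
    Tendsto (pfin a q) atTop (𝓝 (pinf a q)) := (mult_p a hq).tendsto_prod_tprod_nat

lemma pinf_split (a : ℂ) {q : ℂ} (hq : ‖q‖ < 1) (n : ℕ) :
    pinf a q = pfin a q n * pinf (a * q ^ n) q := by
  refine tendsto_nhds_unique ((tendsto_add_atTop_iff_nat n).2 (pfin_tendsto a hq)) ?_
  have : (fun m => pfin a q (m + n)) = fun m => pfin a q n * pfin (a * q ^ n) q m := by
    ext m; rw [add_comm, pfin_add]
  rw [this]
  exact (pfin_tendsto _ hq).const_mul _

lemma pinf_ne_zero {a q : ℂ} (hq : ‖q‖ < 1) (h : ∀ k : ℕ, a * q ^ k ≠ 1) : pinf a q ≠ 0 := by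
  have := tprod_one_add_ne_zero_of_summable (f := fun k : ℕ => -(a * q ^ k)) (fun k => by
    rw [← sub_eq_add_neg]; exact sub_ne_zero.2 (h k).symm) (summable_pq a hq)
  simpa [pinf, sub_eq_add_neg] using this

lemma pfin_ne_zero {a q : ℂ} (h : ∀ k : ℕ, a * q ^ k ≠ 1) (n : ℕ) : pfin a q n ≠ 0 :=
  Finset.prod_ne_zero_iff.2 fun k _ => sub_ne_zero.2 (h k).symm

lemma ne_one_of_norm {a q : ℂ} (hq : ‖q‖ < 1) (ha : ‖a‖ < 1) (k : ℕ) : a * q ^ k ≠ 1 := by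
  intro h
  have h1 : ‖a * q ^ k‖ < 1 := by
    rw [norm_mul, norm_pow]
    calc ‖a‖ * ‖q‖ ^ k ≤ ‖a‖ * 1 := by
          gcongr; exact pow_le_one₀ (norm_nonneg _) hq.le
      _ < 1 := by simpa using ha
  rw [h] at h1; simp at h1

lemma pfin_bdd (a : ℂ) {q : ℂ} (hq : ‖q‖ < 1) : ∃ C > 0, ∀ n, ‖pfin a q n‖ ≤ C := by
  obtain ⟨C, hC⟩ := (pfin_tendsto a hq).norm.bddAbove_range
  refine ⟨max C 1, by positivity, fun n => le_max_of_le_left (hC ⟨n, rfl⟩)⟩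

lemma pfin_inv_bdd {a q : ℂ} (hq : ‖q‖ < 1) (h : ∀ k : ℕ, a * q ^ k ≠ 1) :
    ∃ C > 0, ∀ n, ‖(pfin a q n)⁻¹‖ ≤ C := by
  obtain ⟨C, hC⟩ := ((pfin_tendsto a hq).inv₀ (pinf_ne_zero hq h)).norm.bddAbove_range
  refine ⟨max C 1, by positivity, fun n => le_max_of_le_left (hC ⟨n, rfl⟩)⟩

lemma pinf_mul_neg (a : ℂ) {q : ℂ} (hq : ‖q‖ < 1) :
    pinf a q * pinf (-a) q = pinf (a ^ 2) (q ^ 2) := by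
  have hq2 : ‖q ^ 2‖ < 1 := by rw [norm_pow]; exact pow_lt_one₀ (norm_nonneg _) hq (by norm_num)
  refine tendsto_nhds_unique ((pfin_tendsto a hq).mul (pfin_tendsto (-a) hq)) ?_
  have : (fun n => pfin a q n * pfin (-a) q n) = pfin (a ^ 2) (q ^ 2) := by
    ext n
    rw [pfin, pfin, pfin, ← Finset.prod_mul_distrib]
    exact Finset.prod_congr rfl fun k _ => by ring
  rw [this]; exact pfin_tendsto _ hq2

lemma pinf_even_odd (a : ℂ) {q : ℂ} (hq : ‖q‖ < 1) :
    pinf a q = pinf a (q ^ 2) * pinf (a * q) (q ^ 2) := by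
  have hq2 : ‖q ^ 2‖ < 1 := by rw [norm_pow]; exact pow_lt_one₀ (norm_nonneg _) hq (by norm_num)
  refine tendsto_nhds_unique ((pfin_tendsto a hq).comp (tendsto_id.const_mul_atTop' (r := 2) (by norm_num))) ?_
  have : (pfin a q ∘ fun n => 2 * id n) = fun n => pfin a (q ^ 2) n * pfin (a * q) (q ^ 2) n := by
    ext n
    simp only [Function.comp, id]
    induction n with
    | zero => simp [pfin]
    | succ n ih =>
      rw [show 2 * (n + 1) = 2 * n + 1 + 1 by ring, pfin_succ, pfin_succ, ih, pfin_succ, pfin_succ]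
      ring
  rw [this]; exact (pfin_tendsto _ hq2).mul (pfin_tendsto _ hq2)

/-- q-binomial theorem -/
lemma qbinom (a z : ℂ) {q : ℂ} (hq : ‖q‖ < 1) (hz : ‖z‖ < 1) :
    Summable (fun n => ‖pfin a q n / pfin q q n * z ^ n‖) ∧
    (∑' n : ℕ, pfin a q n / pfin q q n * z ^ n) * pinf z q = pinf (a * z) q := by
  have hqq := ne_one_of_norm hq hq
  obtain ⟨C, hC0, hC⟩ := pfin_bdd a hq
  obtain ⟨D, hD0, hD⟩ := pfin_inv_bdd hq hqq
  have hbd : ∀ (w : ℂ) n, ‖pfin a q n / pfin q q n * w ^ n‖ ≤ C * D * ‖w‖ ^ n := by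
    intro w n
    rw [norm_mul, div_eq_mul_inv, norm_mul, norm_pow]
    gcongr
    · exact hC n
    · exact hD n
  have hs : ∀ w : ℂ, ‖w‖ < 1 → Summable (fun n => ‖pfin a q n / pfin q q n * w ^ n‖) := fun w hw =>
    Summable.of_nonneg_of_le (fun _ => norm_nonneg _) (hbd w)
      ((summable_geometric_of_lt_one (norm_nonneg _) hw).mul_left _)
  refine ⟨hs z hz, ?_⟩
  set F : ℂ → ℂ := fun w => ∑' n : ℕ, pfin a q n / pfin q q n * w ^ n with hF
  have hnq : ∀ w : ℂ, ‖w‖ < 1 → ‖w * q‖ < 1 := fun w hw => by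
    rw [norm_mul]; nlinarith [norm_nonneg w, norm_nonneg q]
  have step : ∀ w : ℂ, ‖w‖ < 1 → (1 - w) * F w = (1 - a * w) * F (w * q) := by
    intro w hw
    have s1 := (hs w hw).of_norm
    have s2 := (hs (w * q) (hnq w hw)).of_norm
    have e1 : F w - F (w * q) = ∑' n : ℕ, (1 - q ^ n) * (pfin a q n / pfin q q n * w ^ n) := by
      rw [hF]; simp only []
      rw [← s1.tsum_sub s2]
      congr 1; ext n; rw [mul_pow]; ring
    have s3 : Summable fun n : ℕ => (1 - q ^ n) * (pfin a q n / pfin q q n * w ^ n) := by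
      refine (s1.sub s2).congr fun n => ?_
      rw [mul_pow]; ring
    have e2 : w * (F w - a * F (w * q)) =
        ∑' n : ℕ, (1 - q ^ (n + 1)) * (pfin a q (n + 1) / pfin q q (n + 1) * w ^ (n + 1)) := by
      rw [hF]; simp only []
      rw [← tsum_mul_left, ← s1.tsum_sub (s2.mul_left a), ← tsum_mul_left]
      congr 1; ext n
      rw [pfin_succ, pfin_succ]
      have h1 := pfin_ne_zero hqq n
      have h2 : 1 - q * q ^ n ≠ 0 := sub_ne_zero.2 (hqq n).symm
      have : q ^ (n + 1) = q * q ^ n := by ring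
      rw [mul_pow, this, div_mul_eq_mul_div, div_mul_eq_mul_div, div_mul_eq_mul_div, mul_div_assoc',
        mul_div_assoc', ← sub_div, mul_div_assoc', div_eq_div_iff h1 (mul_ne_zero h1 h2)]
      ring
    rw [s3.tsum_eq_zero_add] at e1
    rw [← e2] at e1
    simp at e1
    linear_combination e1
  have hw : ∀ N : ℕ, ‖z * q ^ N‖ < 1 := by
    intro N
    induction N with
    | zero => simpa using hz
    | succ N ih => rw [pow_succ, ← mul_assoc]; exact hnq _ ih
  have iter : ∀ N : ℕ, pfin z q N * F z = pfin (a * z) q N * F (z * q ^ N) := by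
    intro N
    induction N with
    | zero => simp [pfin]
    | succ N ih =>
      have := step (z * q ^ N) (hw N)
      rw [pfin_succ, pfin_succ, pow_succ, ← mul_assoc z]
      linear_combination (1 - z * q ^ N) * ih + pfin (a * z) q N * this
  have lim : Tendsto (fun N : ℕ => F (z * q ^ N)) atTop (𝓝 1) := by
    have h0 : (1 : ℂ) = ∑' n : ℕ, (if n = 0 then 1 else 0) := by simp
    rw [h0]
    refine tendsto_tsum_of_dominated_convergence (bound := fun n => C * D * ‖z‖ ^ n)
      ((summable_geometric_of_lt_one (norm_nonneg _) hz).mul_left _) ?_ ?_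
    · intro n
      rcases Nat.eq_zero_or_pos n with rfl | hn
      · simp [pfin]
      · rw [if_neg hn.ne']
        have : Tendsto (fun N : ℕ => z * q ^ N) atTop (𝓝 (z * 0)) :=
          (tendsto_pow_atTop_nhds_zero_of_norm_lt_one hq).const_mul z
        have := (this.pow n).const_mul (pfin a q n / pfin q q n)
        simpa [hn.ne'] using this
    · refine Eventually.of_forall fun N n => (hbd _ n).trans ?_
      gcongr
      rw [norm_mul, norm_pow]
      exact mul_le_of_le_one_right (norm_nonneg _) (pow_le_one₀ (norm_nonneg _) hq.le)
  have l1 := (pfin_tendsto z hq).mul_const (F z)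
  have l2 := (pfin_tendsto (a * z) hq).mul lim
  have := tendsto_nhds_unique (l1.congr iter) l2
  rw [mul_one] at this
  rw [← this]; ring


lemma qgauss1_alg (a p X pm s E Y F P R : ℂ) (h1 : P ≠ 0) (h2 : R ≠ 0) (h3 : 1 - pm * p ≠ 0)
    (h4 : 1 - a * X * pm ≠ 0) (h5 : 1 - a * X ≠ 0) :
    (1 - a * X) * (s * E * Y * F / (P * R)) -
      (1 - X) * (s * E * (Y * pm) * F / (P * (R * (1 - a * X * pm) / (1 - a * X)))) =
    (1 - a * X) * (1 - pm) * (s * E * Y * F / (P * R)) -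
      (1 - a * X) * (1 - pm * p) * (s * -1 * (E * pm) * (Y * X) * (F * (1 - a * pm)) /
        (P * (1 - pm * p) * (R * (1 - a * X * pm)))) := by
  field_simp
  ring

/-- limiting case of the q-Gauss sum -/
lemma qgauss1 (a x : ℂ) {p : ℂ} (hp : ‖p‖ < 1) (hx : ‖x‖ < 1) (hax : ‖a * x‖ < 1) :
    (∑' m : ℕ, (-1) ^ m * p ^ (m * (m - 1) / 2) * x ^ m * pfin a p m / (pfin p p m * pfin (a * x) p m))
      * pinf (a * x) p = pinf x p := by
  have hpp := ne_one_of_norm hp hp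
  have haxp := ne_one_of_norm hp hax
  obtain ⟨C, hC0, hC⟩ := pfin_bdd a hp
  obtain ⟨D, hD0, hD⟩ := pfin_inv_bdd hp hpp
  obtain ⟨C', hC0', hC'⟩ := pfin_bdd (a * x) hp
  obtain ⟨D', hD0', hD'⟩ := pfin_inv_bdd hp haxp
  set t : ℕ → ℕ → ℂ := fun N m => (-1) ^ m * p ^ (m * (m - 1) / 2) * (x * p ^ N) ^ m * pfin a p m /
    (pfin p p m * pfin (a * x * p ^ N) p m) with ht
  have hnz : ∀ N m, pfin (a * x * p ^ N) p m ≠ 0 := fun N m => pfin_ne_zero (fun k => by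
    rw [mul_assoc, ← pow_add]; exact haxp _) m
  have hbd : ∀ N m, ‖t N m‖ ≤ C * D * (C' * D') * ‖x‖ ^ m := by
    intro N m
    have e : (pfin (a * x * p ^ N) p m)⁻¹ = pfin (a * x) p N * (pfin (a * x) p (N + m))⁻¹ := by
      rw [pfin_add, mul_inv, ← mul_assoc, mul_inv_cancel₀ (pfin_ne_zero haxp N), one_mul]
    have e2 : t N m = pfin a p m * (pfin p p m)⁻¹ * (pfin (a * x) p N * (pfin (a * x) p (N + m))⁻¹) *
       ((-1) ^ m * p ^ (m * (m - 1) / 2) * (x * p ^ N) ^ m) := by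
      rw [← e, ht]; simp only []; rw [div_eq_mul_inv, mul_inv]; ring
    rw [e2]
    rw [norm_mul, norm_mul, norm_mul, norm_mul (pfin (a * x) p N)]
    gcongr
    · exact hC m
    · exact hD m
    · exact hC' N
    · exact hD' _
    · rw [norm_mul, norm_mul, norm_pow, norm_neg, norm_one, one_pow, one_mul, norm_pow, norm_pow, norm_mul, norm_pow]
      calc _ ≤ 1 * (‖x‖ * 1) ^ m := by
            gcongr
            · exact pow_le_one₀ (norm_nonneg _) hp.le
            · exact pow_le_one₀ (norm_nonneg _) hp.le
        _ = _ := by simp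
  have hsg : Summable fun m : ℕ => C * D * (C' * D') * ‖x‖ ^ m :=
    (summable_geometric_of_lt_one (norm_nonneg _) hx).mul_left _
  have hs : ∀ N, Summable (t N) := fun N => Summable.of_norm_bounded hsg (hbd N)
  have tri : ∀ m : ℕ, (m + 1) * (m + 1 - 1) / 2 = m * (m - 1) / 2 + m := by
    intro m
    have := Nat.triangle_succ m
    simpa using this
  have step : ∀ N, (1 - a * x * p ^ N) * ∑' m, t N m = (1 - x * p ^ N) * ∑' m, t (N + 1) m := by
    intro N
    set w : ℕ → ℂ := fun m => (1 - a * x * p ^ N) * (1 - p ^ m) * t N m with hw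
    have key : ∀ m, (1 - a * x * p ^ N) * t N m - (1 - x * p ^ N) * t (N + 1) m = w m - w (m + 1) := by
      intro m
      have h1 := pfin_ne_zero hpp m
      have h2 := hnz N m
      have h3 : 1 - p * p ^ m ≠ 0 := sub_ne_zero.2 (hpp m).symm
      have h4 : 1 - a * x * p ^ N * p ^ m ≠ 0 := sub_ne_zero.2 (by
        rw [mul_assoc (a * x), ← pow_add]; exact (haxp _).symm)
      have h5 : 1 - a * x * p ^ N ≠ 0 := sub_ne_zero.2 (haxp _).symm
      have e3 : pfin (a * x * p ^ (N + 1)) p m =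
          pfin (a * x * p ^ N) p m * (1 - a * x * p ^ N * p ^ m) / (1 - a * x * p ^ N) := by
        rw [eq_div_iff h5, ← pfin_succ, pfin_succ', pow_succ]; ring_nf
      simp only [hw, ht]
      rw [e3, pfin_succ, pfin_succ, pfin_succ, tri, pow_add p _ m, pow_succ (-1 : ℂ), pow_succ (x * p ^ N) m,
        show x * p ^ (N + 1) = x * p ^ N * p by ring, mul_pow (x * p ^ N) p, pow_succ p m, mul_comm p (p ^ m)]
      have h3' : 1 - p ^ m * p ≠ 0 := by rwa [mul_comm]
      rw [mul_assoc a x] at *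
      exact qgauss1_alg a p _ _ _ _ _ _ _ _ h1 h2 h3' h4 h5
    have sw : Summable w := by
      have s0 : Summable fun m => ‖p ^ m‖ * 1 := by
        simpa [norm_pow] using summable_geometric_of_lt_one (norm_nonneg _) hp
      have : Summable fun m => (1 - p ^ m) * t N m := by
        have hs' : Summable fun m => p ^ m * t N m := by
          refine Summable.of_norm_bounded hsg fun m => ?_
          rw [norm_mul, norm_pow]
          calc _ ≤ 1 * ‖t N m‖ := by gcongr; exact pow_le_one₀ (norm_nonneg _) hp.le
            _ ≤ _ := by rw [one_mul]; exact hbd N m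
        refine ((hs N).sub hs').congr fun m => by ring
      exact (this.mul_left (1 - a * x * p ^ N)).congr fun m => by simp only [hw]; ring
    rw [← tsum_mul_left, ← tsum_mul_left, ← sub_eq_zero,
      ← ((hs N).mul_left _).tsum_sub ((hs (N + 1)).mul_left _)]
    rw [tsum_congr key, sw.tsum_sub ((summable_nat_add_iff 1).2 sw), sw.tsum_eq_zero_add]
    simp [hw]
  have iter : ∀ N : ℕ, pfin (a * x) p N * ∑' m, t 0 m = pfin x p N * ∑' m, t N m := by
    intro N
    induction N with
    | zero => simp [pfin]
    | succ N ih =>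
      have := step N
      rw [pfin_succ, pfin_succ]
      linear_combination (1 - a * x * p ^ N) * ih + pfin x p N * this
  have lim : Tendsto (fun N : ℕ => ∑' m, t N m) atTop (𝓝 1) := by
    have h0 : (1 : ℂ) = ∑' n : ℕ, (if n = 0 then 1 else 0) := by simp
    rw [h0]
    refine tendsto_tsum_of_dominated_convergence hsg ?_ (Eventually.of_forall hbd)
    intro m
    rcases Nat.eq_zero_or_pos m with rfl | hn
    · simp [ht, pfin]
    · rw [if_neg hn.ne']
      have hp0 := tendsto_pow_atTop_nhds_zero_of_norm_lt_one hp
      have n1 : Tendsto (fun N : ℕ => (-1) ^ m * p ^ (m * (m - 1) / 2) * (x * p ^ N) ^ m * pfin a p m) atTop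
          (𝓝 ((-1) ^ m * p ^ (m * (m - 1) / 2) * (x * 0) ^ m * pfin a p m)) :=
        (((hp0.const_mul x).pow m).const_mul _).mul_const _
      have n2 : Tendsto (fun N : ℕ => pfin p p m * pfin (a * x * p ^ N) p m) atTop
          (𝓝 (pfin p p m * pfin (a * x * 0) p m)) := by
        refine Tendsto.const_mul _ ?_
        unfold pfin
        refine tendsto_finsetProd _ fun k _ => ?_
        exact ((hp0.const_mul (a * x)).mul_const _).const_sub 1
      have := n1.div n2 (by
        simp only [mul_zero]
        refine mul_ne_zero (pfin_ne_zero hpp m) ?_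
        simp [pfin])
      simp only [mul_zero, zero_pow hn.ne', zero_mul, zero_div] at this
      exact this
  have l1 := (pfin_tendsto (a * x) hp).mul_const (∑' m, t 0 m)
  have l2 := (pfin_tendsto x hp).mul lim
  have := tendsto_nhds_unique (l1.congr iter) l2
  rw [mul_one] at this
  rw [← this, mul_comm]
  simp [ht]


lemma summable_int_abs {r : ℝ} (h0 : 0 ≤ r) (h1 : r < 1) : Summable fun n : ℤ => r ^ n.natAbs := by
  refine Summable.of_nat_of_neg ?_ ?_
  · simpa using summable_geometric_of_lt_one h0 h1
  · simpa using summable_geometric_of_lt_one h0 h1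

/-- geometric domination of an exponential with an integer exponent -/
lemma zpow_le_aux {r : ℝ} (h0 : 0 < r) (h1 : r < 1) (C : ℕ) (e : ℤ) (m : ℕ) (h : (m : ℤ) ≤ e + C) :
    r ^ e ≤ (r ^ C)⁻¹ * r ^ m := by
  have : r ^ e ≤ r ^ ((m : ℤ) - C) := zpow_le_zpow_right_of_le_one₀ h0 h1.le (by omega)
  refine this.trans (le_of_eq ?_)
  rw [zpow_sub₀ h0.ne']
  simp [div_eq_mul_inv, mul_comm]

lemma summable_int_exp {r : ℝ} (h0 : 0 < r) (h1 : r < 1) (e : ℤ → ℤ) (C : ℕ)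
    (h : ∀ n, (n.natAbs : ℤ) ≤ e n + C) : Summable fun n : ℤ => r ^ (e n) :=
  Summable.of_nonneg_of_le (fun n => (zpow_pos h0 _).le) (fun n => zpow_le_aux h0 h1 C _ _ (h n))
    ((summable_int_abs h0.le h1).mul_left _)

lemma natAbs_le_sq (n : ℤ) : (n.natAbs : ℤ) ≤ n ^ 2 := by
  rw [Int.natCast_natAbs]
  exact (abs_le_of_sq_le_sq' (a := |n|) (b := n ^ 2) (by
    rw [sq_abs]
    rcases eq_or_ne n 0 with rfl | h
    · simp
    · have : 1 ≤ n ^ 2 := by have := sq_pos_of_ne_zero h; omega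
      nlinarith) (by positivity)).2

lemma natAbs_le_sq_add (n : ℤ) : (n.natAbs : ℤ) ≤ n ^ 2 + n + 1 := by
  have := natAbs_le_sq n
  rcases le_or_gt 0 n with h | h
  · omega
  · rw [Int.ofNat_natAbs_of_nonpos h.le]
    nlinarith [sq_nonneg (n + 1)]

/-- theta functions -/
def th3 (y : ℂ) : ℂ := ∑' n : ℤ, y ^ (n ^ 2)
/-- alternating theta function -/
def th4 (y : ℂ) : ℂ := ∑' n : ℤ, (-1) ^ n * y ^ (n ^ 2)
/-- second theta function -/
def ps2 (y : ℂ) : ℂ := ∑' n : ℤ, y ^ (n ^ 2 + n)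

lemma th3_summ {y : ℂ} (h0 : y ≠ 0) (h1 : ‖y‖ < 1) : Summable fun n : ℤ => ‖y ^ (n ^ 2)‖ := by
  simp only [norm_zpow]
  exact summable_int_exp (norm_pos_iff.2 h0) h1 _ 0 (fun n => by simpa using natAbs_le_sq n)

lemma th4_summ {y : ℂ} (h0 : y ≠ 0) (h1 : ‖y‖ < 1) :
    Summable fun n : ℤ => ‖(-1) ^ n * y ^ (n ^ 2)‖ := by
  simpa [norm_zpow] using th3_summ h0 h1

lemma ps2_summ {y : ℂ} (h0 : y ≠ 0) (h1 : ‖y‖ < 1) : Summable fun n : ℤ => ‖y ^ (n ^ 2 + n)‖ := by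
  simp only [norm_zpow]
  exact summable_int_exp (norm_pos_iff.2 h0) h1 _ 1 (fun n => by simpa using natAbs_le_sq_add n)

/-- reciprocal of `(p;p)_k`, extended by zero to negative `k` -/
def iq (p : ℂ) (k : ℤ) : ℂ := if k < 0 then 0 else (pfin p p k.toNat)⁻¹

lemma iq_rec {p : ℂ} (h0 : p ≠ 0) (hp : ‖p‖ < 1) (k : ℤ) : iq p (k - 1) = (1 - p ^ k) * iq p k := by
  unfold iq
  rcases lt_trichotomy k 0 with h | rfl | h
  · rw [if_pos h, if_pos (by omega)]; simp
  · simp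
  · obtain ⟨n, rfl⟩ : ∃ n : ℕ, k = n + 1 := ⟨(k - 1).toNat, by omega⟩
    have e : (1 : ℂ) - p * p ^ n ≠ 0 := sub_ne_zero.2 (ne_one_of_norm hp hp n).symm
    have e2 := pfin_ne_zero (ne_one_of_norm hp hp) n
    rw [if_neg (by omega), if_neg (by omega)]
    have h1 : ((n : ℤ) + 1 - 1).toNat = n := by omega
    have h2 : ((n : ℤ) + 1).toNat = n + 1 := by omega
    rw [h1, h2, pfin_succ]
    have h3 : p ^ ((n : ℤ) + 1) = p * p ^ n := by
      rw [zpow_add_one₀ h0]; simp [mul_comm]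
    rw [h3]; field_simp

lemma iq_tendsto {p : ℂ} (hp : ‖p‖ < 1) (j : ℤ) :
    Tendsto (fun N : ℕ => iq p (N + j)) atTop (𝓝 (pinf p p)⁻¹) := by
  have h := ((pfin_tendsto p hp).inv₀ (pinf_ne_zero hp (ne_one_of_norm hp hp)))
  have h2 : Tendsto (fun N : ℕ => ((N : ℤ) + j).toNat) atTop atTop := by
    rw [tendsto_atTop]
    intro b
    filter_upwards [eventually_ge_atTop (b + j.natAbs)] with N hN
    omega
  refine (h.comp h2).congr' ?_
  filter_upwards [eventually_ge_atTop (j.natAbs)] with N hN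
  rw [iq, if_neg (by omega)]; rfl

lemma iq_bdd {p : ℂ} (hp : ‖p‖ < 1) : ∃ C > 0, ∀ n, ‖iq p n‖ ≤ C := by
  obtain ⟨C, h0, h⟩ := pfin_inv_bdd hp (ne_one_of_norm hp hp)
  refine ⟨C, h0, fun n => ?_⟩
  unfold iq; split_ifs
  · simpa using h0.le
  · exact h _

lemma norm_sq_lt {t : ℂ} (h : ‖t‖ < 1) : ‖t ^ 2‖ < 1 := by
  rw [norm_pow]; exact pow_lt_one₀ (norm_nonneg _) h (by norm_num)

/-- finite form of the Jacobi triple product -/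
lemma jtp_fin {t z : ℂ} (h0 : t ≠ 0) (ht : ‖t‖ < 1) (hz : z ≠ 0) (N : ℕ) :
    HasSum (fun j : ℤ => z ^ j * t ^ (j ^ 2) * (pfin (t ^ 2) (t ^ 2) (2 * N) *
      iq (t ^ 2) (N - j) * iq (t ^ 2) (N + j)))
      (pfin (-(z * t)) (t ^ 2) N * pfin (-(t / z)) (t ^ 2) N) := by
  have hp := norm_sq_lt ht
  have hp0 : t ^ 2 ≠ 0 := pow_ne_zero _ h0
  induction N with
  | zero =>
    convert hasSum_single (0 : ℤ) ?_ using 1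
    · simp [pfin, iq]
    · intro j hj
      rcases lt_or_gt_of_ne hj with h | h
      · simp [iq, h]
      · simp [iq, h]
  | succ N ih =>
    have s1 := ((Equiv.subRight (1 : ℤ)).hasSum_iff (f := fun j : ℤ => z ^ j * t ^ (j ^ 2) * (pfin (t ^ 2) (t ^ 2) (2 * N) *
      iq (t ^ 2) (N - j) * iq (t ^ 2) (N + j)))).2 ih
    have s2 := ((Equiv.addRight (1 : ℤ)).hasSum_iff (f := fun j : ℤ => z ^ j * t ^ (j ^ 2) * (pfin (t ^ 2) (t ^ 2) (2 * N) *
      iq (t ^ 2) (N - j) * iq (t ^ 2) (N + j)))).2 ih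
    have s3 := ((s1.mul_left (z * t ^ (2 * N + 1))).add (ih.mul_left (1 + t ^ (4 * N + 2)))).add
      (s2.mul_left (t ^ (2 * N + 1) / z))
    have hP : pfin (-(z * t)) (t ^ 2) (N + 1) * pfin (-(t / z)) (t ^ 2) (N + 1) =
        z * t ^ (2 * N + 1) * (pfin (-(z * t)) (t ^ 2) N * pfin (-(t / z)) (t ^ 2) N) +
        (1 + t ^ (4 * N + 2)) * (pfin (-(z * t)) (t ^ 2) N * pfin (-(t / z)) (t ^ 2) N) +
      t ^ (2 * N + 1) / z * (pfin (-(z * t)) (t ^ 2) N * pfin (-(t / z)) (t ^ 2) N) := by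
      rw [pfin_succ, pfin_succ]
      field_simp
      ring
    rw [hP]
    refine Eq.mpr (congrArg (fun f => HasSum f _) (funext ?_)) s3
    · intro j
      simp only [Function.comp, Equiv.subRight_apply, Equiv.coe_addRight]
      push_cast
      set u := iq (t ^ 2) (N + 1 - j) with hu
      set v := iq (t ^ 2) (N + 1 + j) with hv
      set X := (t ^ 2) ^ ((N : ℤ) + 1 - j) with hX
      set Y := (t ^ 2) ^ ((N : ℤ) + 1 + j) with hY
      have a1 : iq (t ^ 2) (N - j) = (1 - X) * u := by
        rw [hX, hu, ← iq_rec hp0 hp]; congr 1; ring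
      have a2 : iq (t ^ 2) (N + j) = (1 - Y) * v := by
        rw [hY, hv, ← iq_rec hp0 hp]; congr 1; ring
      have a3 : iq (t ^ 2) (N - (j + 1)) = (1 - X / t ^ 2) * ((1 - X) * u) := by
        rw [← a1, hX, div_eq_mul_inv, ← zpow_sub_one₀ hp0, show (N : ℤ) + 1 - j - 1 = N - j by ring, ← iq_rec hp0 hp]
        congr 1; ring
      have a4 : iq (t ^ 2) (N + (j - 1)) = (1 - Y / t ^ 2) * ((1 - Y) * v) := by
        rw [← a2, hY, div_eq_mul_inv, ← zpow_sub_one₀ hp0, show (N : ℤ) + 1 + j - 1 = N + j by ring, ← iq_rec hp0 hp]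
        congr 1; ring
      have a5 : iq (t ^ 2) (N - (j - 1)) = u := by rw [hu]; congr 1; ring
      have a6 : iq (t ^ 2) (N + (j + 1)) = v := by rw [hv]; congr 1; ring
      rw [a1, a2, a3, a4, a5, a6]
      have e1 : t ^ (4 * N + 2) = X * Y / t ^ 2 := by
        rw [hX, hY, ← zpow_add₀ hp0, div_eq_mul_inv, ← zpow_neg_one, ← zpow_add₀ hp0]
        rw [show (N : ℤ) + 1 - j + (N + 1 + j) + -1 = ((2 * N + 1 : ℕ) : ℤ) by push_cast; ring, zpow_natCast, ← pow_mul]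
        congr 1; ring
      have e2 : t ^ (2 * N + 1) * t ^ ((j - 1) ^ 2) = t ^ (j ^ 2) * X := by
        rw [hX, ← zpow_natCast t 2, ← zpow_mul, ← zpow_natCast t (2 * N + 1), ← zpow_add₀ h0, ← zpow_add₀ h0]
        congr 1; push_cast; ring
      have e3 : t ^ (2 * N + 1) * t ^ ((j + 1) ^ 2) = t ^ (j ^ 2) * Y := by
        rw [hY, ← zpow_natCast t 2, ← zpow_mul, ← zpow_natCast t (2 * N + 1), ← zpow_add₀ h0, ← zpow_add₀ h0]
        congr 1; push_cast; ring
      have e4 : z ^ (j - 1) = z ^ j / z := by rw [zpow_sub_one₀ hz]; rfl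
      have e5 : z ^ (j + 1) = z ^ j * z := by rw [zpow_add_one₀ hz]
      have e6 : pfin (t ^ 2) (t ^ 2) (2 * (N + 1)) = pfin (t ^ 2) (t ^ 2) (2 * N) * (1 - X * Y / t ^ 2) *
          (1 - X * Y) := by
        rw [show 2 * (N + 1) = 2 * N + 1 + 1 by ring, pfin_succ, pfin_succ, ← e1]
        have : X * Y = t ^ (4 * N + 4) := by
          have : X * Y = t ^ (4 * N + 2) * t ^ 2 := by rw [e1]; field_simp
          rw [this]; ring
        rw [this]; ring
      rw [e1, e4, e5, e6]
      generalize pfin (t ^ 2) (t ^ 2) (2 * N) = P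
      have r1 : z * t ^ (2 * N + 1) * (z ^ j / z * t ^ ((j - 1) ^ 2) * (P * u * ((1 - Y / t ^ 2) * ((1 - Y) * v))))
        = z ^ j * (t ^ (2 * N + 1) * t ^ ((j - 1) ^ 2)) * (P * u * ((1 - Y / t ^ 2) * ((1 - Y) * v))) := by
        field_simp
      have r2 : t ^ (2 * N + 1) / z * (z ^ j * z * t ^ ((j + 1) ^ 2) * (P * ((1 - X / t ^ 2) * ((1 - X) * u)) * v))
        = z ^ j * (t ^ (2 * N + 1) * t ^ ((j + 1) ^ 2)) * (P * ((1 - X / t ^ 2) * ((1 - X) * u)) * v) := by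
        field_simp
      rw [r1, r2, e2, e3]
      ring

/-- Jacobi triple product -/
lemma jtp {t z : ℂ} (h0 : t ≠ 0) (ht : ‖t‖ < 1) (hz : z ≠ 0)
    (hs : Summable fun j : ℤ => ‖z ^ j * t ^ (j ^ 2)‖) :
    ∑' j : ℤ, z ^ j * t ^ (j ^ 2) = pinf (-(z * t)) (t ^ 2) * pinf (-(t / z)) (t ^ 2) * pinf (t ^ 2) (t ^ 2) := by
  have hp := norm_sq_lt ht
  have hne := pinf_ne_zero hp (ne_one_of_norm hp hp)
  obtain ⟨C, hC0, hC⟩ := pfin_bdd (t ^ 2) hp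
  obtain ⟨D, hD0, hD⟩ := iq_bdd hp
  have l1 := (pfin_tendsto (-(z * t)) hp).mul (pfin_tendsto (-(t / z)) hp)
  have l2 : Tendsto (fun N : ℕ => ∑' j : ℤ, z ^ j * t ^ (j ^ 2) * (pfin (t ^ 2) (t ^ 2) (2 * N) *
      iq (t ^ 2) (N - j) * iq (t ^ 2) (N + j))) atTop
      (𝓝 (∑' j : ℤ, z ^ j * t ^ (j ^ 2) * (pinf (t ^ 2) (t ^ 2) * (pinf (t ^ 2) (t ^ 2))⁻¹ * (pinf (t ^ 2) (t ^ 2))⁻¹))) := by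
    refine tendsto_tsum_of_dominated_convergence (bound := fun j : ℤ => ‖z ^ j * t ^ (j ^ 2)‖ * (C * D * D))
      (hs.mul_right _) ?_ ?_
    · intro j
      refine Tendsto.const_mul _ ?_
      refine Tendsto.mul (Tendsto.mul ?_ ?_) (iq_tendsto hp j)
      · exact (pfin_tendsto _ hp).comp (tendsto_id.const_mul_atTop' (r := 2) (by norm_num))
      · simpa [sub_eq_add_neg] using iq_tendsto hp (-j)
    · refine Eventually.of_forall fun N j => ?_
      rw [norm_mul, norm_mul (_ * _) (iq _ _), norm_mul (pfin _ _ _)]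
      gcongr
      · exact hC _
      · exact hD _
      · exact hD _
  have := tendsto_nhds_unique (l1.congr fun N => (jtp_fin h0 ht hz N).tsum_eq.symm) l2
  rw [this, tsum_mul_right]
  field_simp

lemma th4_prod {t : ℂ} (h0 : t ≠ 0) (ht : ‖t‖ < 1) :
    th4 t = pinf t (t ^ 2) ^ 2 * pinf (t ^ 2) (t ^ 2) := by
  have := jtp h0 ht (z := -1) (by norm_num) (th4_summ h0 ht)
  rw [th4, this, show -(-1 * t) = t by ring, show -(t / -1) = t by ring]
  ring

lemma ps2_prod {t : ℂ} (h0 : t ≠ 0) (ht : ‖t‖ < 1) :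
    ps2 t = 2 * pinf (-t ^ 2) (t ^ 2) ^ 2 * pinf (t ^ 2) (t ^ 2) := by
  have e : ∀ j : ℤ, t ^ (j ^ 2 + j) = t ^ j * t ^ (j ^ 2) := fun j => by
    rw [← zpow_add₀ h0]; congr 1; ring
  have := jtp h0 ht (z := t) h0 ((ps2_summ h0 ht).congr fun j => by rw [e])
  rw [ps2]
  simp only [e]
  rw [this, pinf_split (-(t / t)) (norm_sq_lt ht) 1]
  rw [pfin_succ, pfin_zero, div_self h0, show -(t * t) = - t ^ 2 by ring, show -1 * (t ^ 2) ^ 1 = - t ^ 2 by ring]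
  ring


lemma pfin_mul_neg (a q : ℂ) (n : ℕ) : pfin a q n * pfin (-a) q n = pfin (a ^ 2) (q ^ 2) n := by
  rw [pfin, pfin, pfin, ← Finset.prod_mul_distrib]
  exact Finset.prod_congr rfl fun k _ => by ring

/-- The Gauss psi product -/
def Psi (Q : ℂ) : ℂ := pinf (Q ^ 2) (Q ^ 2) / pinf Q (Q ^ 2)

/-- the Lambert series `L` -/
def Lf (y : ℂ) : ℂ := ∑' n : ℕ, y ^ (2 * n + 1) / (1 + y ^ (2 * (2 * n + 1)))

lemma lambert_prod {t : ℂ} (ht : ‖t‖ < 1) :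
    ∑' n : ℕ, t ^ n / (1 + t * (t ^ 2) ^ n) = Psi (t ^ 2) ^ 2 := by
  obtain ⟨P, hPdef⟩ : ∃ P, P = t ^ 2 := ⟨_, rfl⟩
  rw [← hPdef]
  have hP : ‖P‖ < 1 := hPdef ▸ norm_sq_lt ht
  have hP2 : ‖P ^ 2‖ < 1 := norm_sq_lt hP
  have hmt : ‖-t‖ < 1 := by simpa using ht
  have hmP : ‖-P‖ < 1 := by simpa using hP
  have nP := ne_one_of_norm hP hP
  have nmt := ne_one_of_norm hP hmt
  have nt := ne_one_of_norm hP ht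
  have nmP := ne_one_of_norm hP hmP
  have nPP := ne_one_of_norm hP2 hP
  have iP := pinf_ne_zero hP nP
  have imt := pinf_ne_zero hP nmt
  have it := pinf_ne_zero hP nt
  have imP := pinf_ne_zero hP nmP
  have iPP := pinf_ne_zero hP2 nPP
  set f : ℕ → ℂ := fun n => pfin (-t) P n / pfin P P n with hf
  have s1 : Summable fun n => ‖f n * t ^ n‖ := (qbinom (-t) t hP ht).1
  have s2 : Summable fun n => ‖f n * P ^ n‖ := (qbinom (-t) P hP hP).1
  have sd : Summable fun x : ℕ × ℕ => f x.1 * t ^ x.1 * (f x.2 * P ^ x.2) * P ^ (x.1 * x.2) := by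
    refine Summable.of_norm_bounded (s1.mul_of_nonneg s2 (fun _ => norm_nonneg _) (fun _ => norm_nonneg _)) ?_
    rintro ⟨n, m⟩
    rw [norm_mul, norm_mul, norm_pow P]
    exact mul_le_of_le_one_right (by positivity) (pow_le_one₀ (norm_nonneg _) hP.le)
  have hn : ∀ n : ℕ, ∑' m : ℕ, f n * t ^ n * (f m * P ^ m) * P ^ (n * m) =
      pinf (-t) P / pinf P P * (t ^ n / (1 + t * P ^ n)) := by
    intro n
    have hz : ‖P ^ (n + 1)‖ < 1 := by rw [norm_pow]; exact pow_lt_one₀ (norm_nonneg _) hP (by simp)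
    have q := (qbinom (-t) (P ^ (n + 1)) hP hz).2
    have e1 := pinf_split P hP n
    have e2 := pinf_split (-t) hP (n + 1)
    rw [show P * P ^ n = P ^ (n + 1) by ring] at e1
    have n1 : pinf (P ^ (n + 1)) P ≠ 0 := pinf_ne_zero hP (ne_one_of_norm hP hz)
    have n2 := pfin_ne_zero nP n
    have n3 := pfin_ne_zero nmt n
    have n4 : 1 + t * P ^ n ≠ 0 := by
      have := sub_ne_zero.2 (nmt n).symm
      simpa using this
    rw [pfin_succ] at e2
    have e3 : ∑' m : ℕ, f n * t ^ n * (f m * P ^ m) * P ^ (n * m) =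
        f n * t ^ n * ∑' m : ℕ, pfin (-t) P m / pfin P P m * (P ^ (n + 1)) ^ m := by
      rw [← tsum_mul_left]; congr 1; ext m
      rw [← pow_mul, add_mul, one_mul, pow_add]; simp only [hf]; ring
    rw [e3, eq_div_of_mul_eq n1 q, e1, e2]
    simp only [hf]
    rw [show (1 : ℂ) - -t * P ^ n = 1 + t * P ^ n by ring]
    field_simp
  have hm : ∀ m : ℕ, ∑' n : ℕ, f n * t ^ n * (f m * P ^ m) * P ^ (n * m) =
      pinf (-P) P / pinf t P * (pfin P (P ^ 2) m / pfin (P ^ 2) (P ^ 2) m * P ^ m) := by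
    intro m
    have hz : ‖t * P ^ m‖ < 1 := by
      rw [norm_mul, norm_pow]
      exact (mul_le_of_le_one_right (norm_nonneg _) (pow_le_one₀ (norm_nonneg _) hP.le)).trans_lt ht
    have q := (qbinom (-t) (t * P ^ m) hP hz).2
    have e1 := pinf_split t hP m
    have e2 := pinf_split (-P) hP m
    rw [show -t * (t * P ^ m) = -P * P ^ m by rw [hPdef]; ring] at q
    have n1 : pinf (t * P ^ m) P ≠ 0 := pinf_ne_zero hP (ne_one_of_norm hP hz)
    have n2 := pfin_ne_zero nP m
    have n3 := pfin_ne_zero nmP m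
    have n4 := pfin_ne_zero nt m
    have e3 : ∑' n : ℕ, f n * t ^ n * (f m * P ^ m) * P ^ (n * m) =
        (f m * P ^ m) * ∑' n : ℕ, pfin (-t) P n / pfin P P n * (t * P ^ m) ^ n := by
      rw [← tsum_mul_left]; congr 1; ext n
      rw [mul_pow, ← pow_mul, mul_comm m n]; simp only [hf]; ring
    have e4 := pfin_mul_neg t P m
    have e5 := pfin_mul_neg P P m
    rw [← hPdef] at e4
    rw [e3, eq_div_of_mul_eq n1 q, e1, e2, ← e4, ← e5]
    simp only [hf]
    field_simp
  have hc := sd.tsum_comm (f := fun n m => f n * t ^ n * (f m * P ^ m) * P ^ (n * m))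
  rw [tsum_congr hn, tsum_congr hm, tsum_mul_left, tsum_mul_left] at hc
  have q := (qbinom P P hP2 hP).2
  rw [eq_div_of_mul_eq iPP q] at hc
  have m1 := pinf_mul_neg t hP
  have m2 := pinf_mul_neg P hP
  rw [← hPdef] at m1
  rw [Psi, div_pow, eq_div_iff (pow_ne_zero _ iPP)]
  have hc2 := congrArg (fun z => z * pinf t P * pinf P P * pinf P (P ^ 2)) hc
  have l1 : ∀ T : ℂ, pinf (-t) P / pinf P P * T * pinf t P * pinf P P * pinf P (P ^ 2) =
      (pinf t P * pinf (-t) P) * pinf P (P ^ 2) * T := by intro T; field_simp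
  have l2 : pinf (-P) P / pinf t P * (pinf (P * P) (P ^ 2) / pinf P (P ^ 2)) * pinf t P * pinf P P * pinf P (P ^ 2)
    = (pinf P P * pinf (-P) P) * pinf (P * P) (P ^ 2) := by field_simp
  rw [l1, l2, m1, m2, ← sq P] at hc2
  rw [sq (pinf (P ^ 2) (P ^ 2)), hc2]; ring

lemma Lf_prod {y : ℂ} (hy : ‖y‖ < 1) : Lf y = y * Psi (y ^ 4) ^ 2 := by
  have := lambert_prod (norm_sq_lt hy)
  rw [show y ^ 4 = (y ^ 2) ^ 2 by ring, ← this, Lf, ← tsum_mul_left]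
  congr 1; ext n
  rw [show y ^ 2 * ((y ^ 2) ^ 2) ^ n = y ^ (2 * (2 * n + 1)) by
    rw [← pow_mul, ← pow_mul, ← pow_add]; congr 1; ring]
  rw [mul_div_assoc', ← pow_mul]; ring

/-- splitting a sum over the square lattice by parity -/
lemma tsum_parity {F : ℤ × ℤ → ℂ} (hF : Summable fun x => ‖F x‖) :
    ∑' x, F x = ∑' x : ℤ × ℤ, F (x.1 + x.2, x.1 - x.2) + ∑' x : ℤ × ℤ, F (x.1 + x.2 + 1, x.1 - x.2) := by
  classical
  have sp : ∀ x, F x = (if 2 ∣ x.1 + x.2 then F x else 0) + (if ¬ 2 ∣ x.1 + x.2 then F x else 0) := by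
    intro x; split_ifs <;> simp
  have sm : ∀ p : ℤ × ℤ → Prop, ∀ [DecidablePred p], Summable fun x => if p x then F x else 0 := by
    intro p _
    refine Summable.of_norm_bounded hF fun x => ?_
    split_ifs <;> simp
  rw [tsum_congr sp, (sm _).tsum_add (sm _)]
  congr 1
  · have inj : Function.Injective fun x : ℤ × ℤ => (x.1 + x.2, x.1 - x.2) := by
      rintro ⟨a, b⟩ ⟨c, d⟩ h
      simp only [Prod.mk.injEq] at h ⊢
      omega
    rw [← inj.tsum_eq]
    · refine tsum_congr fun x => ?_
      rw [if_pos]; simp only; omega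
    · rintro ⟨a, b⟩ h
      have h' : 2 ∣ a + b := by by_contra h2; simp [h2] at h
      obtain ⟨c, hc⟩ := h'
      exact ⟨(c, a - c), by simp only [Prod.mk.injEq]; omega⟩
  · have inj : Function.Injective fun x : ℤ × ℤ => (x.1 + x.2 + 1, x.1 - x.2) := by
      rintro ⟨a, b⟩ ⟨c, d⟩ h
      simp only [Prod.mk.injEq] at h ⊢
      omega
    rw [← inj.tsum_eq]
    · refine tsum_congr fun x => ?_
      rw [if_pos]; simp only; omega
    · rintro ⟨a, b⟩ h
      have h' : ¬ 2 ∣ a + b := by intro h2; simp [h2] at h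
      have h'' : 2 ∣ a + b - 1 := by omega
      obtain ⟨c, hc⟩ := h''
      exact ⟨(c, a - c - 1), by simp only [Prod.mk.injEq]; omega⟩

lemma tsum_mul_int {f g : ℤ → ℂ} (hf : Summable fun x => ‖f x‖) (hg : Summable fun x => ‖g x‖) :
    (∑' x, f x) * ∑' x, g x = ∑' x : ℤ × ℤ, f x.1 * g x.2 :=
  tsum_mul_tsum_of_summable_norm hf hg

lemma tsum_prod_split {f g : ℤ → ℂ} (hf : Summable fun x => ‖f x‖) (hg : Summable fun x => ‖g x‖) :
    (∑' x, f x) * ∑' x, g x = ∑' x : ℤ × ℤ, f (x.1 + x.2) * g (x.1 - x.2) +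
      ∑' x : ℤ × ℤ, f (x.1 + x.2 + 1) * g (x.1 - x.2) := by
  rw [tsum_mul_int hf hg, tsum_parity (F := fun x => f x.1 * g x.2)]
  exact hf.mul_norm hg

lemma sqz (y : ℂ) (n : ℤ) : (y ^ 2) ^ n = y ^ (2 * n) := by
  rw [← zpow_natCast y 2, ← zpow_mul]; rfl

lemma T1 {y : ℂ} (h0 : y ≠ 0) (h1 : ‖y‖ < 1) : th3 y ^ 2 = th3 (y ^ 2) ^ 2 + y * ps2 (y ^ 2) ^ 2 := by
  have k0 : y ^ 2 ≠ 0 := pow_ne_zero _ h0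
  have k1 := norm_sq_lt h1
  rw [sq, th3, tsum_prod_split (th3_summ h0 h1) (th3_summ h0 h1), sq, th3,
    tsum_mul_int (th3_summ k0 k1) (th3_summ k0 k1), sq (ps2 _), ps2,
    tsum_mul_int (ps2_summ k0 k1) (ps2_summ k0 k1), ← tsum_mul_left]
  congr 1
  · congr 1; ext x
    rw [sqz, sqz, ← zpow_add₀ h0, ← zpow_add₀ h0]; congr 1; ring
  · congr 1; ext x
    rw [sqz, sqz, ← zpow_add₀ h0, ← zpow_add₀ h0]
    nth_rw 2 [← zpow_one y]
    rw [← zpow_add₀ h0]; congr 1; ring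

lemma T4 {y : ℂ} (h0 : y ≠ 0) (h1 : ‖y‖ < 1) : ps2 y ^ 2 = 2 * ps2 (y ^ 2) * th3 (y ^ 2) := by
  have k0 : y ^ 2 ≠ 0 := pow_ne_zero _ h0
  have k1 := norm_sq_lt h1
  rw [sq, ps2, tsum_prod_split (ps2_summ h0 h1) (ps2_summ h0 h1)]
  have e1 : ∑' x : ℤ × ℤ, y ^ ((x.1 + x.2) ^ 2 + (x.1 + x.2)) * y ^ ((x.1 - x.2) ^ 2 + (x.1 - x.2)) =
      ps2 (y ^ 2) * th3 (y ^ 2) := by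
    rw [ps2, th3, tsum_mul_int (ps2_summ k0 k1) (th3_summ k0 k1)]
    congr 1; ext x
    rw [sqz, sqz, ← zpow_add₀ h0, ← zpow_add₀ h0]; congr 1; ring
  have e2 : ∑' x : ℤ × ℤ, y ^ ((x.1 + x.2 + 1) ^ 2 + (x.1 + x.2 + 1)) * y ^ ((x.1 - x.2) ^ 2 + (x.1 - x.2)) =
      th3 (y ^ 2) * ps2 (y ^ 2) := by
    have : th3 (y ^ 2) = ∑' n : ℤ, (y ^ 2) ^ ((n + 1) ^ 2) :=
      ((Equiv.addRight (1 : ℤ)).tsum_eq (fun n : ℤ => (y ^ 2) ^ (n ^ 2))).symm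
    have s : Summable fun n : ℤ => ‖(y ^ 2) ^ ((n + 1) ^ 2)‖ := ((Equiv.addRight (1 : ℤ)).summable_iff (f := fun n : ℤ => ‖(y ^ 2) ^ (n ^ 2)‖)).2 (th3_summ k0 k1)
    rw [this, ps2, tsum_mul_int s (ps2_summ k0 k1)]
    congr 1; ext x
    rw [sqz, sqz, ← zpow_add₀ h0, ← zpow_add₀ h0]; congr 1; ring
  rw [e1, e2]; ring

lemma neg_ps_zero {y : ℂ} : ∑' n : ℤ, (-1 : ℂ) ^ n * y ^ (n ^ 2 + n) = 0 := by
  have e := (Equiv.subLeft (-1 : ℤ)).tsum_eq (fun n : ℤ => (-1 : ℂ) ^ n * y ^ (n ^ 2 + n))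
  have : ∀ n : ℤ, (-1 : ℂ) ^ (Equiv.subLeft (-1 : ℤ) n) * y ^ ((Equiv.subLeft (-1 : ℤ) n) ^ 2 + (Equiv.subLeft (-1 : ℤ) n))
      = - ((-1 : ℂ) ^ n * y ^ (n ^ 2 + n)) := by
    intro n
    rw [Equiv.subLeft_apply]
    have h1 : (-1 : ℂ) ^ (-1 - n) = - (-1) ^ n := by
      rcases Int.even_or_odd n with h | h
      · rw [h.neg_one_zpow, Odd.neg_one_zpow]
        rw [Int.even_iff] at h; rw [Int.odd_iff]; omega
      · rw [h.neg_one_zpow, Even.neg_one_zpow]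
        · simp
        rw [Int.odd_iff] at h; rw [Int.even_iff]; omega
    rw [h1, show (-1 - n) ^ 2 + (-1 - n) = n ^ 2 + n by ring]; ring
  rw [tsum_congr this, tsum_neg] at e
  exact self_eq_neg.1 e.symm

lemma T2 {y : ℂ} (h0 : y ≠ 0) (h1 : ‖y‖ < 1) : th3 y * th4 y = th4 (y ^ 2) ^ 2 := by
  have k0 : y ^ 2 ≠ 0 := pow_ne_zero _ h0
  have k1 := norm_sq_lt h1
  have m0 : (-1 : ℂ) ≠ 0 := by norm_num
  have mz : ∀ a b : ℤ, (-1 : ℂ) ^ (a - b) = (-1) ^ a * (-1) ^ b := by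
    intro a b
    have h : ((-1 : ℂ) ^ b)⁻¹ = (-1) ^ b := by rw [← inv_zpow]; norm_num
    rw [zpow_sub₀ m0, div_eq_mul_inv, h]
  rw [th3, th4, tsum_prod_split (th3_summ h0 h1) (th4_summ h0 h1)]
  have e1 : ∑' x : ℤ × ℤ, y ^ ((x.1 + x.2) ^ 2) * ((-1) ^ (x.1 - x.2) * y ^ ((x.1 - x.2) ^ 2)) =
      th4 (y ^ 2) ^ 2 := by
    rw [sq, th4, tsum_mul_int (th4_summ k0 k1) (th4_summ k0 k1)]
    congr 1; ext x
    have : y ^ ((x.1 + x.2) ^ 2) * y ^ ((x.1 - x.2) ^ 2) = (y ^ 2) ^ (x.1 ^ 2) * (y ^ 2) ^ (x.2 ^ 2) := by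
      rw [sqz, sqz, ← zpow_add₀ h0, ← zpow_add₀ h0]; congr 1; ring
    rw [mz]; linear_combination (-1) ^ x.1 * (-1) ^ x.2 * this
  have e2 : ∑' x : ℤ × ℤ, y ^ ((x.1 + x.2 + 1) ^ 2) * ((-1) ^ (x.1 - x.2) * y ^ ((x.1 - x.2) ^ 2)) = 0 := by
    have s : Summable fun n : ℤ => ‖(-1 : ℂ) ^ n * (y ^ 2) ^ (n ^ 2 + n)‖ := by
      simpa using ps2_summ k0 k1
    have z := neg_ps_zero (y := y ^ 2)
    have p := tsum_mul_int s s
    rw [z, zero_mul] at p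
    have p2 := congrArg (fun w => y * w) p
    simp only [mul_zero] at p2
    rw [p2, ← tsum_mul_left]
    congr 1; ext x
    have : y ^ ((x.1 + x.2 + 1) ^ 2) * y ^ ((x.1 - x.2) ^ 2) =
        y * ((y ^ 2) ^ (x.1 ^ 2 + x.1) * (y ^ 2) ^ (x.2 ^ 2 + x.2)) := by
      rw [sqz, sqz, ← zpow_add₀ h0, ← zpow_add₀ h0]
      nth_rw 2 [← zpow_one y]
      rw [← zpow_add₀ h0]; congr 1; ring
    rw [mz]; linear_combination (-1) ^ x.1 * (-1) ^ x.2 * this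
  rw [e1, e2, add_zero]

/-- Euler: `(-p;p)(p;p^2) = 1` -/
lemma euler_inv {p : ℂ} (hp : ‖p‖ < 1) : pinf (-p) p * pinf p (p ^ 2) = 1 := by
  have hp2 := norm_sq_lt hp
  have h1 := pinf_mul_neg p hp
  have h2 := pinf_even_odd p hp
  rw [show p * p = p ^ 2 by ring] at h2
  have n := pinf_ne_zero hp2 (ne_one_of_norm hp2 hp2)
  rw [h2] at h1
  have : pinf (p ^ 2) (p ^ 2) * (pinf (-p) p * pinf p (p ^ 2)) = pinf (p ^ 2) (p ^ 2) * 1 := by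
    linear_combination h1
  exact mul_left_cancel₀ n this

lemma ps2_Psi {t : ℂ} (h0 : t ≠ 0) (ht : ‖t‖ < 1) : ps2 t = 2 * Psi (t ^ 2) := by
  have hp := norm_sq_lt ht
  have hp2 := norm_sq_lt hp
  have n := pinf_ne_zero hp2 (ne_one_of_norm hp2 hp)
  have e := euler_inv hp
  have m := pinf_mul_neg (t ^ 2) hp
  rw [ps2_prod h0 ht, Psi]
  rw [mul_assoc, eq_div_of_mul_eq n e]
  rw [eq_div_of_mul_eq n e] at m
  rw [← m]; field_simp


/-- bilateral summand of `L` -/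
def gz (y : ℂ) (m : ℤ) : ℂ := y ^ (2 * m + 1) / (1 + y ^ (4 * m + 2))

/-- the divisor type series `S` -/
def Sf (w : ℂ) : ℂ := ∑' x : ℕ × ℕ, (2 * (x.1 : ℂ) + 1) * w ^ ((2 * x.1 + 1) * (2 * x.2 + 1))

lemma one_add_ne {z : ℂ} (hz : ‖z‖ ≠ 1) : 1 + z ≠ 0 := by
  intro h
  apply hz
  rw [eq_neg_of_add_eq_zero_right h]; simp

lemma one_sub_ne {z : ℂ} (hz : ‖z‖ ≠ 1) : 1 - z ≠ 0 := by
  intro h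
  apply hz
  rw [← sub_eq_zero.1 h]; simp

lemma zpow_norm_ne {y : ℂ} (h0 : y ≠ 0) (h1 : ‖y‖ < 1) {k : ℤ} (hk : k ≠ 0) : ‖y ^ k‖ ≠ 1 := by
  rw [norm_zpow]
  intro h
  exact hk ((zpow_eq_one_iff_right₀ (norm_nonneg y) h1.ne).1 h |> fun h => by simpa using h)

lemma pow_norm_lt {y : ℂ} (h1 : ‖y‖ < 1) {k : ℕ} (hk : k ≠ 0) : ‖y ^ k‖ < 1 := by
  rw [norm_pow]; exact pow_lt_one₀ (norm_nonneg _) h1 hk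

lemma gz_den {y : ℂ} (h0 : y ≠ 0) (h1 : ‖y‖ < 1) (m : ℤ) : 1 + y ^ (4 * m + 2) ≠ 0 :=
  one_add_ne (zpow_norm_ne h0 h1 (by omega))

lemma gz_neg {y : ℂ} (h0 : y ≠ 0) (h1 : ‖y‖ < 1) (m : ℤ) : gz y (-1 - m) = gz y m := by
  have e1 : y ^ (2 * (-1 - m) + 1) = (y ^ (2 * m + 1))⁻¹ := by rw [← zpow_neg]; congr 1; ring
  have e2 : y ^ (4 * (-1 - m) + 2) = (y ^ (2 * m + 1))⁻¹ ^ 2 := by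
    rw [← zpow_neg, ← zpow_natCast, ← zpow_mul]; congr 1; push_cast; ring
  have e3 : y ^ (4 * m + 2) = (y ^ (2 * m + 1)) ^ 2 := by
    rw [← zpow_natCast, ← zpow_mul]; congr 1; push_cast; ring
  have n := gz_den h0 h1 m
  have n2 : y ^ (2 * m + 1) ≠ 0 := zpow_ne_zero _ h0
  unfold gz
  rw [e1, e2, e3]; rw [e3] at n
  generalize y ^ (2 * m + 1) = x at *
  have n4 : 1 + x⁻¹ ^ 2 ≠ 0 := by
    intro h; apply n
    field_simp at h
    linear_combination h
  rw [div_eq_div_iff n4 n]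
  field_simp
  ring

lemma gz_nat (y : ℂ) (n : ℕ) : gz y n = y ^ (2 * n + 1) / (1 + y ^ (2 * (2 * n + 1))) := by
  unfold gz
  rw [show (2 * (n : ℤ) + 1) = ((2 * n + 1 : ℕ) : ℤ) by push_cast; ring,
    show (4 * (n : ℤ) + 2) = ((2 * (2 * n + 1) : ℕ) : ℤ) by push_cast; ring, zpow_natCast, zpow_natCast]

lemma gz_summ_nat {y : ℂ} (h1 : ‖y‖ < 1) : Summable fun n : ℕ => ‖gz y n‖ := by
  have hs : Summable fun n : ℕ => (1 - ‖y‖)⁻¹ * ‖y‖ ^ n :=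
    (summable_geometric_of_lt_one (norm_nonneg _) h1).mul_left _
  refine Summable.of_nonneg_of_le (fun _ => norm_nonneg _) (fun n => ?_) hs
  rw [gz_nat, norm_div, div_eq_mul_inv, mul_comm]
  have hr := norm_nonneg y
  have : 1 - ‖y‖ ≤ ‖1 + y ^ (2 * (2 * n + 1))‖ := by
    have h := norm_sub_le (1 + y ^ (2 * (2 * n + 1))) (y ^ (2 * (2 * n + 1)))
    rw [add_sub_cancel_right, norm_one, norm_pow] at h
    have : ‖y‖ ^ (2 * (2 * n + 1)) ≤ ‖y‖ := pow_le_of_le_one hr h1.le (by omega)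
    linarith
  have hpos : 0 < 1 - ‖y‖ := by linarith
  refine mul_le_mul (inv_anti₀ hpos this) ?_ (norm_nonneg _) (inv_pos.2 hpos).le
  · rw [norm_pow]; exact pow_le_pow_of_le_one hr h1.le (by omega)

lemma gz_neg_succ {y : ℂ} (h0 : y ≠ 0) (h1 : ‖y‖ < 1) (n : ℕ) : gz y (-((n : ℤ) + 1)) = gz y n := by
  rw [← gz_neg h0 h1 n]; congr 1; ring

lemma gz_summ {y : ℂ} (h0 : y ≠ 0) (h1 : ‖y‖ < 1) : Summable fun n : ℤ => ‖gz y n‖ := by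
  refine Summable.of_nat_of_neg_add_one (gz_summ_nat h1) ?_
  simpa only [gz_neg_succ h0 h1] using gz_summ_nat h1

lemma gz_tsum {y : ℂ} (h0 : y ≠ 0) (h1 : ‖y‖ < 1) : ∑' n : ℤ, gz y n = 2 * Lf y := by
  have s := (gz_summ_nat h1).of_norm
  rw [tsum_of_nat_of_neg_add_one s (by simpa only [gz_neg_succ h0 h1] using s)]
  simp only [gz_neg_succ h0 h1]
  rw [Lf]; simp only [gz_nat]; ring

/-- telescoping function -/
def hz (y : ℂ) (m : ℤ) : ℂ := 1 / (1 + y ^ (4 * m + 2))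

lemma gz_mul {y : ℂ} (h0 : y ≠ 0) (h1 : ‖y‖ < 1) (m s : ℤ) (hs : s ≠ 0) :
    gz y m * gz y (m + s) = y ^ (2 * s) / (1 - y ^ (4 * s)) * (hz y (m + s) - hz y m) := by
  unfold gz hz
  have n1 := gz_den h0 h1 m
  have n2 := gz_den h0 h1 (m + s)
  have n3 : 1 - y ^ (4 * s) ≠ 0 := one_sub_ne (zpow_norm_ne h0 h1 (by omega))
  have e1 : y ^ (4 * (m + s) + 2) = y ^ (4 * m + 2) * y ^ (4 * s) := by
    rw [← zpow_add₀ h0]; congr 1; ring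
  have e2 : y ^ (2 * m + 1) * y ^ (2 * (m + s) + 1) = y ^ (2 * s) * y ^ (4 * m + 2) := by
    rw [← zpow_add₀ h0, ← zpow_add₀ h0]; congr 1; ring
  rw [div_mul_div_comm, e2]
  rw [e1] at n2 ⊢
  field_simp
  ring

lemma gz_prod_summ {y : ℂ} (h0 : y ≠ 0) (h1 : ‖y‖ < 1) :
    Summable fun x : ℤ × ℤ => gz y x.1 * gz y x.2 :=
  ((gz_summ h0 h1).mul_norm (gz_summ h0 h1)).of_norm

lemma hz_hasSum_one {y : ℂ} (h0 : y ≠ 0) (h1 : ‖y‖ < 1) :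
    HasSum (fun m : ℤ => hz y (m + 1) - hz y m) 1 := by
  have inj : Function.Injective fun m : ℤ => (m, m + 1) := fun a b h => by simpa using congrArg Prod.fst h
  have s1 := (gz_prod_summ h0 h1).comp_injective inj
  have n3 : 1 - y ^ 4 ≠ 0 := one_sub_ne (pow_norm_lt h1 (by norm_num)).ne
  have sZ : Summable (fun m : ℤ => hz y (m + 1) - hz y m) := by
    refine (s1.mul_left ((1 - y ^ 4) / y ^ 2)).congr fun m => ?_
    simp only [Function.comp]
    rw [gz_mul h0 h1 m 1 (by norm_num)]
    norm_num
    change (1 - y ^ 4) / y ^ 2 * (y ^ 2 / (1 - y ^ 4) * (hz y (m + 1) - hz y m)) = hz y (m + 1) - hz y m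
    field_simp
  have p4 := tendsto_pow_atTop_nhds_zero_of_norm_lt_one (pow_norm_lt h1 (k := 4) (by norm_num))
  have a : HasSum (fun n : ℕ => hz y ((n : ℤ) + 1) - hz y n) (1 - hz y 0) := by
    have s : Summable (fun n : ℕ => hz y ((n : ℤ) + 1) - hz y n) := sZ.comp_injective Nat.cast_injective
    rw [s.hasSum_iff_tendsto_nat]
    have e : (fun n : ℕ => ∑ i ∈ Finset.range n, (hz y ((i : ℤ) + 1) - hz y i)) = fun n : ℕ => hz y n - hz y 0 := by
      ext n
      simpa using Finset.sum_range_sub (fun i : ℕ => hz y i) n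
    rw [e]
    refine Tendsto.sub_const ?_ _
    have e2 : (fun n : ℕ => hz y n) = fun n : ℕ => 1 / (1 + (y ^ 4) ^ n * y ^ 2) := by
      ext n
      rw [hz, show (4 * (n : ℤ) + 2) = ((4 * n + 2 : ℕ) : ℤ) by push_cast; ring, zpow_natCast, pow_add, pow_mul]
    rw [e2]
    have : Tendsto (fun n : ℕ => 1 / (1 + (y ^ 4) ^ n * y ^ 2)) atTop (𝓝 (1 / (1 + 0 * y ^ 2))) := by
      refine Tendsto.div tendsto_const_nhds ((p4.mul_const _).const_add 1) (by simp)
    simpa using this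
  have b : HasSum (fun n : ℕ => hz y (-((n : ℤ) + 1) + 1) - hz y (-((n : ℤ) + 1))) (hz y 0) := by
    have s : Summable (fun n : ℕ => hz y (-((n : ℤ) + 1) + 1) - hz y (-((n : ℤ) + 1))) :=
      sZ.comp_injective (i := fun n : ℕ => -((n : ℤ) + 1)) (fun a b h => by simpa using h)
    rw [s.hasSum_iff_tendsto_nat]
    have e : (fun n : ℕ => ∑ i ∈ Finset.range n, (hz y (-((i : ℤ) + 1) + 1) - hz y (-((i : ℤ) + 1)))) =
        fun n : ℕ => hz y 0 - hz y (-n) := by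
      ext n
      have := Finset.sum_range_sub' (fun i : ℕ => hz y (-i)) n
      simpa using this
    rw [e]
    have e2 : (fun n : ℕ => hz y (-n)) = fun n : ℕ => (y ^ 4) ^ n / ((y ^ 4) ^ n + y ^ 2) := by
      ext n
      have n2 := gz_den h0 h1 (-n)
      have n3 : (y ^ 4) ^ n ≠ 0 := pow_ne_zero _ (pow_ne_zero _ h0)
      have e3 : y ^ (4 * (-(n : ℤ)) + 2) = y ^ 2 / (y ^ 4) ^ n := by
        rw [eq_div_iff n3, ← pow_mul, ← zpow_natCast, ← zpow_natCast, ← zpow_add₀ h0]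
        congr 1; push_cast; ring
      rw [hz]
      rw [e3] at n2 ⊢
      have n4 : (y ^ 4) ^ n + y ^ 2 ≠ 0 := by
        intro h; apply n2
        field_simp; rw [h, mul_zero]
      field_simp
    have : Tendsto (fun n : ℕ => (y ^ 4) ^ n / ((y ^ 4) ^ n + y ^ 2)) atTop (𝓝 (0 / (0 + y ^ 2))) :=
      p4.div (p4.add_const _) (by simpa using h0)
    have := this.const_sub (hz y 0)
    have e2' : ∀ n : ℕ, hz y (-n) = (y ^ 4) ^ n / ((y ^ 4) ^ n + y ^ 2) := fun n => congrFun e2 n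
    simp only [← e2'] at this
    simpa using this
  have := HasSum.of_nat_of_neg_add_one (f := fun m : ℤ => hz y (m + 1) - hz y m) a b
  simpa using this

lemma hz_hasSum {y : ℂ} (h0 : y ≠ 0) (h1 : ‖y‖ < 1) (s : ℕ) :
    HasSum (fun m : ℤ => hz y (m + s) - hz y m) s := by
  induction s with
  | zero => simpa using hasSum_zero
  | succ s ih =>
    have h2 := ((Equiv.addRight (1 : ℤ)).hasSum_iff (f := fun m : ℤ => hz y (m + s) - hz y m)).2 ih
    have := h2.add (hz_hasSum_one h0 h1)
    push_cast
    refine Eq.mpr (congrArg (fun f => HasSum f _) (funext ?_)) this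
    intro m
    simp only [Function.comp, Equiv.coe_addRight]
    rw [show m + ((s : ℤ) + 1) = m + 1 + s by ring]; ring

/-- the double family `n w^{(2m+1)n}` -/
def Df (w : ℂ) (m n : ℕ) : ℂ := n * w ^ ((2 * m + 1) * n)

lemma Df_summ {w : ℂ} (h1 : ‖w‖ < 1) : Summable fun x : ℕ × ℕ => ‖Df w x.1 x.2‖ := by
  have a := summable_geometric_of_lt_one (norm_nonneg _) h1
  have b : Summable fun n : ℕ => (n : ℝ) * ‖w‖ ^ n := by
    simpa using summable_pow_mul_geometric_of_norm_lt_one 1 (r := ‖w‖) (by simpa using h1)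
  refine Summable.of_nonneg_of_le (fun _ => norm_nonneg _) ?_
    (a.mul_of_nonneg b (fun _ => by positivity) (fun _ => by positivity))
  rintro ⟨m, n⟩
  simp only [Df, norm_mul, norm_pow, Complex.norm_natCast]
  rcases Nat.eq_zero_or_pos n with rfl | hn
  · simp
  · rw [mul_left_comm, ← pow_add]
    gcongr ?_ * ?_
    refine pow_le_pow_of_le_one (norm_nonneg _) h1.le ?_
    nlinarith [Nat.zero_le m]

set_option maxHeartbeats 1000000 in
lemma Lf_sq {y : ℂ} (h0 : y ≠ 0) (h1 : ‖y‖ < 1) : Lf y ^ 2 = Sf (y ^ 2) := by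
  obtain ⟨w, hw⟩ : ∃ w, w = y ^ 2 := ⟨_, rfl⟩
  rw [← hw]
  have hw1 : ‖w‖ < 1 := hw ▸ norm_sq_lt h1
  have sD := Df_summ hw1
  have sD' : Summable fun x : ℕ × ℕ => (-1) ^ x.2 * Df w x.1 x.2 := by
    refine Summable.of_norm ?_
    simpa using sD
  set c : ℤ → ℂ := fun s => ∑' m : ℤ, gz y m * gz y (m + s) with hc
  have sP := gz_prod_summ h0 h1
  let E : ℤ × ℤ ≃ ℤ × ℤ := ⟨fun x => (x.2, x.2 + x.1), fun x => (x.2 - x.1, x.1),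
    fun x => by simp, fun x => by simp⟩
  have sE : Summable fun x : ℤ × ℤ => gz y x.2 * gz y (x.2 + x.1) := (E.summable_iff).2 sP
  have e1 : (2 * Lf y) ^ 2 = ∑' s : ℤ, c s := by
    rw [sq, ← gz_tsum h0 h1, tsum_mul_int (gz_summ h0 h1) (gz_summ h0 h1), ← E.tsum_eq]
    exact sE.tsum_prod
  have sc : Summable c := sE.prod
  have cneg : ∀ s : ℤ, c (-s) = c s := by
    intro s
    simp only [hc]
    rw [← (Equiv.addRight s).tsum_eq (fun m : ℤ => gz y m * gz y (m + -s))]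
    refine tsum_congr fun m => ?_
    simp [mul_comm]
  have sc1 : Summable fun n : ℕ => c n := sc.comp_injective Nat.cast_injective
  have sc2 : Summable fun n : ℕ => c (-((n : ℤ) + 1)) :=
    sc.comp_injective (i := fun n : ℕ => -((n : ℤ) + 1)) (fun a b h => by simpa using h)
  have e2 : ∑' s : ℤ, c s = c 0 + 2 * ∑' n : ℕ, c ((n : ℤ) + 1) := by
    rw [tsum_of_nat_of_neg_add_one sc1 sc2, sc1.tsum_eq_zero_add]
    simp only [cneg]
    push_cast; ring
  have csucc : ∀ n : ℕ, c ((n : ℤ) + 1) = ∑' m : ℕ, Df w m (n + 1) := by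
    intro n
    have e : ∀ m : ℤ, gz y m * gz y (m + ((n : ℤ) + 1)) = _ := fun m => gz_mul h0 h1 m (n + 1) (by omega)
    have hh := (hz_hasSum h0 h1 (n + 1)).tsum_eq
    push_cast at hh
    simp only [hc]
    rw [tsum_congr e, tsum_mul_left, hh]
    have e3 : y ^ (2 * ((n : ℤ) + 1)) = w ^ (n + 1) := by
      rw [hw, ← pow_mul, ← zpow_natCast]; congr 1
    have e4 : y ^ (4 * ((n : ℤ) + 1)) = (w ^ (n + 1)) ^ 2 := by
      rw [hw, ← pow_mul, ← pow_mul, ← zpow_natCast]; congr 1; push_cast; ring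
    rw [e3, e4]
    have hx : ‖(w ^ (n + 1)) ^ 2‖ < 1 := norm_sq_lt (pow_norm_lt hw1 (by omega))
    have g := tsum_geometric_of_norm_lt_one hx
    have e5 : ∀ m : ℕ, Df w m (n + 1) = ((n : ℂ) + 1) * w ^ (n + 1) * ((w ^ (n + 1)) ^ 2) ^ m := by
      intro m
      rw [Df, ← pow_mul, ← pow_mul, mul_assoc, ← pow_add]
      push_cast; congr 2; ring
    rw [tsum_congr e5, tsum_mul_left, g]
    ring
  have sDn : Summable fun n : ℕ => ∑' m : ℕ, Df w m n :=
    ((Equiv.prodComm ℕ ℕ).summable_iff.2 sD.of_norm).prod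
  have e3 : ∑' n : ℕ, c ((n : ℤ) + 1) = ∑' x : ℕ × ℕ, Df w x.1 x.2 := by
    rw [tsum_congr csucc, sD.of_norm.tsum_prod, ← (sD.of_norm).tsum_comm (f := fun m n => Df w m n),
      sDn.tsum_eq_zero_add]
    simp [Df]
  have e4 : c 0 = - 2 * ∑' x : ℕ × ℕ, (-1) ^ x.2 * Df w x.1 x.2 := by
    have s : Summable fun n : ℕ => gz y n * gz y n := by
      have := sP.comp_injective (i := fun n : ℕ => ((n : ℤ), (n : ℤ))) (fun a b h => by
        simpa using congrArg Prod.fst h)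
      exact this
    simp only [hc, add_zero]
    rw [tsum_of_nat_of_neg_add_one s (by simpa only [gz_neg_succ h0 h1] using s)]
    simp only [gz_neg_succ h0 h1]
    rw [sD'.tsum_prod, ← two_mul, neg_mul, ← mul_neg, ← tsum_neg]
    congr 1
    refine tsum_congr fun m => ?_
    have hx : ‖-w ^ (2 * m + 1)‖ < 1 := by rw [norm_neg]; exact pow_norm_lt hw1 (by omega)
    have g := tsum_coe_mul_geometric_of_norm_lt_one hx
    have e5 : ∀ n : ℕ, (-1) ^ n * Df w m n = n * (-w ^ (2 * m + 1)) ^ n := by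
      intro n
      rw [Df, neg_pow (w ^ (2 * m + 1)), pow_mul]; ring
    rw [tsum_congr e5, g, gz_nat, div_mul_div_comm]
    have e6 : y ^ (2 * (2 * m + 1)) = w ^ (2 * m + 1) := by rw [hw, ← pow_mul]
    have e7 : y ^ (2 * m + 1) * y ^ (2 * m + 1) = w ^ (2 * m + 1) := by rw [hw, ← pow_mul]; ring
    rw [e6, e7]; ring
  have e5 : Sf w = ∑' x : ℕ × ℕ, (1 - (-1) ^ x.2) / 2 * Df w x.1 x.2 := by
    have inj : Function.Injective fun x : ℕ × ℕ => (x.2, 2 * x.1 + 1) := by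
      rintro ⟨a, b⟩ ⟨c, d⟩ h
      simp only [Prod.mk.injEq] at h ⊢
      omega
    rw [Sf, ← inj.tsum_eq (f := fun x : ℕ × ℕ => (1 - (-1) ^ x.2) / 2 * Df w x.1 x.2)]
    · refine tsum_congr fun x => ?_
      simp only [Df]
      rw [Odd.neg_one_pow ⟨x.1, rfl⟩, mul_comm (2 * x.2 + 1)]
      push_cast; ring
    · rintro ⟨m, n⟩ h
      rcases Nat.even_or_odd n with hn | hn
      · simp [hn.neg_one_pow] at h
      · obtain ⟨k, hk⟩ := hn
        exact ⟨(k, m), by simp [hk]⟩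
  have e6 : ∑' x : ℕ × ℕ, (1 - (-1) ^ x.2) / 2 * Df w x.1 x.2 =
      1 / 2 * ((∑' x : ℕ × ℕ, Df w x.1 x.2) - ∑' x : ℕ × ℕ, (-1) ^ x.2 * Df w x.1 x.2) := by
    rw [← sD.of_norm.tsum_sub sD', ← tsum_mul_left]
    refine tsum_congr fun x => by ring
  rw [e5, e6]
  rw [e2, e3, e4] at e1
  linear_combination e1 / 4


lemma exists_sqrt' {y : ℂ} (h0 : y ≠ 0) (h1 : ‖y‖ < 1) : ∃ x : ℂ, x ^ 2 = y ∧ x ≠ 0 ∧ ‖x‖ < 1 := by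
  obtain ⟨x, hx⟩ := IsSquare.sq y |>.elim (fun _ _ => IsAlgClosed.exists_pow_nat_eq y (n := 2) (by norm_num))
  refine ⟨x, hx, ?_, ?_⟩
  · rintro rfl; apply h0; rw [← hx]; norm_num
  · rw [← hx, norm_pow] at h1
    by_contra h
    push Not at h
    nlinarith

lemma Sf_prod {y : ℂ} (h0 : y ≠ 0) (h1 : ‖y‖ < 1) : Sf y = y * Psi (y ^ 2) ^ 4 := by
  obtain ⟨x, rfl, hx0, hx1⟩ := exists_sqrt' h0 h1
  rw [← Lf_sq hx0 hx1, Lf_prod hx1, ← pow_mul]; ring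

lemma Psi_sq {y : ℂ} (h0 : y ≠ 0) (h1 : ‖y‖ < 1) : Psi (y ^ 2) ^ 2 = Psi (y ^ 4) * th3 (y ^ 2) := by
  have := T4 h0 h1
  rw [ps2_Psi h0 h1, ps2_Psi (pow_ne_zero 2 h0) (norm_sq_lt h1), ← pow_mul] at this
  norm_num at this
  linear_combination this / 4

lemma Sf_Lf {y : ℂ} (h0 : y ≠ 0) (h1 : ‖y‖ < 1) : Sf y = th3 (y ^ 2) ^ 2 * Lf y := by
  rw [Sf_prod h0 h1, Lf_prod h1]
  linear_combination (y * (Psi (y ^ 2) ^ 2 + Psi (y ^ 4) * th3 (y ^ 2))) * Psi_sq h0 h1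

lemma th3_sq {y : ℂ} (h0 : y ≠ 0) (h1 : ‖y‖ < 1) : th3 y ^ 2 = th3 (y ^ 2) ^ 2 + 4 * Lf y := by
  rw [T1 h0 h1, ps2_Psi (pow_ne_zero 2 h0) (norm_sq_lt h1), Lf_prod h1, ← pow_mul]; ring

def Ef (y : ℂ) : ℂ := 1 + 24 * ∑' x : ℕ × ℕ, (2 * (x.1 : ℂ) + 1) * y ^ ((2 * x.1 + 1) * (x.2 + 1))

lemma Ef_summ {y : ℂ} (h1 : ‖y‖ < 1) :
    Summable fun x : ℕ × ℕ => ‖(2 * (x.1 : ℂ) + 1) * y ^ ((2 * x.1 + 1) * (x.2 + 1))‖ := by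
  have a := summable_geometric_of_lt_one (norm_nonneg _) h1
  have b : Summable fun n : ℕ => (2 * (n : ℝ) + 1) * ‖y‖ ^ n := by
    have : Summable fun n : ℕ => (n : ℝ) * ‖y‖ ^ n := by
      simpa using summable_pow_mul_geometric_of_norm_lt_one 1 (r := ‖y‖) (by simpa using h1)
    refine ((this.mul_left 2).add a).congr fun n => by ring
  refine Summable.of_nonneg_of_le (fun _ => norm_nonneg _) ?_
    (b.mul_of_nonneg a (fun _ => by positivity) (fun _ => by positivity))
  rintro ⟨m, n⟩
  have : ‖(2 * (m : ℂ) + 1)‖ = 2 * (m : ℝ) + 1 := by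
    rw [show (2 * (m : ℂ) + 1) = ((2 * m + 1 : ℕ) : ℂ) by push_cast; ring, Complex.norm_natCast]
    push_cast; ring
  simp only [norm_mul, norm_pow, this]
  rw [mul_assoc, ← pow_add]
  gcongr ?_ * ?_
  refine pow_le_pow_of_le_one (norm_nonneg _) h1.le ?_
  nlinarith [Nat.zero_le m, Nat.zero_le (m * n)]

lemma tsum_snd_parity {f : ℕ × ℕ → ℂ} (s : Summable f) :
    ∑' x, f x = (∑' x : ℕ × ℕ, f (x.1, 2 * x.2)) + ∑' x : ℕ × ℕ, f (x.1, 2 * x.2 + 1) := by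
  have i1 : Function.Injective fun x : ℕ × ℕ => (x.1, 2 * x.2) := by
    intro a b h
    simp only [Prod.mk.injEq] at h; ext <;> omega
  have i2 : Function.Injective fun x : ℕ × ℕ => (x.1, 2 * x.2 + 1) := by
    intro a b h
    simp only [Prod.mk.injEq] at h; ext <;> omega
  have s1 : Summable fun x : ℕ × ℕ => f (x.1, 2 * x.2) := s.comp_injective i1
  have s2 : Summable fun x : ℕ × ℕ => f (x.1, 2 * x.2 + 1) := s.comp_injective i2
  have i3 : Function.Injective fun x : ℕ => 2 * x := fun a b h => by
    simp only at h; omega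
  have i4 : Function.Injective fun x : ℕ => 2 * x + 1 := fun a b h => by
    simp only at h; omega
  rw [← Summable.tsum_add s1 s2, s.tsum_prod, (s1.add s2).tsum_prod]
  refine tsum_congr fun d => ?_
  have sd := s.prod_factor d
  have a1 : Summable fun e : ℕ => f (d, 2 * e) := sd.comp_injective i3
  have a2 : Summable fun e : ℕ => f (d, 2 * e + 1) := sd.comp_injective i4
  have := tsum_even_add_odd (f := fun e : ℕ => f (d, e)) a1 a2
  rw [← this, Summable.tsum_add a1 a2]

lemma Ef_rec {y : ℂ} (h1 : ‖y‖ < 1) : Ef y = Ef (y ^ 2) + 24 * Sf y := by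
  have key := tsum_snd_parity (Ef_summ h1).of_norm
  dsimp only at key
  rw [Ef, Ef, key, Sf]
  have : ∀ x : ℕ × ℕ, (y ^ 2) ^ ((2 * x.1 + 1) * (x.2 + 1)) = y ^ ((2 * x.1 + 1) * (2 * x.2 + 1 + 1)) := by
    intro x; rw [← pow_mul]; congr 1; ring
  simp only [this]
  rw [mul_add, ← add_assoc, add_right_comm]

lemma tends_aux {ι : Type*} {a : ι → ℂ} {e : ι → ℕ} {y : ℂ} (h1 : ‖y‖ < 1) (he : ∀ x, e x ≠ 0)
    (hs : Summable fun x => ‖a x * y ^ e x‖) :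
    Tendsto (fun k : ℕ => ∑' x, a x * (y ^ 2 ^ k) ^ e x) atTop (𝓝 0) := by
  have := tendsto_tsum_of_dominated_convergence (𝓕 := atTop) (f := fun (k : ℕ) x => a x * (y ^ 2 ^ k) ^ e x) (g := fun _ => 0)
    hs ?_ ?_
  · simpa using this
  · intro x
    have : Tendsto (fun k : ℕ => (y ^ e x) ^ 2 ^ k) atTop (𝓝 0) :=
      (tendsto_pow_atTop_nhds_zero_of_norm_lt_one (pow_norm_lt h1 (he x))).comp
        (tendsto_pow_atTop_atTop_of_one_lt (by norm_num))
    have := this.const_mul (a x)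
    simpa only [mul_zero, ← pow_mul, mul_comm (e x)] using this
  · refine Eventually.of_forall fun k x => ?_
    simp only [norm_mul, norm_pow]
    gcongr
    exact pow_le_of_le_one (norm_nonneg _) h1.le (by positivity)

lemma tsum_even_int {F : ℤ → ℂ} (hF : Summable F) (h : ∀ n, F (-n) = F n) :
    ∑' n, F n = F 0 + 2 * ∑' n : ℕ, F (n + 1) := by
  have s : Summable fun n : ℕ => F (n + 1) := hF.comp_injective (i := fun n : ℕ => (n : ℤ) + 1) (fun a b h => by simpa using h)
  have s0 : Summable fun n : ℕ => F n := hF.comp_injective (i := fun n : ℕ => (n : ℤ)) (fun a b h => by simpa using h)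
  rw [tsum_of_nat_of_neg_add_one s0 (by simpa only [h] using s), s0.tsum_eq_zero_add]
  simp only [h]; push_cast; ring

lemma th3_nat {y : ℂ} (h0 : y ≠ 0) (h1 : ‖y‖ < 1) : th3 y = 1 + 2 * ∑' n : ℕ, 1 * y ^ ((n + 1) ^ 2) := by
  rw [th3, tsum_even_int (th3_summ h0 h1).of_norm (by intro n; rw [neg_sq])]
  norm_num
  exact tsum_congr fun n => by exact_mod_cast zpow_natCast y ((n + 1) ^ 2)

lemma th4_nat {y : ℂ} (h0 : y ≠ 0) (h1 : ‖y‖ < 1) :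
    th4 y = 1 + 2 * ∑' n : ℕ, (-1 : ℂ) ^ (n + 1) * y ^ ((n + 1) ^ 2) := by
  rw [th4, tsum_even_int (th4_summ h0 h1).of_norm (by intro n; rw [neg_sq, zpow_neg, ← inv_zpow]; norm_num)]
  norm_num
  exact tsum_congr fun n => by
    have h2 : y ^ (((n : ℤ) + 1) ^ 2) = y ^ ((n + 1) ^ 2) := by exact_mod_cast zpow_natCast y ((n + 1) ^ 2)
    have h3 : (-1 : ℂ) ^ ((n : ℤ) + 1) = (-1 : ℂ) ^ (n + 1) := by exact_mod_cast zpow_natCast (-1 : ℂ) (n + 1)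
    rw [h2, h3]

lemma th3_tends {y : ℂ} (h0 : y ≠ 0) (h1 : ‖y‖ < 1) : Tendsto (fun k : ℕ => th3 (y ^ 2 ^ k)) atTop (𝓝 1) := by
  have s : Summable fun n : ℕ => ‖(1 : ℂ) * y ^ ((n + 1) ^ 2)‖ := by
    refine Summable.of_nonneg_of_le (fun _ => norm_nonneg _) (fun n => ?_) (summable_geometric_of_lt_one (norm_nonneg _) h1)
    rw [one_mul, norm_pow]
    exact pow_le_pow_of_le_one (norm_nonneg _) h1.le (by nlinarith)
  have := ((tends_aux h1 (a := fun _ => 1) (e := fun n : ℕ => (n + 1) ^ 2) (fun x => by positivity) s).const_mul 2).const_add 1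
  simp only [mul_zero, add_zero] at this
  refine this.congr fun k => ?_
  rw [th3_nat (pow_ne_zero _ h0) (pow_norm_lt h1 (by positivity))]

lemma Ef_tends {y : ℂ} (h1 : ‖y‖ < 1) : Tendsto (fun k : ℕ => Ef (y ^ 2 ^ k)) atTop (𝓝 1) := by
  have := ((tends_aux h1 (fun x => by positivity) (Ef_summ h1)).const_mul 24).const_add 1
  simp only [mul_zero, add_zero] at this
  exact this

lemma Sf_tends {y : ℂ} (h1 : ‖y‖ < 1) : Tendsto (fun k : ℕ => Sf (y ^ 2 ^ k)) atTop (𝓝 0) := by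
  have e : ∀ k : ℕ, Sf (y ^ 2 ^ k) = (Ef (y ^ 2 ^ k) - Ef (y ^ 2 ^ (k + 1))) / 24 := by
    intro k
    rw [Ef_rec (y := y ^ 2 ^ k) (pow_norm_lt h1 (by positivity)), ← pow_mul, ← pow_succ]; ring
  have := ((Ef_tends h1).sub ((tendsto_add_atTop_iff_nat 1).2 (Ef_tends h1))).div_const 24
  simpa only [e, sub_self, zero_div] using this

lemma Ef_eq {y : ℂ} (h0 : y ≠ 0) (h1 : ‖y‖ < 1) : Ef y = th3 y ^ 4 + 16 * Sf y := by
  have hrec : ∀ z : ℂ, z ≠ 0 → ‖z‖ < 1 →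
      Ef z - (th3 z ^ 4 + 16 * Sf z) = Ef (z ^ 2) - (th3 (z ^ 2) ^ 4 + 16 * Sf (z ^ 2)) := by
    intro z hz0 hz1
    rw [Ef_rec hz1]
    have a := th3_sq hz0 hz1
    have b := Sf_Lf hz0 hz1
    have c := Lf_sq hz0 hz1
    rw [← c, show th3 z ^ 4 = (th3 z ^ 2) ^ 2 by ring, a]
    linear_combination 8 * b
  have all : ∀ k : ℕ, Ef y - (th3 y ^ 4 + 16 * Sf y) = Ef (y ^ 2 ^ k) - (th3 (y ^ 2 ^ k) ^ 4 + 16 * Sf (y ^ 2 ^ k)) := by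
    intro k
    induction k with
    | zero => simp
    | succ k ih => rw [ih, hrec _ (pow_ne_zero _ h0) (pow_norm_lt h1 (by positivity)), ← pow_mul, ← pow_succ]
  have t := (Ef_tends h1).sub (((th3_tends h0 h1).pow 4).add ((Sf_tends h1).const_mul 16))
  simp only [← all] at t
  have := tendsto_nhds_unique t tendsto_const_nhds
  norm_num at this
  exact sub_eq_zero.1 this.symm

lemma Estar_aux {y : ℂ} (h1 : ‖y‖ < 1) :
    1 + 24 * ∑' n : ℕ, (sigmaOdd (n + 1) : ℂ) * y ^ (n + 1) = Ef y := by
  have s := (Ef_summ h1).of_norm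
  let i : ℕ × ℕ → ℕ+ × ℕ+ := fun x => ((2 * x.1).succPNat, x.2.succPNat)
  have hi : Function.Injective i := by
    intro a b h
    simp only [i, Prod.mk.injEq, Nat.succPNat_inj] at h
    ext <;> omega
  let f : ℕ+ × ℕ+ → ℂ := fun x => (if Odd (x.1 : ℕ) then (x.1 : ℂ) else 0) * y ^ ((x.1 : ℕ) * x.2)
  have hf : ∀ x ∉ Set.range i, f x = 0 := by
    rintro ⟨a, b⟩ h
    simp only [f]
    rw [if_neg, zero_mul]
    rintro ⟨k, hk⟩
    apply h
    refine ⟨(k, (b : ℕ) - 1), ?_⟩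
    simp only [i, Prod.mk.injEq]
    have := b.2
    constructor
    · apply PNat.coe_injective; simp [hk]
    · apply PNat.coe_injective; simp only [Nat.succPNat_coe, Nat.succ_eq_add_one]; exact Nat.sub_add_cancel this
  have hfi : f ∘ i = fun x : ℕ × ℕ => (2 * (x.1 : ℂ) + 1) * y ^ ((2 * x.1 + 1) * (x.2 + 1)) := by
    ext x
    have : Odd (((2 * x.1).succPNat : ℕ+) : ℕ) := odd_two_mul_add_one _
    simp only [f, i, Function.comp]
    rw [if_pos this]
    simp only [Nat.succPNat_coe, Nat.succ_eq_add_one]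
    push_cast; ring
  have sf : Summable f := by
    rw [← hi.summable_iff hf, hfi]; exact s
  have e1 : ∑' x, f x = ∑' x : ℕ × ℕ, (2 * (x.1 : ℂ) + 1) * y ^ ((2 * x.1 + 1) * (x.2 + 1)) := by
    rw [← hfi]
    symm
    exact hi.tsum_eq (f := f) (fun x hx => by by_contra h; exact hx (hf x h))
  rw [Ef, ← e1, ← sigmaAntidiagonalEquivProd.tsum_eq f]
  have sf2 := sigmaAntidiagonalEquivProd.summable_iff.2 sf
  rw [show ∑' c, f (sigmaAntidiagonalEquivProd c) = ∑' c, (f ∘ sigmaAntidiagonalEquivProd) c from rfl, sf2.tsum_sigma,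
    ← tsum_pnat_eq_tsum_succ (f := fun n => (sigmaOdd n : ℂ) * y ^ n)]
  congr 2
  refine tsum_congr fun n => ?_
  rw [tsum_fintype]
  have e3 : ∀ b : {x // x ∈ (n : ℕ).divisorsAntidiagonal}, (f ∘ sigmaAntidiagonalEquivProd) ⟨n, b⟩ =
      (fun p : ℕ × ℕ => (if Odd p.1 then (p.1 : ℂ) else 0) * y ^ (p.1 * p.2)) b.1 := by
    intro b
    rfl
  simp only [e3]
  rw [Finset.univ_eq_attach, Finset.sum_attach (n : ℕ).divisorsAntidiagonal
    (fun p : ℕ × ℕ => (if Odd p.1 then (p.1 : ℂ) else 0) * y ^ (p.1 * p.2)),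
    Nat.sum_divisorsAntidiagonal (fun a b => (if Odd a then (a : ℂ) else 0) * y ^ (a * b)), sigmaOdd,
    Finset.sum_filter]
  push_cast
  rw [Finset.sum_mul]
  refine Finset.sum_congr rfl fun a ha => ?_
  rw [Nat.mul_div_cancel' (Nat.dvd_of_mem_divisors ha)]


lemma pf_tele {Q p : ℂ} (hQp : p = Q ^ 2) (h0 : p ≠ 0) (hp : ‖p‖ < 1) {n : ℕ} (hn : n ≠ 0) (R : ℕ) :
    ∑ r ∈ Finset.range (R + 1), (-1 : ℂ) ^ r * Q ^ (r * (r + 1)) * (p ^ ((n : ℤ) - r) - p ^ ((n : ℤ) + r + 1)) *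
      (iq p (n - r) * iq p (n + r + 1)) =
    (-1) ^ R * Q ^ (R * (R + 1)) * p ^ n * (1 - p ^ (R + 1)) / (1 - p ^ n) *
      (iq p (n - R - 1) * iq p (n + R + 1)) := by
  have hX : 1 - p ^ n ≠ 0 := one_sub_ne (pow_norm_lt hp hn).ne
  induction R with
  | zero =>
    rw [Finset.sum_range_one]
    have := iq_rec h0 hp n
    simp only [CharP.cast_eq_zero, sub_zero, add_zero, zero_add, zero_mul, pow_zero, pow_one, one_mul, mul_one]
    rw [this, zpow_add_one₀ h0, zpow_natCast]
    field_simp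
  | succ R ih =>
    rw [Finset.sum_range_succ, ih]
    push_cast
    have a1 := iq_rec h0 hp (n - R - 1)
    have a2 := iq_rec h0 hp (n + R + 1 + 1)
    rw [add_sub_cancel_right] at a2
    have hZ : p ^ (R + 1) ≠ 0 := pow_ne_zero _ h0
    have e1 : p ^ ((n : ℤ) - R - 1) = p ^ n / p ^ (R + 1) := by
      rw [eq_div_iff hZ, ← zpow_natCast, ← zpow_natCast, ← zpow_add₀ h0]; congr 1; push_cast; ring
    have e2 : p ^ ((n : ℤ) + R + 1 + 1) = p ^ n * p ^ (R + 1) * p := by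
      rw [zpow_add_one₀ h0, add_assoc, zpow_add₀ h0, zpow_natCast]; norm_cast
    have e3 : Q ^ ((R + 1) * (R + 1 + 1)) = Q ^ (R * (R + 1)) * p ^ (R + 1) := by
      rw [hQp, ← pow_mul, ← pow_add]; congr 1; ring
    rw [show (n : ℤ) - (R + 1) - 1 = n - R - 1 - 1 by ring, show (n : ℤ) - (R + 1) = n - R - 1 by ring,
      show (n : ℤ) + (R + 1) + 1 = n + R + 1 + 1 by ring, a1, a2, e1, e2, e3, pow_succ p (R + 1), pow_succ (-1 : ℂ) R]
    generalize p ^ (R + 1) = Z at *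
    generalize p ^ n = X at *
    generalize iq p ((n : ℤ) - R - 1) = u
    generalize iq p ((n : ℤ) + R + 1 + 1) = v
    field_simp
    ring

def alp (Q : ℂ) (r : ℕ) : ℂ := (-1) ^ r * Q ^ (r * (r + 1)) * (1 - (Q ^ 2) ^ (2 * r + 1)) / (1 + Q ^ (2 * r + 1)) ^ 2

lemma pf {Q : ℂ} (h0 : Q ≠ 0) (h1 : ‖Q‖ < 1) (n : ℕ) :
    1 / pfin (-Q) (Q ^ 2) (n + 1) ^ 2 =
      ∑ r ∈ Finset.range (n + 1), alp Q r * (iq (Q ^ 2) (n - r) * iq (Q ^ 2) (n + r + 1)) := by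
  obtain ⟨p, hQp⟩ : ∃ p, p = Q ^ 2 := ⟨_, rfl⟩
  have hp0 : p ≠ 0 := by rw [hQp]; exact pow_ne_zero _ h0
  have hp : ‖p‖ < 1 := by rw [hQp]; exact norm_sq_lt h1
  have hd : ∀ k : ℕ, 1 + Q ^ (2 * k + 1) ≠ 0 := fun k => one_add_ne (pow_norm_lt h1 (by omega)).ne
  rw [← hQp]
  induction n with
  | zero =>
    have h1Q : 1 + Q ≠ 0 := by simpa using hd 0
    have h1p : 1 - p ≠ 0 := one_sub_ne hp.ne
    simp [alp, pfin, iq, ← hQp]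
    field_simp
  | succ n ih =>
    have hne : pfin (-Q) p (n + 1) ≠ 0 := by
      apply pfin_ne_zero
      apply ne_one_of_norm hp
      simpa using h1
    have e0 : pfin (-Q) p (n + 1 + 1) = pfin (-Q) p (n + 1) * (1 + Q ^ (2 * (n + 1) + 1)) := by
      rw [pfin_succ _ _ (n + 1), hQp, ← pow_mul]; ring
    have hd' := hd (n + 1)
    have e1 : 1 / pfin (-Q) p (n + 1 + 1) ^ 2 = 1 / pfin (-Q) p (n + 1) ^ 2 / (1 + Q ^ (2 * (n + 1) + 1)) ^ 2 := by
      rw [e0]; field_simp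
    rw [e1, div_eq_iff (pow_ne_zero 2 hd'), ih]
    have t := pf_tele hQp hp0 hp (n := n + 1) (by omega) (n + 1)
    have z : iq p ((n + 1 : ℕ) - (n + 1 : ℕ) - 1) = 0 := by simp [iq]
    rw [z, zero_mul, mul_zero] at t
    have e2 : ∑ r ∈ Finset.range (n + 1), alp Q r * (iq p (n - r) * iq p (n + r + 1)) =
        ∑ r ∈ Finset.range (n + 1 + 1), alp Q r * (iq p (n - r) * iq p (n + r + 1)) := by
      rw [Finset.sum_range_succ _ (n + 1)]
      simp [iq]
    rw [e2, ← sub_eq_zero, Finset.sum_mul, ← Finset.sum_sub_distrib, ← neg_eq_zero, ← Finset.sum_neg_distrib, ← t]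
    refine Finset.sum_congr rfl fun r _ => ?_
    have b1 := iq_rec hp0 hp (n + 1 - r)
    have b2 := iq_rec hp0 hp (n + 1 + r + 1)
    rw [show (n : ℤ) + 1 - r - 1 = n - r by ring] at b1
    rw [show (n : ℤ) + 1 + r + 1 - 1 = n + r + 1 by ring] at b2
    push_cast
    rw [b1, b2]
    have hdr := hd r
    have hZ : p ^ r ≠ 0 := pow_ne_zero _ hp0
    have f1 : p ^ ((n : ℤ) + 1 - r) = p ^ (n + 1) / p ^ r := by
      rw [eq_div_iff hZ, ← zpow_natCast, ← zpow_natCast, ← zpow_add₀ hp0]; congr 1; push_cast; ring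
    have f2 : p ^ ((n : ℤ) + 1 + r + 1) = p ^ (n + 1) * p ^ r * p := by
      rw [zpow_add_one₀ hp0, zpow_add₀ hp0, zpow_natCast]; norm_cast
    have f3 : Q ^ (2 * (n + 1) + 1) = p ^ (n + 1) * Q := by rw [hQp, ← pow_mul, pow_succ]
    have f4 : Q ^ (2 * r + 1) = p ^ r * Q := by rw [hQp, ← pow_mul, pow_succ]
    rw [f1, f2, alp, ← hQp, f3, f4, show p ^ (2 * r + 1) = (p ^ r) ^ 2 * p by ring]
    rw [f4] at hdr
    generalize p ^ (n + 1) = X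
    generalize p ^ r = Z at *
    generalize iq p ((n : ℤ) + 1 - r) = u
    generalize iq p ((n : ℤ) + 1 + r + 1) = v
    generalize Q ^ (r * (r + 1)) = E
    generalize (-1 : ℂ) ^ r = s
    subst hQp
    field_simp
    ring


/-- the (shifted) mock theta series -/
def Af (Q : ℂ) : ℂ := ∑' n : ℕ, (-1) ^ (n + 1) * Q ^ ((n + 1) ^ 2) * pfin Q (Q ^ 2) n / pfin (-Q) (Q ^ 2) (n + 1) ^ 2

/-- Lambert-type series `K` -/
def Kf (Q : ℂ) : ℂ := ∑' n : ℕ, Q ^ ((2 * n + 1) * (n + 1)) / (1 + Q ^ (2 * n + 1))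

def cA (Q : ℂ) (n : ℕ) : ℂ := (-1) ^ (n + 1) * Q ^ ((n + 1) ^ 2) * pfin Q (Q ^ 2) n

def FA (Q : ℂ) (x : ℕ × ℕ) : ℂ :=
  cA Q (x.1 + x.2) * (alp Q x.1 * (iq (Q ^ 2) x.2 * iq (Q ^ 2) (2 * x.1 + x.2 + 1)))

lemma tsum_antidiag {F : ℕ × ℕ → ℂ} (h : Summable F) :
    ∑' x, F x = ∑' n : ℕ, ∑ r ∈ Finset.range (n + 1), F (r, n - r) := by
  rw [← Finset.HasAntidiagonal.sigmaAntidiagonalEquivProd.tsum_eq F]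
  have s2 := Finset.HasAntidiagonal.sigmaAntidiagonalEquivProd.summable_iff.2 h
  rw [show ∑' c, F (Finset.HasAntidiagonal.sigmaAntidiagonalEquivProd c) =
    ∑' c, (F ∘ Finset.HasAntidiagonal.sigmaAntidiagonalEquivProd) c from rfl, s2.tsum_sigma]
  refine tsum_congr fun n => ?_
  rw [tsum_fintype, ← Finset.Nat.sum_antidiagonal_eq_sum_range_succ_mk, Finset.univ_eq_attach]
  exact Finset.sum_attach (Finset.HasAntidiagonal.antidiagonal n) F

lemma alp_bdd {Q : ℂ} (h1 : ‖Q‖ < 1) : ∃ C > 0, ∀ n, ‖alp Q n‖ ≤ C := by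
  have hpos : 0 < 1 - ‖Q‖ := by linarith
  have hr := norm_nonneg Q
  refine ⟨2 / (1 - ‖Q‖) ^ 2, by positivity, fun n => ?_⟩
  have a : 1 - ‖Q‖ ≤ ‖1 + Q ^ (2 * n + 1)‖ := by
    have h := norm_sub_le (1 + Q ^ (2 * n + 1)) (Q ^ (2 * n + 1))
    rw [add_sub_cancel_right, norm_one, norm_pow] at h
    have : ‖Q‖ ^ (2 * n + 1) ≤ ‖Q‖ := pow_le_of_le_one hr h1.le (by omega)
    linarith
  have b : ‖1 - (Q ^ 2) ^ (2 * n + 1)‖ ≤ 2 := by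
    have h := norm_sub_le 1 ((Q ^ 2) ^ (2 * n + 1))
    rw [← pow_mul, norm_one, norm_pow] at h
    rw [← pow_mul]
    have : ‖Q‖ ^ (2 * (2 * n + 1)) ≤ 1 := pow_le_one₀ hr h1.le
    linarith
  have c : ‖Q ^ (n * (n + 1))‖ ≤ 1 := by rw [norm_pow]; exact pow_le_one₀ hr h1.le
  rw [alp, norm_div, norm_mul, norm_mul, norm_pow (-1 : ℂ), norm_neg, norm_one, one_pow, one_mul, norm_pow (1 + _)]
  have : ‖Q ^ (n * (n + 1))‖ * ‖1 - (Q ^ 2) ^ (2 * n + 1)‖ ≤ 1 * 2 := by gcongr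
  rw [one_mul] at this
  gcongr

lemma FA_summ {Q : ℂ} (h1 : ‖Q‖ < 1) : Summable (FA Q) := by
  have hp : ‖Q ^ 2‖ < 1 := norm_sq_lt h1
  obtain ⟨C1, p1, b1⟩ := alp_bdd h1
  obtain ⟨C2, p2, b2⟩ := iq_bdd hp
  obtain ⟨C3, p3, b3⟩ := pfin_bdd Q hp
  have a := summable_geometric_of_lt_one (norm_nonneg _) h1
  refine Summable.of_norm_bounded (g := fun x : ℕ × ℕ => C3 * (C1 * (C2 * C2)) * (‖Q‖ ^ x.1 * ‖Q‖ ^ x.2))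
    ((a.mul_of_nonneg a (fun _ => by positivity) (fun _ => by positivity)).mul_left _) ?_
  rintro ⟨r, m⟩
  simp only [FA, cA, norm_mul, norm_pow (-1 : ℂ), norm_neg, norm_one, one_pow, one_mul, norm_pow Q]
  calc _ ≤ ‖Q‖ ^ (r + m) * C3 * (C1 * (C2 * C2)) := by
        have hq : ‖Q‖ ^ (r + m + 1) ^ 2 ≤ ‖Q‖ ^ (r + m) :=
          pow_le_pow_of_le_one (norm_nonneg _) h1.le (by nlinarith)
        have q3 := b3 (r + m)
        have q1 := b1 r
        have q2 := b2 m
        have q4 := b2 (2 * r + m + 1)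
        exact mul_le_mul (mul_le_mul hq q3 (norm_nonneg _) (by positivity))
          (mul_le_mul q1 (mul_le_mul q2 q4 (norm_nonneg _) p2.le) (by positivity) p1.le) (by positivity) (by positivity)
    _ = _ := by rw [pow_add]; ring

lemma FA_inner {Q : ℂ} (h0 : Q ≠ 0) (h1 : ‖Q‖ < 1) (r : ℕ) :
    ∑' m : ℕ, FA Q (r, m) = - (Q ^ ((2 * r + 1) * (r + 1)) / (1 + Q ^ (2 * r + 1))) / Psi Q := by
  obtain ⟨p, hQp⟩ : ∃ p, p = Q ^ 2 := ⟨_, rfl⟩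
  have hp0 : p ≠ 0 := by rw [hQp]; exact pow_ne_zero _ h0
  have hp : ‖p‖ < 1 := by rw [hQp]; exact norm_sq_lt h1
  have nQ : ∀ k : ℕ, k ≠ 0 → ‖Q ^ k‖ < 1 := fun k hk => pow_norm_lt h1 hk
  have g := qgauss1 (Q ^ (2 * r + 1)) (Q ^ (2 * r + 3)) hp (nQ _ (by omega))
    (by rw [← pow_add]; exact nQ _ (by omega))
  have hax : Q ^ (2 * r + 1) * Q ^ (2 * r + 3) = p * p ^ (2 * r + 1) := by
    rw [hQp, ← pow_add, ← pow_mul, ← pow_add]; congr 1; ring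
  rw [hax] at g
  have npp := ne_one_of_norm hp hp
  have n1 : pfin p p (2 * r + 1) ≠ 0 := pfin_ne_zero npp _
  have nax : ‖p * p ^ (2 * r + 1)‖ < 1 := by rw [← pow_succ']; exact pow_norm_lt hp (by omega)
  have n2 : pinf (p * p ^ (2 * r + 1)) p ≠ 0 := pinf_ne_zero hp (ne_one_of_norm hp nax)
  have term : ∀ m : ℕ, FA Q (r, m) = alp Q r * ((-1) ^ (r + 1) * Q ^ ((r + 1) ^ 2)) * pfin Q p r / pfin p p (2 * r + 1) *
      ((-1) ^ m * p ^ (m * (m - 1) / 2) * (Q ^ (2 * r + 3)) ^ m * pfin (Q ^ (2 * r + 1)) p m /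
        (pfin p p m * pfin (p * p ^ (2 * r + 1)) p m)) := by
    intro m
    have i1 : iq p ((m : ℕ) : ℤ) = (pfin p p m)⁻¹ := by simp [iq]
    have i2 : iq p (2 * (r : ℤ) + m + 1) = (pfin p p (2 * r + 1) * pfin (p * p ^ (2 * r + 1)) p m)⁻¹ := by
      rw [← pfin_add, iq, if_neg (by omega)]
      congr 2; omega
    have i3 : pfin Q p (r + m) = pfin Q p r * pfin (Q ^ (2 * r + 1)) p m := by
      rw [pfin_add]; congr 2; rw [hQp]; ring
    have i4 : Q ^ ((r + m + 1) ^ 2) = Q ^ ((r + 1) ^ 2) * (p ^ (m * (m - 1) / 2) * (Q ^ (2 * r + 3)) ^ m) := by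
      rw [hQp, ← pow_mul, ← pow_mul, Nat.mul_div_cancel' (Nat.even_mul_pred_self m).two_dvd, ← pow_add, ← pow_add]
      congr 1
      rcases m with _ | m
      · simp
      · simp only [Nat.add_sub_cancel]; ring
    have n3 : pfin p p m ≠ 0 := pfin_ne_zero npp _
    have n4 : pfin (p * p ^ (2 * r + 1)) p m ≠ 0 := pfin_ne_zero (ne_one_of_norm hp nax) _
    simp only [FA, cA]
    rw [← hQp, i1, i2, i3, i4]
    field_simp
    ring
  rw [tsum_congr term, tsum_mul_left, eq_div_of_mul_eq n2 g]
  have j1 : pinf p p = pfin p p (2 * r + 1) * pinf (p * p ^ (2 * r + 1)) p := pinf_split p hp _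
  have j2 : pinf Q p = pfin Q p r * (1 - Q ^ (2 * r + 1)) * pinf (Q ^ (2 * r + 3)) p := by
    rw [pinf_split Q hp (r + 1), pfin_succ]
    congr 2
    · rw [hQp]; ring
    · rw [hQp]; ring
  have n5 : pinf Q p ≠ 0 := pinf_ne_zero hp (ne_one_of_norm hp h1)
  have k1 : pfin Q p r ≠ 0 := pfin_ne_zero (ne_one_of_norm hp h1) _
  have k2 : 1 - Q ^ (2 * r + 1) ≠ 0 := one_sub_ne (nQ _ (by omega)).ne
  have k3 : 1 + Q ^ (2 * r + 1) ≠ 0 := one_add_ne (nQ _ (by omega)).ne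
  have k4 : pinf (Q ^ (2 * r + 3)) p ≠ 0 := pinf_ne_zero hp (ne_one_of_norm hp (nQ _ (by omega)))
  rw [Psi, ← hQp, j1, j2, alp, ← hQp, show p ^ (2 * r + 1) = (Q ^ (2 * r + 1)) ^ 2 by rw [hQp]; ring,
    show Q ^ ((2 * r + 1) * (r + 1)) = Q ^ (r * (r + 1)) * Q ^ ((r + 1) ^ 2) by rw [← pow_add]; congr 1; ring,
    pow_succ (-1 : ℂ) r]
  have hs : ((-1 : ℂ) ^ r) ^ 2 = 1 := by rw [← pow_mul, mul_comm, pow_mul]; simp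
  rw [show p * p ^ (2 * r + 1) = p * (Q ^ (2 * r + 1)) ^ 2 by rw [hQp]; ring] at n2
  generalize pinf (p * (Q ^ (2 * r + 1)) ^ 2) p = a1 at *
  generalize pfin p p (2 * r + 1) = a2 at *
  generalize pfin Q p r = a3 at *
  generalize pinf (Q ^ (2 * r + 3)) p = a4 at *
  generalize Q ^ (2 * r + 1) = W at *
  generalize Q ^ (r * (r + 1)) = E at *
  generalize Q ^ ((r + 1) ^ 2) = D at *
  generalize (-1 : ℂ) ^ r = s at *
  field_simp
  rw [hs]
  ring

lemma Af_eq {Q : ℂ} (h0 : Q ≠ 0) (h1 : ‖Q‖ < 1) : Af Q = - Kf Q / Psi Q := by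
  have s := FA_summ h1
  have e1 : Af Q = ∑' x, FA Q x := by
    rw [tsum_antidiag s, Af]
    refine tsum_congr fun n => ?_
    rw [← mul_one_div, pf h0 h1 n, Finset.mul_sum]
    refine Finset.sum_congr rfl fun r hr => ?_
    have hr' : r ≤ n := by rw [Finset.mem_range] at hr; omega
    simp only [FA, cA]
    rw [Nat.add_sub_cancel' hr', Nat.cast_sub hr', show 2 * (r : ℤ) + (n - r) + 1 = n + r + 1 by ring]
  rw [e1, s.tsum_prod, tsum_congr (FA_inner h0 h1), tsum_div_const, tsum_neg, Kf]


lemma summ_nn {y : ℂ} (h1 : ‖y‖ < 1) {F : ℕ × ℕ → ℂ} {e : ℕ → ℕ → ℕ} (he : ∀ m j, m + j ≤ e m j)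
    (hF : ∀ m j, ‖F (m, j)‖ = ‖y‖ ^ e m j) : Summable fun x => ‖F x‖ := by
  have a := summable_geometric_of_lt_one (norm_nonneg _) h1
  refine Summable.of_nonneg_of_le (fun _ => norm_nonneg _) ?_
    (a.mul_of_nonneg a (fun _ => by positivity) (fun _ => by positivity))
  rintro ⟨m, j⟩
  rw [hF, ← pow_add]
  exact pow_le_pow_of_le_one (norm_nonneg _) h1.le (he m j)

def Kd (y : ℂ) (x : ℕ × ℕ) : ℂ := (-1) ^ x.2 * y ^ ((4 * x.1 + 2) * (x.1 + 1 + x.2))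
def Ld (y : ℂ) (x : ℕ × ℕ) : ℂ := (-1) ^ x.2 * y ^ ((2 * x.1 + 1) * (2 * x.2 + 1))
def Hd (y : ℂ) (x : ℕ × ℕ) : ℂ := (-1) ^ x.1 * y ^ ((x.1 + 1 + x.2) ^ 2 - x.1 ^ 2 - x.1)

lemma Kd_summ {y : ℂ} (h1 : ‖y‖ < 1) : Summable fun x => ‖Kd y x‖ :=
  summ_nn h1 (e := fun m j => (4 * m + 2) * (m + 1 + j)) (fun m j => by nlinarith [Nat.zero_le (m * m), Nat.zero_le (m * j)])
    (fun m j => by simp [Kd])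

lemma Ld_summ {y : ℂ} (h1 : ‖y‖ < 1) : Summable fun x => ‖Ld y x‖ :=
  summ_nn h1 (e := fun m j => (2 * m + 1) * (2 * j + 1)) (fun m j => by nlinarith [Nat.zero_le (m * j)])
    (fun m j => by simp [Ld])

lemma Hd_exp (j k : ℕ) : (j + 1 + k) ^ 2 - j ^ 2 - j = j + 1 + 2 * k * (j + 1) + k ^ 2 := by
  have : (j + 1 + k) ^ 2 = j + 1 + 2 * k * (j + 1) + k ^ 2 + j + j ^ 2 := by ring
  rw [this]; omega

lemma Hd_summ {y : ℂ} (h1 : ‖y‖ < 1) : Summable fun x => ‖Hd y x‖ :=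
  summ_nn h1 (e := fun j k => (j + 1 + k) ^ 2 - j ^ 2 - j) (fun m j => by
      rw [Hd_exp]; nlinarith [Nat.zero_le (m * j), Nat.zero_le (j * j)])
    (fun m j => by simp [Hd])

lemma Kd_tsum {y : ℂ} (h1 : ‖y‖ < 1) : ∑' x, Kd y x = Kf (y ^ 2) := by
  rw [(Kd_summ h1).of_norm.tsum_prod, Kf]
  refine tsum_congr fun m => ?_
  have e : ∀ j : ℕ, Kd y (m, j) = (y ^ 2) ^ ((2 * m + 1) * (m + 1)) * (-(y ^ 2) ^ (2 * m + 1)) ^ j := by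
    intro j
    simp only [Kd]
    rw [neg_pow (_ ^ (2 * m + 1)), ← pow_mul, ← pow_mul, ← pow_mul,
      show (4 * m + 2) * (m + 1 + j) = 2 * ((2 * m + 1) * (m + 1)) + 2 * (2 * m + 1) * j by ring, pow_add]
    ring
  rw [tsum_congr e, tsum_mul_left, tsum_geometric_of_norm_lt_one, sub_neg_eq_add, div_eq_mul_inv]
  rw [norm_neg, ← pow_mul]
  exact pow_norm_lt h1 (by omega)

lemma Ld_tsum {y : ℂ} (h1 : ‖y‖ < 1) : ∑' x, Ld y x = Lf y := by
  rw [(Ld_summ h1).of_norm.tsum_prod, Lf]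
  refine tsum_congr fun m => ?_
  have e : ∀ j : ℕ, Ld y (m, j) = y ^ (2 * m + 1) * (-y ^ (2 * (2 * m + 1))) ^ j := by
    intro j
    simp only [Ld]
    rw [neg_pow (_ ^ (2 * (2 * m + 1))), ← pow_mul,
      show (2 * m + 1) * (2 * j + 1) = (2 * m + 1) + 2 * (2 * m + 1) * j by ring, pow_add]
    ring
  rw [tsum_congr e, tsum_mul_left, tsum_geometric_of_norm_lt_one, sub_neg_eq_add, div_eq_mul_inv]
  rw [norm_neg]
  exact pow_norm_lt h1 (by omega)

lemma psS_summ {y : ℂ} (h1 : ‖y‖ < 1) : Summable fun n : ℕ => ‖y ^ (n ^ 2 + n)‖ := by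
  refine Summable.of_nonneg_of_le (fun _ => norm_nonneg _) (fun n => ?_) (summable_geometric_of_lt_one (norm_nonneg _) h1)
  rw [norm_pow]
  exact pow_le_pow_of_le_one (norm_nonneg _) h1.le (by nlinarith)

lemma psS_tsum {y : ℂ} (h0 : y ≠ 0) (h1 : ‖y‖ < 1) : ∑' n : ℕ, y ^ (n ^ 2 + n) = Psi (y ^ 2) := by
  have a := ps2_Psi h0 h1
  have e1 : ∀ n : ℕ, y ^ ((n : ℤ) ^ 2 + n) = y ^ (n ^ 2 + n) := fun n => by exact_mod_cast zpow_natCast y (n ^ 2 + n)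
  have e2 : ∀ n : ℕ, y ^ ((-((n : ℤ) + 1)) ^ 2 + -((n : ℤ) + 1)) = y ^ (n ^ 2 + n) := fun n => by
    rw [← e1]; congr 1; ring
  have s := (psS_summ h1).of_norm
  rw [ps2, tsum_of_nat_of_neg_add_one (f := fun n : ℤ => y ^ (n ^ 2 + n)) (by simpa only [e1] using s)
    (by simpa only [e2] using s)] at a
  simp only [e1, e2] at a
  linear_combination a / 2

lemma prod3 {ι κ μ : Type*} {A : ι → ℂ} {B : κ → ℂ} {F : μ → ℂ} (hA : Summable fun x => ‖A x‖)
    (hB : Summable fun x => ‖B x‖) (i : ι × κ → μ) (hi : Function.Injective i)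
    (h : ∀ x, F (i x) = A x.1 * B x.2) (hz : ∀ z, F z ≠ 0 → ∃ x, i x = z) :
    Summable F ∧ ∑' z, F z = (∑' x, A x) * ∑' x, B x := by
  have hz' : ∀ z ∉ Set.range i, F z = 0 := fun z hz1 => by
    by_contra h2; exact hz1 (hz z h2)
  have hc : F ∘ i = fun x => A x.1 * B x.2 := funext h
  constructor
  · rw [← hi.summable_iff hz', hc]
    exact (hA.mul_norm hB).of_norm
  · rw [tsum_mul_tsum_of_summable_norm hA hB, ← hc]
    symm
    exact hi.tsum_eq (f := F) (fun z hz1 => hz z hz1)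

/-- triple summand on `ℤ × ℕ × ℤ` -/
def f3 (y : ℂ) (x : ℤ × ℕ × ℤ) : ℂ :=
  (-1) ^ (x.2.2 + x.2.1 + 1) * y ^ (x.1 ^ 2 + (4 * x.2.1 + 2) * x.2.2)

lemma neg_one_zpow_congr {a b : ℤ} (h : (a - b) % 2 = 0) : (-1 : ℂ) ^ a = (-1) ^ b := by
  obtain ⟨k, hk⟩ : ∃ k, a = b + 2 * k := ⟨(a - b) / 2, by omega⟩
  rw [hk, zpow_add₀ (by norm_num), zpow_mul]; norm_num

lemma neg_one_zpow_congr' {a b : ℤ} (h : (a - b) % 2 = 1) : (-1 : ℂ) ^ a = -(-1) ^ b := by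
  rw [neg_one_zpow_congr (a := a) (b := b + 1) (by omega), zpow_add_one₀ (by norm_num)]; ring

lemma F1_lem {y : ℂ} (h0 : y ≠ 0) (h1 : ‖y‖ < 1) :
    Summable (fun x : ℤ × ℕ × ℤ => if (x.2.1 : ℤ) + 1 ≤ x.2.2 then f3 y x else 0) ∧
    ∑' x : ℤ × ℕ × ℤ, (if (x.2.1 : ℤ) + 1 ≤ x.2.2 then f3 y x else 0) = th3 y * Kf (y ^ 2) := by
  rw [th3, ← Kd_tsum h1]
  refine prod3 (th3_summ h0 h1) (Kd_summ h1) (fun x => (x.1, x.2.1, (x.2.1 : ℤ) + 1 + x.2.2)) ?_ ?_ ?_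
  · rintro ⟨a, m, j⟩ ⟨b, n, k⟩ h
    simp only [Prod.mk.injEq] at h ⊢
    omega
  · rintro ⟨a, m, j⟩
    simp only [f3, Kd]
    rw [if_pos (by omega), zpow_add₀ h0, ← zpow_natCast, ← zpow_natCast,
      neg_one_zpow_congr (a := (m : ℤ) + 1 + j + m + 1) (b := (j : ℕ)) (by omega)]
    push_cast; ring
  · rintro ⟨a, m, n⟩ h
    have : (m : ℤ) + 1 ≤ n := by
      by_contra h2; exact h (if_neg h2)
    exact ⟨(a, m, (n - m - 1).toNat), by simp only [Prod.mk.injEq, true_and]; omega⟩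

lemma F2_lem {y : ℂ} (h0 : y ≠ 0) (h1 : ‖y‖ < 1) :
    Summable (fun x : ℤ × ℕ × ℤ => if (x.2.1 : ℤ) + 1 ≤ x.2.2 + x.1 then f3 y x else 0) ∧
    ∑' x : ℤ × ℕ × ℤ, (if (x.2.1 : ℤ) + 1 ≤ x.2.2 + x.1 then f3 y x else 0) = -(th4 y * Lf y) := by
  have h4 : Summable fun n : ℤ => ‖-((-1) ^ n * y ^ (n ^ 2))‖ := by
    simpa only [norm_neg] using th4_summ h0 h1
  rw [th4, ← Ld_tsum h1, ← neg_mul, ← tsum_neg]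
  refine prod3 h4 (Ld_summ h1) (fun x => (x.1 + 2 * x.2.1 + 1, x.2.1, (x.2.2 : ℤ) - x.2.1 - x.1)) ?_ ?_ ?_
  · rintro ⟨a, m, j⟩ ⟨b, n, k⟩ h
    simp only [Prod.mk.injEq] at h ⊢
    omega
  · rintro ⟨b, m, j⟩
    simp only [f3, Ld]
    rw [if_pos (by omega), ← zpow_natCast, ← zpow_natCast,
      neg_one_zpow_congr' (a := (j : ℤ) - m - b + m + 1) (b := b + (j : ℕ)) (by omega),
      show (b + 2 * (m : ℤ) + 1) ^ 2 + (4 * m + 2) * (j - m - b) = b ^ 2 + ((2 * m + 1) * (2 * j + 1) : ℕ) by push_cast; ring,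
      zpow_add₀ h0, zpow_add₀ (by norm_num)]
    ring
  · rintro ⟨a, m, n⟩ h
    have : (m : ℤ) + 1 ≤ n + a := by
      by_contra h2; exact h (if_neg h2)
    exact ⟨(a - 2 * m - 1, m, (n + a - m - 1).toNat), by simp only [Prod.mk.injEq, true_and]; omega⟩

def idx3 (x : (ℕ × ℕ) × ℕ) : ℤ × ℕ × ℤ :=
  if (x.1.1 + x.2) % 2 = 0 then (x.1.1 + 1 + x.1.2, (x.2 + x.1.1) / 2, ((x.2 : ℤ) - x.1.1) / 2)
  else if x.1.1 < x.2 then (x.1.1 + 1 + x.1.2, (x.2 - x.1.1 - 1) / 2, ((x.2 : ℤ) + x.1.1 + 1) / 2)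
  else (x.1.1 + 1 + x.1.2, (x.1.1 - x.2 - 1) / 2, (-(x.2 : ℤ) - x.1.1 - 1) / 2)

def FPp (y : ℂ) (x : ℤ × ℕ × ℤ) : ℂ := if (x.2.1 : ℤ) + 1 ≤ x.2.2 ∧ x.2.2 ≤ x.2.1 + x.1 then f3 y x else 0
def FP (y : ℂ) (x : ℤ × ℕ × ℤ) : ℂ := if (x.2.1 : ℤ) + 1 ≤ x.2.2 ∧ x.2.2 + x.1 ≤ x.2.1 then f3 y x else 0
def FN (y : ℂ) (x : ℤ × ℕ × ℤ) : ℂ := if x.2.2 ≤ x.2.1 ∧ (x.2.1 : ℤ) + 1 ≤ x.2.2 + x.1 then f3 y x else 0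
def F3 (y : ℂ) (x : ℤ × ℕ × ℤ) : ℂ := FPp y x - FN y x
def negE : ℤ × ℕ × ℤ ≃ ℤ × ℕ × ℤ := (Equiv.neg ℤ).prodCongr (Equiv.refl _)

set_option maxHeartbeats 1000000 in
lemma F3_lem {y : ℂ} (h0 : y ≠ 0) (h1 : ‖y‖ < 1) :
    ∑' x, F3 y x = (∑' x, Hd y x) * Psi (y ^ 2) := by
  rw [← psS_tsum h0 h1]
  refine (prod3 (Hd_summ h1) (psS_summ h1) idx3 ?_ ?_ ?_).2
  · rintro ⟨⟨j, k⟩, c⟩ ⟨⟨j', k'⟩, c'⟩ h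
    simp only [idx3] at h
    split_ifs at h <;> simp only [Prod.mk.injEq] at h ⊢ <;> omega
  · rintro ⟨⟨j, k⟩, c⟩
    have key : ∀ (m : ℕ) (n : ℤ) (s : ℤ), (s - j) % 2 = 0 → (4 * (m : ℤ) + 2) * n = c ^ 2 + c - j ^ 2 - j →
        (-1 : ℂ) ^ s * y ^ (((j : ℤ) + 1 + k) ^ 2 + (4 * m + 2) * n) = Hd y (j, k) * y ^ (c ^ 2 + c) := by
      intro m n s hs he
      simp only [Hd]
      rw [neg_one_zpow_congr hs, zpow_natCast, he, Hd_exp, mul_assoc, ← pow_add, ← zpow_natCast y]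
      congr 2
      push_cast; ring
    simp only [idx3]
    split_ifs with h h'
    · obtain ⟨m, hm⟩ : ∃ m : ℕ, m = (c + j) / 2 := ⟨_, rfl⟩
      obtain ⟨n, hn⟩ : ∃ n : ℤ, n = ((c : ℤ) - j) / 2 := ⟨_, rfl⟩
      rw [← hm, ← hn]
      simp only [F3, FPp, FN, f3]
      rw [if_neg (by omega), if_pos (by omega), zero_sub, ← neg_mul, ← neg_one_zpow_congr' (a := n + m) (by omega)]
      refine key m n _ (by omega) ?_
      have e1 : (c : ℤ) = m + n := by omega
      have e2 : (j : ℤ) = m - n := by omega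
      rw [e1, e2]; ring
    · obtain ⟨m, hm⟩ : ∃ m : ℕ, m = (c - j - 1) / 2 := ⟨_, rfl⟩
      obtain ⟨n, hn⟩ : ∃ n : ℤ, n = ((c : ℤ) + j + 1) / 2 := ⟨_, rfl⟩
      rw [← hm, ← hn]
      simp only [F3, FPp, FN, f3]
      rw [if_pos (by omega), if_neg (by omega), sub_zero]
      refine key m n _ (by omega) ?_
      have e1 : (c : ℤ) = m + n := by omega
      have e2 : (j : ℤ) = n - m - 1 := by omega
      rw [e1, e2]; ring
    · obtain ⟨m, hm⟩ : ∃ m : ℕ, m = (j - c - 1) / 2 := ⟨_, rfl⟩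
      obtain ⟨n, hn⟩ : ∃ n : ℤ, n = (-(c : ℤ) - j - 1) / 2 := ⟨_, rfl⟩
      rw [← hm, ← hn]
      simp only [F3, FPp, FN, f3]
      rw [if_neg (by omega), if_pos (by omega), zero_sub, ← neg_mul, ← neg_one_zpow_congr' (a := n + m) (by omega)]
      refine key m n _ (by omega) ?_
      have e1 : (c : ℤ) = -m - n - 1 := by omega
      have e2 : (j : ℤ) = m - n := by omega
      rw [e1, e2]; ring
  · rintro ⟨a, m, n⟩ h
    simp only [F3, FPp, FN] at h
    by_cases c1 : (m : ℤ) + 1 ≤ n ∧ n ≤ m + a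
    · refine ⟨(((n - m - 1).toNat, (a - (n - m)).toNat), (m + n).toNat), ?_⟩
      simp only [idx3]
      rw [if_neg (by omega), if_pos (by omega)]
      simp only [Prod.mk.injEq]; omega
    · by_cases c2 : n ≤ m ∧ (m : ℤ) + 1 ≤ n + a
      · by_cases c3 : 0 ≤ m + n
        · refine ⟨(((m - n).toNat, (a - (m - n) - 1).toNat), (m + n).toNat), ?_⟩
          simp only [idx3]
          rw [if_pos (by omega)]
          simp only [Prod.mk.injEq]; omega
        · refine ⟨(((m - n).toNat, (a - (m - n) - 1).toNat), (-m - n - 1).toNat), ?_⟩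
          simp only [idx3]
          rw [if_neg (by omega), if_neg (by omega)]
          simp only [Prod.mk.injEq]; omega
      · rw [if_neg c1, if_neg c2] at h
        simp at h

lemma FPp_eq (y : ℂ) (x : ℤ × ℕ × ℤ) : FPp y x = FP y (negE x) := by
  obtain ⟨a, m, n⟩ := x
  have : negE (a, m, n) = (-a, m, n) := rfl
  rw [this]
  simp only [FPp, FP, f3, neg_sq]
  by_cases h : (m : ℤ) + 1 ≤ n ∧ n ≤ m + a
  · rw [if_pos h, if_pos (by omega)]
  · rw [if_neg h, if_neg (by omega)]

lemma triple {y : ℂ} (h0 : y ≠ 0) (h1 : ‖y‖ < 1) :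
    (∑' x, Hd y x) * Psi (y ^ 2) = th3 y * Kf (y ^ 2) + th4 y * Lf y := by
  obtain ⟨s1, t1⟩ := F1_lem h0 h1
  obtain ⟨s2, t2⟩ := F2_lem h0 h1
  have sP : Summable (FP y) := by
    refine (s1.indicator {x : ℤ × ℕ × ℤ | x.2.2 + x.1 ≤ x.2.1}).congr fun x => ?_
    simp only [Set.indicator, Set.mem_setOf_eq, ← ite_and, and_comm, FP]
  have sN : Summable (FN y) := by
    refine (s2.indicator {x : ℤ × ℕ × ℤ | x.2.2 ≤ x.2.1}).congr fun x => ?_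
    simp only [Set.indicator, Set.mem_setOf_eq, ← ite_and, FN]
  have hE : FPp y = FP y ∘ negE := funext (FPp_eq y)
  have sP' : Summable (FPp y) := by
    rw [hE]; exact negE.summable_iff.2 sP
  have e2 : ∑' x, FPp y x = ∑' x, FP y x := by
    rw [hE]; exact negE.tsum_eq (FP y)
  have e1 : ∑' x, F3 y x = (∑' x, FPp y x) - ∑' x, FN y x := Summable.tsum_sub sP' sN
  have e3 : (∑' x, FP y x) - ∑' x, FN y x = _ - _ := (Summable.tsum_sub sP sN).symm.trans
    (Eq.trans (tsum_congr fun x => ?_) (Summable.tsum_sub s1 s2))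
  · rw [← F3_lem h0 h1, e1, e2, e3, t1, t2]; ring
  · obtain ⟨a, m, n⟩ := x
    simp only [FP, FN]
    split_ifs <;> first | omega | simp


lemma neg_zpow_sq (y : ℂ) (n : ℤ) : (-y) ^ (n ^ 2) = (-1) ^ n * y ^ (n ^ 2) := by
  rw [← neg_one_mul, mul_zpow]
  congr 1
  apply neg_one_zpow_congr
  have h : n ^ 2 - n = n * (n - 1) := by ring
  rw [h]
  exact Int.even_iff.1 (Int.even_mul_pred_self n)

lemma th3_neg (y : ℂ) : th3 (-y) = th4 y := by
  rw [th3, th4]; exact tsum_congr fun n => neg_zpow_sq y n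

lemma th4_neg (y : ℂ) : th4 (-y) = th3 y := by
  rw [← th3_neg (-y), neg_neg]

lemma Lf_neg (y : ℂ) : Lf (-y) = - Lf y := by
  rw [Lf, Lf, ← tsum_neg]
  refine tsum_congr fun n => ?_
  rw [Odd.neg_pow (odd_two_mul_add_one n), Even.neg_pow (even_two_mul _), neg_div]

lemma Psi_J {Q : ℂ} (h1 : ‖Q‖ < 1) : Psi Q = pinf (Q ^ 2) (Q ^ 2) ^ 2 / pinf Q Q := by
  have hp := norm_sq_lt h1
  have a := pinf_even_odd Q h1
  have n1 : pinf Q (Q ^ 2) ≠ 0 := pinf_ne_zero hp (ne_one_of_norm hp h1)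
  have n2 : pinf (Q ^ 2) (Q ^ 2) ≠ 0 := pinf_ne_zero hp (ne_one_of_norm hp hp)
  rw [← sq] at a
  rw [Psi, a]; field_simp

lemma th4_J {t : ℂ} (h0 : t ≠ 0) (h1 : ‖t‖ < 1) : th4 t = pinf t t ^ 2 / pinf (t ^ 2) (t ^ 2) := by
  have hp := norm_sq_lt h1
  have a := pinf_even_odd t h1
  have n2 : pinf (t ^ 2) (t ^ 2) ≠ 0 := pinf_ne_zero hp (ne_one_of_norm hp hp)
  rw [← sq] at a
  rw [th4_prod h0 h1, a]; field_simp

lemma J_ne {t : ℂ} (h1 : ‖t‖ < 1) : pinf t t ≠ 0 := pinf_ne_zero h1 (ne_one_of_norm h1 h1)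

lemma core {y : ℂ} (h0 : y ≠ 0) (h1 : ‖y‖ < 1) :
    28 * y * Psi (y ^ 2) ^ 4 + th4 (y ^ 2) ^ 4 + 48 * y ^ 2 * Psi (y ^ 4) ^ 4 +
      4 * pinf (y ^ 2) (y ^ 2) ^ 3 * (Af (y ^ 2) + (∑' x, Hd (-y) x) / th4 y) = Ef y := by
  have hy2 := norm_sq_lt h1
  have h02 : y ^ 2 ≠ 0 := pow_ne_zero 2 h0
  have hn0 : -y ≠ 0 := neg_ne_zero.2 h0
  have hn1 : ‖-y‖ < 1 := by rwa [norm_neg]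
  have J2 := J_ne hy2
  have J4 := J_ne (norm_sq_lt hy2)
  have nP : Psi (y ^ 2) ≠ 0 := by rw [Psi_J hy2]; exact div_ne_zero (pow_ne_zero 2 J4) J2
  have n4 : th4 y ≠ 0 := by
    rw [th4_J h0 h1]; exact div_ne_zero (pow_ne_zero 2 (J_ne h1)) J2
  have S1 := Sf_prod h0 h1
  have S2 := Sf_prod h02 hy2
  rw [← pow_mul] at S2
  norm_num at S2
  have L2 := Lf_sq h0 h1
  have SL := Sf_Lf h0 h1
  have a3 := th3_sq h0 h1
  have a4 := th3_sq hn0 hn1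
  rw [th3_neg, neg_sq, Lf_neg] at a4
  have t2 := T2 h0 h1
  have tr := triple hn0 hn1
  rw [th3_neg, th4_neg, neg_sq, Lf_neg] at tr
  have e1 : pinf (y ^ 2) (y ^ 2) ^ 3 = th3 y * th4 y * Psi (y ^ 2) := by
    rw [t2, th4_J h02 hy2, Psi_J hy2]
    generalize pinf ((y ^ 2) ^ 2) ((y ^ 2) ^ 2) = b at J4 ⊢
    field_simp
  have e2 : pinf (y ^ 2) (y ^ 2) ^ 3 * (Af (y ^ 2) + (∑' x, Hd (-y) x) / th4 y) = - th3 y ^ 2 * Lf y := by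
    rw [e1, Af_eq h02 hy2]
    field_simp
    linear_combination (th3 y) * tr
  rw [Ef_eq h0 h1]
  have e3 : th4 (y ^ 2) ^ 4 = th3 y ^ 2 * th4 y ^ 2 := by
    rw [← mul_pow, t2]; ring
  rw [mul_assoc 4, e2, e3, mul_assoc 28, ← S1, mul_assoc 48, ← S2, ← L2, show th3 y ^ 4 = (th3 y ^ 2) ^ 2 by ring,
    SL, a3, a4]
  ring

lemma nome_mul (k : ℕ) (τ : ℂ) : nome (k * τ) = nome τ ^ k := by
  rw [nome, nome, ← Complex.exp_nat_mul]; congr 1; ring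

lemma nome_ne (τ : ℂ) : nome τ ≠ 0 := Complex.exp_ne_zero _

lemma nome_lt {τ : ℂ} (h : 0 < τ.im) : ‖nome τ‖ < 1 := by
  rw [nome, Complex.norm_exp, Real.exp_lt_one_iff]
  have : (2 * (π : ℂ) * I * τ).re = - (2 * π * τ.im) := by simp
  rw [this]
  have := Real.pi_pos
  have : 0 < 2 * π * τ.im := by positivity
  linarith

lemma eta_J (τ : ℂ) : dedekindEta τ = Complex.exp ((π : ℂ) * I * τ / 12) * pinf (nome τ) (nome τ) := by
  rw [dedekindEta, pinf]
  congr 1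
  exact tprod_congr fun n => by rw [pow_succ']

lemma Mser_eq {q : ℂ} (h0 : q ≠ 0) : q * Mser q = Af (q ^ 8) := by
  rw [Mser, mul_inv_cancel_left₀ h0, Af]
  refine tsum_congr fun n => ?_
  have e : ∀ k : ℕ, q ^ (16 * (k + 1) - 8) = q ^ 8 * ((q ^ 8) ^ 2) ^ k := by
    intro k
    rw [← pow_mul, ← pow_mul, ← pow_add]; congr 1; omega
  rw [Finset.prod_pow, pfin, pfin, ← pow_mul]
  simp only [e, neg_mul, sub_neg_eq_add]

lemma Fser_eq {q : ℂ} (h1 : ‖q‖ < 1) : q * Fser 0 q = ∑' x, Hd (-q ^ 4) x := by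
  have h4 : ‖-q ^ 4‖ < 1 := by rw [norm_neg]; exact pow_norm_lt h1 (by norm_num)
  rw [(Hd_summ h4).of_norm.tsum_prod, Fser, ← tsum_mul_left]
  refine tsum_congr fun b => ?_
  rw [← tsum_mul_left]
  refine tsum_congr fun k => ?_
  simp only [Hd, Hd_exp, pow_zero, mul_one]
  have e : 4 * (b + 1 + k) ^ 2 - (2 * b + 1) ^ 2 + 1 = 4 * (b + 1 + 2 * k * (b + 1) + k ^ 2) := by
    have : 4 * (b + 1 + k) ^ 2 = 4 * (b + 1 + 2 * k * (b + 1) + k ^ 2) - 1 + (2 * b + 1) ^ 2 := by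
      have : 4 * (b + 1 + 2 * k * (b + 1) + k ^ 2) = (4 * b + 3 + 8 * k * (b + 1) + 4 * k ^ 2) + 1 := by ring
      rw [this, Nat.add_sub_cancel]; ring
    rw [this, Nat.add_sub_cancel, Nat.sub_add_cancel]
    omega
  rw [neg_pow (q ^ 4), ← pow_mul, ← e, pow_succ q]
  have s : (-1 : ℂ) ^ (b + 1 + k + b) = (-1) ^ b * (-1) ^ (b + 1 + 2 * k * (b + 1) + k ^ 2) := by
    rw [← pow_add, ← zpow_natCast, ← zpow_natCast]
    apply neg_one_zpow_congr
    have hk : ((k : ℤ) - k ^ 2) % 2 = 0 := by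
      rw [show (k : ℤ) - k ^ 2 = -(k * (k - 1)) by ring]
      exact Int.even_iff.1 (Int.even_mul_pred_self _).neg
    push_cast
    rw [show (b : ℤ) + 1 + k + b - (b + (b + 1 + 2 * k * (b + 1) + k ^ 2)) = (k - k ^ 2) - 2 * (k * (b + 1)) by ring]
    omega
  rw [s]; ring

/-- For `τ ∈ ℍ`: `𝒬(q) + 4ℱ₀(q)/Θ₄(τ) = E*(4τ)/η(8τ)³`, with
`𝒬(q) = 28η(16τ)⁸/η(8τ)⁷ + η(8τ)⁵/η(16τ)⁴ + 48η(32τ)⁸/(η(8τ)³η(16τ)⁴) + 4M(q)`. -/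
theorem stmt8 (τ : ℂ) (hτ : 0 < τ.im) :
    28 * dedekindEta (16 * τ) ^ 8 / dedekindEta (8 * τ) ^ 7 +
        dedekindEta (8 * τ) ^ 5 / dedekindEta (16 * τ) ^ 4 +
        48 * dedekindEta (32 * τ) ^ 8 /
          (dedekindEta (8 * τ) ^ 3 * dedekindEta (16 * τ) ^ 4) +
        4 * Mser (nome τ) + 4 * Fser 0 (nome τ) / Theta4 τ =
      Estar (4 * τ) / dedekindEta (8 * τ) ^ 3 := by
  obtain ⟨q, hq⟩ : ∃ q, q = nome τ := ⟨_, rfl⟩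
  have h0 : q ≠ 0 := hq ▸ nome_ne τ
  have h1 : ‖q‖ < 1 := hq ▸ nome_lt hτ
  obtain ⟨c, hc⟩ : ∃ c, c = Complex.exp ((π : ℂ) * I * (8 * τ) / 12) := ⟨_, rfl⟩
  have hc0 : c ≠ 0 := hc ▸ Complex.exp_ne_zero _
  have hc3 : c ^ 3 = q := by
    rw [hc, hq, nome, ← Complex.exp_nat_mul]; congr 1; push_cast; ring
  have y0 : q ^ 4 ≠ 0 := pow_ne_zero _ h0
  have y1 : ‖q ^ 4‖ < 1 := pow_norm_lt h1 (by norm_num)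
  have n8 : nome (8 * τ) = q ^ 8 := by rw [hq]; exact_mod_cast nome_mul 8 τ
  have n16 : nome (16 * τ) = q ^ 16 := by rw [hq]; exact_mod_cast nome_mul 16 τ
  have n32 : nome (32 * τ) = q ^ 32 := by rw [hq]; exact_mod_cast nome_mul 32 τ
  have n4 : nome (4 * τ) = q ^ 4 := by rw [hq]; exact_mod_cast nome_mul 4 τ
  have E8 : dedekindEta (8 * τ) = c * pinf (q ^ 8) (q ^ 8) := by rw [eta_J, n8, hc]
  have E16 : dedekindEta (16 * τ) = c ^ 2 * pinf (q ^ 16) (q ^ 16) := by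
    rw [eta_J, n16, hc, ← Complex.exp_nat_mul]; congr 2; push_cast; ring
  have E32 : dedekindEta (32 * τ) = c ^ 4 * pinf (q ^ 32) (q ^ 32) := by
    rw [eta_J, n32, hc, ← Complex.exp_nat_mul]; congr 2; push_cast; ring
  have ET : Theta4 τ = th4 (q ^ 4) := by
    rw [th4_nat y0 y1, Theta4, ← hq]; simp only [pow_mul]
  have EE : Estar (4 * τ) = Ef (q ^ 4) := by rw [Estar, n4, Estar_aux y1]
  have EM := Mser_eq h0
  have EF := Fser_eq h1
  have J8 := J_ne (pow_norm_lt h1 (k := 8) (by norm_num))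
  have J16 := J_ne (pow_norm_lt h1 (k := 16) (by norm_num))
  have J32 := J_ne (pow_norm_lt h1 (k := 32) (by norm_num))
  have nT : th4 (q ^ 4) ≠ 0 := by
    rw [th4_J y0 y1]
    refine div_ne_zero (pow_ne_zero 2 (J_ne y1)) ?_
    simpa only [← pow_mul] using J8
  have C := core y0 y1
  simp only [← pow_mul] at C
  norm_num only at C
  have P8 : Psi (q ^ 8) = pinf (q ^ 16) (q ^ 16) ^ 2 / pinf (q ^ 8) (q ^ 8) := by
    rw [Psi_J (pow_norm_lt h1 (by norm_num)), ← pow_mul]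
  have P16 : Psi (q ^ 16) = pinf (q ^ 32) (q ^ 32) ^ 2 / pinf (q ^ 16) (q ^ 16) := by
    rw [Psi_J (pow_norm_lt h1 (by norm_num)), ← pow_mul]
  have T8 : th4 (q ^ 8) = pinf (q ^ 8) (q ^ 8) ^ 2 / pinf (q ^ 16) (q ^ 16) := by
    rw [th4_J (pow_ne_zero _ h0) (pow_norm_lt h1 (by norm_num)), ← pow_mul]
  rw [P8, P16, T8, ← EM, ← EF] at C
  rw [ET, EE, ← hq, E8, E16, E32, ← C]
  generalize pinf (q ^ 8) (q ^ 8) = a at *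
  generalize pinf (q ^ 16) (q ^ 16) = b at *
  generalize pinf (q ^ 32) (q ^ 32) = d at *
  generalize th4 (q ^ 4) = t at *
  generalize Mser q = m at *
  generalize Fser 0 q = f at *
  clear EM EF E8 E16 E32 n8 n16 n32 n4 ET EE C P8 P16 T8 hc hq y1 h1 y0
  subst hc3
  field_simp
  ring
end
end

section
/- For every τ in the complex upper half-plane ℍ, one has 16·Θ₂(τ)⁴ + Θ₃(τ)⁴ = E*(4τ). -/
noncomputable section
open Complex Real

/-- `Θ₂(τ) = Σ_{n≥0} q^{(2n+1)²}`. -/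
def Theta2 (τ : ℂ) : ℂ := ∑' n : ℕ, nome τ ^ ((2 * n + 1) ^ 2)

/-- `Θ₃(τ) = 1 + 2 Σ_{n≥1} q^{4n²}`. -/
def Theta3 (τ : ℂ) : ℂ := 1 + 2 * ∑' n : ℕ, nome τ ^ (4 * (n + 1) ^ 2)

open UpperHalfPlane hiding I
open MatrixGroups ModularForm Filter Topology

/-- The filter of points of `ℂ` with imaginary part tending to infinity. -/
def imInf : Filter ℂ := comap Complex.im atTop

theorem slash_T_apply' (f : ℍ → ℂ) (k : ℤ) (z : ℍ) :
    (f ∣[k] ModularGroup.T) z = f ((1 : ℝ) +ᵥ z) := by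
  rw [SL_slash_apply, modular_T_smul]
  have h : denom ModularGroup.T z = 1 := by
    rw [ModularGroup.denom_apply]
    simp [ModularGroup.T]
  rw [h]
  simp

theorem im_neg_one_div_pos {t : ℂ} (ht : 0 < t.im) : 0 < (-1 / t).im := by
  have h := UpperHalfPlane.im_inv_neg_coe_pos ⟨t, ht⟩
  have : -1 / t = (-t)⁻¹ := by rw [neg_div, one_div, inv_neg]
  rw [this]; exact h

theorem weight_six_zero (F : ℂ → ℂ) (hd : DifferentiableOn ℂ F {z | 0 < z.im})
    (hT : ∀ t : ℂ, 0 < t.im → F (t + 1) = F t)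
    (hS : ∀ t : ℂ, 0 < t.im → F (-1 / t) = t ^ 6 * F t)
    (hz : Tendsto F imInf (𝓝 0)) : ∀ t : ℂ, 0 < t.im → F t = 0 := by
  let G : ℍ → ℂ := fun z => F z
  have hGS : G ∣[(6:ℤ)] ModularGroup.S = G := by
    ext z
    rw [SlashInvariantForm.slash_S_apply]
    have h := hS z z.2
    have h0 : (z:ℂ) ≠ 0 := UpperHalfPlane.ne_zero z
    have : (-(z:ℂ))⁻¹ = -1 / z := by rw [neg_div, one_div, inv_neg]
    simp only [G]
    rw [UpperHalfPlane.coe_mk, this, h, zpow_neg]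
    have : (z:ℂ) ^ (6:ℤ) = (z:ℂ)^6 := by norm_cast
    rw [this]
    field_simp
  have hGT : G ∣[(6:ℤ)] ModularGroup.T = G := by
    ext z
    rw [slash_T_apply']
    simp only [G, UpperHalfPlane.coe_vadd]
    rw [add_comm]
    simpa using hT z z.2
  have hGA := SlashInvariantForm.slash_action_generators_SL2Z hGS hGT
  have hG0 : IsZeroAtImInfty G := by
    have : Tendsto (fun z : ℍ => (z:ℂ)) atImInfty imInf := by
      rw [imInf, tendsto_comap_iff]
      exact tendsto_comap
    exact hz.comp this
  let C : CuspForm 𝒮ℒ 6 :=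
  { toFun := G
    slash_action_eq' := by
      intro A hA
      obtain ⟨A, rfl⟩ := hA
      exact hGA A
    holo' := by
      rw [UpperHalfPlane.mdifferentiable_iff]
      refine hd.congr fun z hz ↦ ?_
      simp [G, ofComplex_apply_of_im_pos hz]
    zero_at_cusps' := by
      intro c hc
      rw [Subgroup.IsArithmetic.isCusp_iff_isCusp_SL2Z] at hc
      rw [OnePoint.isZeroAt_iff_forall_SL2Z hc]
      intro γ _
      rw [hGA γ]
      exact hG0 }
  have hC : C = 0 := by
    have := CuspForm.rank_eq_zero_of_weight_lt_twelve (k := 6) (by norm_num)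
    exact rank_zero_iff_forall_zero.mp this C
  intro t ht
  have : C ⟨t, ht⟩ = 0 := by rw [hC]; rfl
  exact this

theorem key_zero (f g : ℂ → ℂ) (hf : DifferentiableOn ℂ f {z | 0 < z.im})
    (hg : DifferentiableOn ℂ g {z | 0 < z.im})
    (ha : ∀ t : ℂ, 0 < t.im → f (t + 1) = f t)
    (hb : ∀ t : ℂ, 0 < t.im → g (t + 2) = g t)
    (hc : ∀ t : ℂ, 0 < t.im → f (-1 / t) = t ^ 2 * g t)
    (hf0 : Tendsto f imInf (𝓝 0)) {c d : ℂ} (hg0 : Tendsto g imInf (𝓝 c))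
    (hg1 : Tendsto (fun t => g (t + 1)) imInf (𝓝 d)) :
    ∀ t : ℂ, 0 < t.im → f t = 0 := by
  have ho : IsOpen {z : ℂ | 0 < z.im} := isOpen_lt continuous_const Complex.continuous_im
  have hp : IsPreconnected {z : ℂ | 0 < z.im} := (convex_halfSpace_im_gt 0).isPreconnected
  have hg' : DifferentiableOn ℂ (fun t => g (t + 1)) {z | 0 < z.im} := by
    refine hg.comp (by fun_prop) ?_
    intro z hz
    simpa using hz
  have hne : ∀ t : ℂ, 0 < t.im → t ≠ 0 := by
    rintro t ht rfl; simp at ht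
  have hc' : ∀ t : ℂ, 0 < t.im → g (-1 / t) = t ^ 2 * f t := by
    intro t ht
    have := hc _ (im_neg_one_div_pos ht)
    have h0 := hne t ht
    rw [show -1 / (-1 / t) = t by field_simp] at this
    rw [this]; field_simp
  have hprod := weight_six_zero (fun t => f t * (g t * g (t + 1))) (hf.mul (hg.mul hg'))
    (by
      intro t ht
      rw [ha t ht, show t + 1 + 1 = t + 2 by ring, hb t ht]; ring)
    (by
      intro t ht
      have h0 := hne t ht
      have key : g (-1 / t + 1) = t ^ 2 * g (t + 1) := by
        have h1 : 0 < (t - 1).im := by simpa using ht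
        have h10 := hne _ h1
        have e1 : -1 / t + 1 = -1 / (-1 / (t - 1) - 1) := by
          have : -1 / (t - 1) - 1 = - t / (t - 1) := by field_simp; ring
          rw [this]; field_simp; ring
        have h2 : 0 < (-1 / (t - 1) - 1).im := by simpa using im_neg_one_div_pos h1
        rw [e1, hc' _ h2]
        have := ha _ h2
        rw [sub_add_cancel, hc _ h1] at this
        rw [← this, ← hb (t - 1) h1]
        rw [show t - 1 + 2 = t + 1 by ring]
        field_simp
        ring
      rw [hc t ht, hc' t ht, key]; ring)
    (by simpa using hf0.mul (hg0.mul hg1))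
  have hA := AnalyticOnNhd.eq_zero_or_eq_zero_of_mul_eq_zero (hf.analyticOnNhd ho)
    ((hg.mul hg').analyticOnNhd ho) (fun z hz => hprod z hz) hp
  have fin : (∀ t : ℂ, 0 < t.im → g t = 0) → ∀ t : ℂ, 0 < t.im → f t = 0 := by
    intro h t ht
    have := hc' t ht
    rw [h _ (im_neg_one_div_pos ht)] at this
    have h0 := hne t ht
    simpa [h0] using this.symm
  rcases hA with h | h
  · exact fun t ht => h t ht
  · have hB := AnalyticOnNhd.eq_zero_or_eq_zero_of_mul_eq_zero (hg.analyticOnNhd ho)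
      (hg'.analyticOnNhd ho) (fun z hz => h z hz) hp
    rcases hB with h | h
    · exact fin fun t ht => h t ht
    · refine fin fun t ht => ?_
      have := h (t - 1) (by simpa using ht)
      simpa using this

theorem nome_pow (τ : ℂ) (n : ℕ) : nome τ ^ n = Complex.exp (2 * (π : ℂ) * I * τ * n) := by
  rw [nome, ← Complex.exp_nat_mul]; congr 1; ring

theorem summable_nome_odd {τ : ℂ} (hτ : 0 < τ.im) :
    jacobiTheta (2 * τ) = jacobiTheta (8 * τ) + 2 * Theta2 τ := by
  have h2 : 0 < (2 * τ).im := by simpa using hτ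
  have h8 : 0 < (8 * τ).im := by simpa using hτ
  have A := hasSum_nat_jacobiTheta h2
  have B := hasSum_nat_jacobiTheta h8
  have hsum : Summable (fun n : ℕ => nome τ ^ ((2 * n + 1) ^ 2)) := by
    have := A.summable.comp_injective (i := fun n : ℕ => 2 * n) (fun a b h => by simpa using h)
    refine this.congr fun n => ?_
    rw [nome_pow]
    simp only [Function.comp]
    congr 1
    push_cast
    ring
  have C : HasSum (fun n : ℕ => nome τ ^ ((2 * n + 1) ^ 2)) (Theta2 τ) := hsum.hasSum
  have D := HasSum.even_add_odd (f := fun n : ℕ => cexp (π * I * ((n : ℂ) + 1) ^ 2 * (2 * τ)))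
    (m := Theta2 τ) (m' := (jacobiTheta (8 * τ) - 1) / 2)
    (by
      convert C using 2 with n
      rw [nome_pow]
      congr 1
      push_cast
      ring)
    (by
      convert B using 2 with n
      congr 1
      push_cast
      ring)
  have E := A.unique D
  linear_combination 2 * E

theorem Theta3_eq {τ : ℂ} (hτ : 0 < τ.im) : Theta3 τ = jacobiTheta (8 * τ) := by
  have h8 : 0 < (8 * τ).im := by simpa using hτ
  rw [jacobiTheta_eq_tsum_nat h8, Theta3]
  norm_num
  refine tsum_congr fun n => ?_
  rw [nome_pow]
  congr 1
  push_cast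
  ring

theorem nome_add (τ a : ℂ) : nome (τ + a) = nome τ * nome a := by
  rw [nome, nome, nome, ← Complex.exp_add]; congr 1; ring

theorem Theta2_add_half (τ : ℂ) : Theta2 (τ + 1 / 2) = - Theta2 τ := by
  have h : nome (1 / 2) = -1 := by
    rw [nome, show 2 * (π : ℂ) * I * (1 / 2) = π * I by ring, Complex.exp_pi_mul_I]
  rw [Theta2, Theta2, ← tsum_neg]
  refine tsum_congr fun n => ?_
  rw [nome_add, h, mul_pow]
  have : Odd ((2 * n + 1) ^ 2) := by exact Odd.pow (by simp)
  rw [this.neg_one_pow]; ring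

theorem Theta2_add_quarter (τ : ℂ) : Theta2 (τ + 1 / 4) = I * Theta2 τ := by
  have h : nome (1 / 4) = I := by
    rw [nome, show 2 * (π : ℂ) * I * (1 / 4) = π / 2 * I by ring, Complex.exp_pi_div_two_mul_I]
  rw [Theta2, Theta2, ← tsum_mul_left]
  refine tsum_congr fun n => ?_
  rw [nome_add, h, mul_pow]
  have : (2 * n + 1) ^ 2 = 4 * (n ^ 2 + n) + 1 := by ring
  have h : I ^ ((2 * n + 1) ^ 2) = I := by
    rw [this, pow_succ, pow_mul, Complex.I_pow_four, one_pow, one_mul]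
  rw [h]; ring

theorem jT_add_two (s : ℂ) : jacobiTheta (s + 2) = jacobiTheta s := by
  rw [add_comm, jacobiTheta_two_add]

theorem jT_add_one {s : ℂ} (hs : 0 < s.im) :
    jacobiTheta (s + 1) = 2 * jacobiTheta (4 * s) - jacobiTheta s := by
  have h1 := summable_nome_odd (τ := s / 2) (by simpa using hs)
  have h2 := summable_nome_odd (τ := s / 2 + 1 / 2) (by simpa using hs)
  rw [Theta2_add_half, show 2 * (s / 2 + 1 / 2) = s + 1 by ring,
    show 8 * (s / 2 + 1 / 2) = 4 * s + 2 + 2 by ring, jT_add_two, jT_add_two] at h2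
  rw [show 2 * (s / 2) = s by ring, show 8 * (s / 2) = 4 * s by ring] at h1
  linear_combination h2 + h1

theorem jT_S {s : ℂ} (hs : 0 < s.im) :
    jacobiTheta (-1 / s) = (-I * s) ^ (1 / 2 : ℂ) * jacobiTheta s := by
  have h := jacobiTheta_S_smul ⟨s, hs⟩
  rw [UpperHalfPlane.modular_S_smul] at h
  have : -1 / s = (-s)⁻¹ := by rw [neg_div, one_div, inv_neg]
  rw [this]; exact h

theorem half_pow_four (w : ℂ) : (w ^ (1 / 2 : ℂ)) ^ 4 = w ^ 2 := by
  rw [← Complex.cpow_nat_mul]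
  norm_num

theorem jT_S_four {s : ℂ} (hs : 0 < s.im) :
    jacobiTheta (-1 / s) ^ 4 = - s ^ 2 * jacobiTheta s ^ 4 := by
  rw [jT_S hs, mul_pow, half_pow_four, mul_pow, neg_sq, Complex.I_sq]; ring

theorem Theta2_S {s : ℂ} (hs : 0 < s.im) :
    16 * Theta2 (-1 / s / 8) ^ 4 = - s ^ 2 * jacobiTheta (s + 1) ^ 4 := by
  have h1 := summable_nome_odd (τ := -1 / s / 8) (by simpa using im_neg_one_div_pos hs)
  have h4 : 0 < (4 * s).im := by simpa using hs
  have h0 : s ≠ 0 := by rintro rfl; simp at hs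
  rw [show 2 * (-1 / s / 8) = -1 / (4 * s) by field_simp; norm_num,
    show 8 * (-1 / s / 8) = -1 / s by field_simp, jT_S h4, jT_S hs] at h1
  have e : (-I * (4 * s)) ^ (1 / 2 : ℂ) = 2 * (-I * s) ^ (1 / 2 : ℂ) := by
    have hx : -I * s ≠ 0 := by simp [h0]
    have hx4 : -I * (4 * s) ≠ 0 := by simp [h0]
    have hl : Complex.log (-I * (4 * s)) = 2 * (Real.log 2 : ℝ) + Complex.log (-I * s) := by
      rw [show -I * (4 * s) = ((4 : ℝ) : ℂ) * (-I * s) by push_cast; ring,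
        Complex.log_ofReal_mul (by norm_num) hx, show (4 : ℝ) = 2 ^ 2 by norm_num, Real.log_pow]
      push_cast; ring
    rw [Complex.cpow_def_of_ne_zero hx, Complex.cpow_def_of_ne_zero hx4, hl, add_mul,
      Complex.exp_add, show 2 * ((Real.log 2 : ℝ) : ℂ) * (1 / 2) = ((Real.log 2 : ℝ) : ℂ) by ring,
      ← Complex.ofReal_exp, Real.exp_log (by norm_num)]
    norm_num
  rw [e] at h1
  have h2 : 2 * Theta2 (-1 / s / 8) = (-I * s) ^ (1 / 2 : ℂ) * jacobiTheta (s + 1) := by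
    rw [jT_add_one hs]; linear_combination -h1
  have h3 : 16 * Theta2 (-1 / s / 8) ^ 4 = (2 * Theta2 (-1 / s / 8)) ^ 4 := by ring
  rw [h3, h2, mul_pow, half_pow_four, mul_pow, neg_sq, Complex.I_sq]; ring

theorem jT_tendsto : Tendsto jacobiTheta imInf (𝓝 1) := by
  have h := isBigO_at_im_infty_jacobiTheta_sub_one
  have h2 : Tendsto (fun τ : ℂ => rexp (-π * τ.im)) imInf (𝓝 0) := by
    have : Tendsto (fun y : ℝ => rexp (-π * y)) atTop (𝓝 0) := by
      refine Real.tendsto_exp_atBot.comp ?_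
      exact tendsto_id.const_mul_atTop_of_neg (by simpa using Real.pi_pos)
    exact this.comp tendsto_comap
  have h3 := h.trans_tendsto h2
  have h4 := h3.add_const 1
  simp only [sub_add_cancel, zero_add] at h4
  exact h4

theorem tendsto_affine {r : ℝ} (hr : 0 < r) (b : ℝ) :
    Tendsto (fun t : ℂ => (r : ℂ) * t + b) imInf imInf := by
  rw [imInf, tendsto_comap_iff]
  have : Complex.im ∘ (fun t : ℂ => (r : ℂ) * t + b) = (fun y : ℝ => r * y) ∘ Complex.im := by
    ext t; simp
  rw [this]
  exact (tendsto_id.const_mul_atTop hr).comp tendsto_comap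

/-- The weight two Eisenstein series as a function on `ℂ`. -/
def e2 (t : ℂ) : ℂ := EisensteinSeries.E2 (ofComplex t)

theorem e2_hasSum {t : ℂ} (ht : 0 < t.im) :
    HasSum (fun m : ℕ ↦ (if m = 0 then 1 else -24 * (ArithmeticFunction.sigma 1 m : ℂ)) * nome t ^ m)
      (e2 t) := by
  have h := EisensteinSeries.hasSum_qExpansion_E2 (z := ⟨t, ht⟩)
  rw [e2, ofComplex_apply_of_im_pos ht]
  exact h

theorem e2_T {t : ℂ} (ht : 0 < t.im) : e2 (t + 1) = e2 t := by
  have h1 := e2_hasSum (t := t + 1) (by simpa using ht)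
  have h : nome 1 = 1 := by rw [nome, mul_one, Complex.exp_two_pi_mul_I]
  rw [nome_add, h, mul_one] at h1
  exact h1.unique (e2_hasSum ht)

theorem e2_S {t : ℂ} (ht : 0 < t.im) :
    e2 (-1 / t) = t ^ 2 * e2 t - 6 * I / π * t := by
  have h := congrFun (EisensteinSeries.E2_slash_action ModularGroup.S) ⟨t, ht⟩
  rw [SlashInvariantForm.slash_S_apply] at h
  have h0 : t ≠ 0 := by rintro rfl; simp at ht
  have hi : -1 / t = (-t)⁻¹ := by rw [neg_div, one_div, inv_neg]
  have hp := im_neg_one_div_pos ht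
  rw [e2, e2, ofComplex_apply_of_im_pos ht, ofComplex_apply_of_im_pos hp]
  rw [Pi.sub_apply, Pi.smul_apply, EisensteinSeries.D2_S, riemannZeta_two] at h
  simp only [hi]
  simp only [smul_eq_mul] at h
  have hpi : (π : ℂ) ≠ 0 := by exact_mod_cast Real.pi_ne_zero
  have h2 : t ^ (-2 : ℤ) = (t ^ 2)⁻¹ := by rw [zpow_neg]; norm_cast
  rw [h2, ← div_eq_mul_inv, div_eq_iff (by positivity)] at h
  rw [h]
  field_simp

theorem e2_diff : DifferentiableOn ℂ e2 {z | 0 < z.im} :=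
  UpperHalfPlane.mdifferentiable_iff.mp E2_mdifferentiable

theorem nome_tendsto : Tendsto nome imInf (𝓝 0) := by
  rw [tendsto_zero_iff_norm_tendsto_zero]
  have : Tendsto (fun y : ℝ => rexp (-(2 * π) * y)) atTop (𝓝 0) := by
    refine Real.tendsto_exp_atBot.comp ?_
    exact tendsto_id.const_mul_atTop_of_neg (by simpa using Real.pi_pos)
  refine (this.comp (tendsto_comap (f := Complex.im))).congr fun z => ?_
  rw [nome, Complex.norm_exp]
  simp

theorem nome_norm_lt {t : ℂ} (ht : 0 < t.im) : ‖nome t‖ < 1 := by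
  rw [nome, Complex.norm_exp]
  simp
  positivity

theorem e2_tendsto : Tendsto e2 imInf (𝓝 1) := by
  let H : ℍ → ℂ := fun z => (e2 z - 1) / nome z
  have hne : ∀ z : ℂ, nome z ≠ 0 := fun z => Complex.exp_ne_zero _
  have hH : IsBoundedAtImInfty H := by
    refine isBoundedAtImInfty_of_hasSum_qExpansion (h := 1)
      (c := fun m => -24 * (ArithmeticFunction.sigma 1 (m + 1) : ℂ)) one_pos fun z => ?_
    have h := (hasSum_nat_add_iff' 1).mpr (e2_hasSum z.2)
    simp at h
    have h2 := h.div_const (nome z)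
    have hq : Function.Periodic.qParam 1 (z : ℂ) = nome z := by
      simp [Function.Periodic.qParam, nome]
    rw [hq]
    have he : (fun m : ℕ => (-24 * (ArithmeticFunction.sigma 1 (m + 1) : ℂ)) • nome z ^ m) =
        fun i : ℕ => -(24 * (ArithmeticFunction.sigma 1 (i + 1) : ℂ) * nome z ^ (i + 1)) / nome z := by
      funext m
      have := hne z
      rw [smul_eq_mul, pow_succ]
      field_simp
    rw [he]
    exact h2
  have hb : (fun z : ℂ => (e2 z - 1) / nome z) =O[imInf] (fun _ => (1 : ℂ)) := by
    rw [UpperHalfPlane.isBoundedAtImInfty_iff] at hH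
    obtain ⟨M, A, hA⟩ := hH
    refine Asymptotics.IsBigO.of_bound M ?_
    have : ∀ᶠ z in imInf, max A 1 ≤ z.im := tendsto_comap.eventually_ge_atTop _
    filter_upwards [this] with z hz
    have hz0 : 0 < z.im := lt_of_lt_of_le one_pos ((le_max_right _ _).trans hz)
    have := hA ⟨z, hz0⟩ ((le_max_left _ _).trans hz)
    simpa [H] using this
  have h2 : Tendsto (fun z : ℂ => (e2 z - 1) / nome z * nome z) imInf (𝓝 0) := by
    have := hb.mul (Asymptotics.isBigO_refl nome imInf)
    refine this.trans_tendsto ?_ |>.congr fun _ => rfl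
    simpa using nome_tendsto
  have h3 := h2.add_const 1
  rw [zero_add] at h3
  refine h3.congr fun z => ?_
  rw [div_mul_cancel₀ _ (hne z)]; ring

theorem sigma_split {n : ℕ} (hn : n ≠ 0) : ArithmeticFunction.sigma 1 n =
    sigmaOdd n + if Even n then 2 * ArithmeticFunction.sigma 1 (n / 2) else 0 := by
  rw [ArithmeticFunction.sigma_one_apply, sigmaOdd,
    ← Finset.sum_filter_add_sum_filter_not n.divisors (fun d => Odd d)]
  congr 1
  split_ifs with h
  · obtain ⟨m, rfl⟩ := h.two_dvd
    have hm : m ≠ 0 := by rintro rfl; simp at hn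
    rw [Nat.mul_div_cancel_left _ two_pos, ArithmeticFunction.sigma_one_apply, Finset.mul_sum]
    symm
    refine Finset.sum_bij (fun d _ => 2 * d) ?_ ?_ ?_ ?_
    · intro d hd
      simp only [Finset.mem_filter, Nat.mem_divisors] at hd ⊢
      exact ⟨⟨Nat.mul_dvd_mul_left 2 hd.1, hn⟩, by simp⟩
    · intro a _ b _ hab; simpa using hab
    · intro b hb
      simp only [Finset.mem_filter, Nat.mem_divisors, Nat.not_odd_iff_even] at hb
      obtain ⟨c, rfl⟩ := hb.2.two_dvd
      exact ⟨c, by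
        simp only [Nat.mem_divisors]
        exact ⟨Nat.dvd_of_mul_dvd_mul_left two_pos hb.1.1, hm⟩, rfl⟩
    · intro d _; rfl
  · refine Finset.sum_eq_zero fun d hd => ?_
    simp only [Finset.mem_filter, Nat.mem_divisors, Nat.not_odd_iff_even] at hd
    exact absurd (even_iff_two_dvd.mpr (hd.2.two_dvd.trans hd.1.1)) h

theorem hs_congr {f g : ℕ → ℂ} {a b : ℂ} (h : HasSum g b) (hab : a = b) (e : ∀ n, f n = g n) :
    HasSum f a := by
  rw [hab, show f = g from funext e]; exact h

theorem Estar_eq {t : ℂ} (ht : 0 < t.im) : Estar t = 2 * e2 (2 * t) - e2 t := by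
  have h1 := e2_hasSum ht
  have h2 := (e2_hasSum (t := 2 * t) (by simpa using ht)).mul_left 2
  have hn : nome (2 * t) = nome t ^ 2 := by
    rw [two_mul, nome_add, sq]
  have h3 : HasSum (fun m : ℕ => if Even m then
      2 * ((if m / 2 = 0 then 1 else -24 * (ArithmeticFunction.sigma 1 (m / 2) : ℂ)) * nome t ^ m)
      else 0) (2 * e2 (2 * t)) := by
    rw [← Function.Injective.hasSum_iff (g := fun n : ℕ => 2 * n)
      (fun a b h => by simpa using h)]
    · refine hs_congr h2 rfl fun m => ?_
      have hm : 2 * m ≤ 1 ↔ m = 0 := by omega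
      simp [hn, pow_mul, hm]
    · intro x hx
      rw [if_neg]
      intro he
      obtain ⟨m, rfl⟩ := he.two_dvd
      exact hx ⟨m, rfl⟩
  have h4 := (hasSum_nat_add_iff' 1).mpr (h3.sub h1)
  have h5 : HasSum (fun n : ℕ => 24 * ((sigmaOdd (n + 1) : ℂ) * nome t ^ (n + 1)))
      (2 * e2 (2 * t) - e2 t - 1) := by
    refine hs_congr h4 (by rw [Finset.sum_range_one]; norm_num) fun n => ?_
    · have hs := sigma_split (n := n + 1) (by simp)
      have hs' := congrArg (fun k : ℕ => (k : ℂ)) hs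
      simp only [Nat.cast_add (sigmaOdd _)] at hs'
      rw [if_neg (Nat.succ_ne_zero n)]
      rw [hs']
      split_ifs with he h0
      · exfalso
        obtain ⟨m, hm⟩ := he
        omega
      · push_cast; ring
      · push_cast; ring
  have h6 := h5.tsum_eq
  rw [tsum_mul_left] at h6
  rw [Estar, h6]; ring

/-- The difference of the two sides. -/
def fOne (t : ℂ) : ℂ := (jacobiTheta (t / 2) - jacobiTheta (2 * t)) ^ 4 + jacobiTheta (2 * t) ^ 4
  - (2 * e2 (2 * t) - e2 t)

/-- The transform of `fOne` under inversion. -/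
def fTwo (t : ℂ) : ℂ := -(1 / 4) * (jacobiTheta (t / 2) ^ 4 + jacobiTheta (t / 2 + 1) ^ 4)
  - (1 / 2 * e2 (t / 2) - e2 t)

theorem fOne_eq {t : ℂ} (ht : 0 < t.im) :
    fOne t = 16 * Theta2 (t / 4) ^ 4 + Theta3 (t / 4) ^ 4 - (2 * e2 (2 * t) - e2 t) := by
  have h4 : 0 < (t / 4).im := by simpa using ht
  have h := summable_nome_odd h4
  rw [Theta3_eq h4]
  rw [show 2 * (t / 4) = t / 2 by ring, show 8 * (t / 4) = 2 * t by ring] at h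
  rw [show 8 * (t / 4) = 2 * t by ring, fOne, h]
  ring

theorem jT_diff {a b : ℂ → ℂ} (ha : Differentiable ℂ a)
    (hi : ∀ t : ℂ, 0 < t.im → 0 < (a t).im) :
    DifferentiableOn ℂ (fun t => jacobiTheta (a t)) {z | 0 < z.im} := fun t ht =>
  ((differentiableAt_jacobiTheta (hi t ht)).comp t (ha t)).differentiableWithinAt

theorem e2_diff' {a : ℂ → ℂ} (ha : Differentiable ℂ a)
    (hi : ∀ t : ℂ, 0 < t.im → 0 < (a t).im) :
    DifferentiableOn ℂ (fun t => e2 (a t)) {z | 0 < z.im} :=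
  e2_diff.comp ha.differentiableOn fun t ht => hi t ht

theorem fOne_zero {t : ℂ} (ht : 0 < t.im) : fOne t = 0 := by
  have hhalf : ∀ t : ℂ, 0 < t.im → 0 < (t / 2).im := fun t h => by simpa using h
  have hhalf1 : ∀ t : ℂ, 0 < t.im → 0 < (t / 2 + 1).im := fun t h => by simpa using h
  have htwo : ∀ t : ℂ, 0 < t.im → 0 < (2 * t).im := fun t h => by simpa using h
  have thalf : Tendsto (fun t : ℂ => t / 2) imInf imInf :=
    (tendsto_affine (r := 1 / 2) (by norm_num) 0).congr fun t => by push_cast; ring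
  have thalf1 : Tendsto (fun t : ℂ => t / 2 + 1) imInf imInf :=
    (tendsto_affine (r := 1 / 2) (by norm_num) 1).congr fun t => by push_cast; ring
  have ttwo : Tendsto (fun t : ℂ => 2 * t) imInf imInf :=
    (tendsto_affine (r := 2) (by norm_num) 0).congr fun t => by push_cast; ring
  have tone : Tendsto (fun t : ℂ => t + 1) imInf imInf :=
    (tendsto_affine (r := 1) (by norm_num) 1).congr fun t => by push_cast; ring
  have d1 := jT_diff (b := id) (a := fun t => t / 2) (by fun_prop) hhalf
  have d2 := jT_diff (b := id) (a := fun t => t / 2 + 1) (by fun_prop) hhalf1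
  have d3 := jT_diff (b := id) (a := fun t => 2 * t) (by fun_prop) htwo
  have d4 := e2_diff' (a := fun t => 2 * t) (by fun_prop) htwo
  have d5 := e2_diff' (a := fun t => t / 2) (by fun_prop) hhalf
  have t1 := jT_tendsto.comp thalf
  have t2 := jT_tendsto.comp thalf1
  have t3 := jT_tendsto.comp ttwo
  have t4 := e2_tendsto.comp ttwo
  have t5 := e2_tendsto.comp thalf
  have tg := (((t1.pow 4).add (t2.pow 4)).const_mul (-(1 / 4))).sub
      ((t5.const_mul (1 / 2)).sub e2_tendsto)
  refine key_zero fOne fTwo ?_ ?_ ?_ ?_ ?_ ?_ (tg.congr fun _ => rfl)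
    ((tg.comp tone).congr fun _ => rfl) t ht
  · exact (((d1.sub d3).pow 4).add (d3.pow 4)).sub ((d4.const_mul 2).sub e2_diff)
  · exact (((d1.pow 4).add (d2.pow 4)).const_mul _).sub ((d5.const_mul _).sub e2_diff)
  · intro t ht
    have h4 : 0 < (t / 4).im := by simpa using ht
    have h44 : 0 < (t / 4 + 1 / 4).im := by simpa using ht
    rw [fOne_eq ht, fOne_eq (by simpa using ht), e2_T ht,
      show (t + 1) / 4 = t / 4 + 1 / 4 by ring, Theta2_add_quarter,
      show 2 * (t + 1) = 2 * t + 1 + 1 by ring, e2_T (by simpa using ht), e2_T (htwo t ht),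
      Theta3_eq h4, Theta3_eq h44, show 8 * (t / 4 + 1 / 4) = 8 * (t / 4) + 2 by ring,
      jT_add_two, mul_pow, Complex.I_pow_four, one_mul]
  · intro t ht
    rw [fTwo, fTwo, show (t + 2) / 2 = t / 2 + 1 by ring,
      show t / 2 + 1 + 1 = t / 2 + 2 by ring, jT_add_two, e2_T (hhalf t ht),
      show t + 2 = t + 1 + 1 by ring, e2_T (by simpa using ht), e2_T ht]
    ring
  · intro t ht
    have h0 : t ≠ 0 := by rintro rfl; simp at ht
    have hp := im_neg_one_div_pos ht
    have h2 := hhalf t ht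
    rw [fOne_eq hp, Theta3_eq (by simpa using hp),
      show -1 / t / 4 = -1 / (t / 2) / 8 by field_simp; norm_num, Theta2_S h2,
      show 8 * (-1 / (t / 2) / 8) = -1 / (t / 2) by ring, jT_S_four h2,
      show 2 * (-1 / t) = -1 / (t / 2) by field_simp, e2_S h2, e2_S ht, fTwo]
    ring
  · have tf := (((t1.sub t3).pow 4).add (t3.pow 4)).sub ((t4.const_mul 2).sub e2_tendsto)
    have : ((1 : ℂ) - 1) ^ 4 + 1 ^ 4 - (2 * 1 - 1) = 0 := by norm_num
    rw [this] at tf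
    exact tf.congr fun _ => rfl

/-- For `τ ∈ ℍ`: `16Θ₂(τ)⁴ + Θ₃(τ)⁴ = E*(4τ)`. -/
theorem stmt9 (τ : ℂ) (hτ : 0 < τ.im) :
    16 * Theta2 τ ^ 4 + Theta3 τ ^ 4 = Estar (4 * τ) := by
  have h4 : 0 < (4 * τ).im := by simpa using hτ
  have h := fOne_eq h4
  rw [fOne_zero h4, ← Estar_eq h4, show 4 * τ / 4 = τ by ring] at h
  linear_combination -h
end
end

section
/- For every τ in the complex upper half-plane ℍ, one has E_odd(τ) = η(4τ)⁸/η(2τ)⁴. -/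
noncomputable section
open Complex Real

/-- `E_odd(τ) = Σ_{n≥0} σ₁(2n+1) q^{2n+1}`, where `σ₁(m)` is the sum of divisors of `m`. -/
def Eodd (τ : ℂ) : ℂ :=
  ∑' n : ℕ, ((∑ d ∈ (2 * n + 1).divisors, d : ℕ) : ℂ) * nome τ ^ (2 * n + 1)


/-- Partial products of `(1-x)(1-x^3)⋯ / ((1-x^2)(1-x^4)⋯)`. -/
def qA (x : ℂ) (j : ℕ) : ℂ :=
  ∏ i ∈ Finset.range j, (1 - x ^ (2 * i + 1)) / (1 - x ^ (2 * i + 2))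

lemma prod_range_erase_split (f : ℕ → ℂ) (j r : ℕ) :
    ∏ i ∈ (Finset.range (j + r + 1)).erase j, f i =
      (∏ i ∈ Finset.range j, f i) * ∏ i ∈ Finset.range r, f (j + 1 + i) := by
  induction r with
  | zero =>
    have : (Finset.range (j + 0 + 1)).erase j = Finset.range j := by
      ext a; simp; omega
    rw [this]; simp
  | succ r ih =>
    have : (Finset.range (j + (r + 1) + 1)).erase j =
        insert (j + 1 + r) ((Finset.range (j + r + 1)).erase j) := by
      ext a; simp; omega
    rw [this, Finset.prod_insert (by simp), ih, Finset.prod_range_succ]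
    ring

lemma node_coeff (x : ℂ) (hx0 : x ≠ 0) (hx : ∀ n : ℕ, 1 - x ^ (n + 1) ≠ 0) (j r : ℕ) :
    (∏ m ∈ (Finset.range (j + r + 1)).erase j, (x ^ (2 * j) - x ^ (2 * m))⁻¹) *
      ∏ k ∈ Finset.range (j + r), (x ^ (2 * j) - x ^ (2 * k + 1)) =
    x ^ j * qA x j * qA x r := by
  rw [prod_range_erase_split, Finset.prod_range_add]
  have h1 : (∏ i ∈ Finset.range j, (x ^ (2 * j) - x ^ (2 * i))⁻¹) *
      (∏ k ∈ Finset.range j, (x ^ (2 * j) - x ^ (2 * k + 1))) = x ^ j * qA x j := by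
    rw [← Finset.prod_mul_distrib, ← Finset.prod_range_reflect, qA]
    have : x ^ j = ∏ _i ∈ Finset.range j, x := by simp
    rw [this, ← Finset.prod_mul_distrib]
    refine Finset.prod_congr rfl fun i hi => ?_
    have hi := Finset.mem_range.1 hi
    obtain ⟨t, rfl⟩ : ∃ t, j = t + i + 1 := ⟨j - 1 - i, by omega⟩
    have e : t + i + 1 - 1 - i = t := by omega
    rw [e]
    have e1 : x ^ (2 * (t + i + 1)) - x ^ (2 * t) = - x ^ (2 * t) * (1 - x ^ (2 * i + 2)) := by ring
    have e2 : x ^ (2 * (t + i + 1)) - x ^ (2 * t + 1)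
      = - x ^ (2 * t) * (x * (1 - x ^ (2 * i + 1))) := by ring
    rw [e1, e2]
    have := hx (2 * i + 1)
    have h3 : x ^ (2 * t) ≠ 0 := pow_ne_zero _ hx0
    field_simp
  have h2 : (∏ i ∈ Finset.range r, (x ^ (2 * j) - x ^ (2 * (j + 1 + i)))⁻¹) *
      (∏ k ∈ Finset.range r, (x ^ (2 * j) - x ^ (2 * (j + k) + 1))) = qA x r := by
    rw [← Finset.prod_mul_distrib, qA]
    refine Finset.prod_congr rfl fun i hi => ?_
    have e1 : x ^ (2 * j) - x ^ (2 * (j + 1 + i)) = x ^ (2 * j) * (1 - x ^ (2 * i + 2)) := by ring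
    have e2 : x ^ (2 * j) - x ^ (2 * (j + i) + 1)
      = x ^ (2 * j) * ((1 - x ^ (2 * i + 1))) := by ring
    rw [e1, e2]
    have := hx (2 * i + 1)
    have h3 : x ^ (2 * j) ≠ 0 := pow_ne_zero _ hx0
    field_simp
  rw [← h1, ← h2]; ring

lemma qA_ne_zero (x : ℂ) (hx : ∀ n : ℕ, 1 - x ^ (n + 1) ≠ 0) (j : ℕ) : qA x j ≠ 0 :=
  Finset.prod_ne_zero_iff.2 fun i _ => div_ne_zero (hx (2 * i)) (hx (2 * i + 1))

/-- Value of numerator over node polynomial. -/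
lemma value_coeff (x : ℂ) (hx : ∀ n : ℕ, 1 - x ^ (n + 1) ≠ 0) (r : ℕ) :
    (∏ k ∈ (Finset.range ((r + 1) + r + 1)).erase (r + 1),
        (x ^ (2 * (r + 1) + 1) - x ^ (2 * k + 1))) *
      (x ^ (3 * (r + 1) + 1) * qA x (r + 1) ^ 2 * (1 - x ^ (2 * (r + 1))) *
        (1 - x ^ (2 * (r + 1) + 1))) =
    - ∏ m ∈ Finset.range ((r + 1) + (r + 1) + 1), (x ^ (2 * (r + 1) + 1) - x ^ (2 * m)) := by
  have h1 : ∀ N : ℕ, (∏ k ∈ Finset.range N, (x ^ (2 * N + 1) - x ^ (2 * k + 1))) *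
      (qA x N * (1 - x ^ (2 * N + 1))) =
      x ^ N * (1 - x) * ∏ k ∈ Finset.range N, (x ^ (2 * N + 1) - x ^ (2 * k)) := by
    intro N
    have t : (∏ i ∈ Finset.range N, (1 - x ^ (2 * (i + 1) + 1))) * (1 - x) =
        (∏ i ∈ Finset.range N, (1 - x ^ (2 * i + 1))) * (1 - x ^ (2 * N + 1)) := by
      rw [← Finset.prod_range_succ (fun i => 1 - x ^ (2 * i + 1)), Finset.prod_range_succ']
      simp
    have hE : ∏ i ∈ Finset.range N, (1 - x ^ (2 * i + 2)) ≠ 0 :=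
      Finset.prod_ne_zero_iff.2 fun i _ => hx (2 * i + 1)
    have t2 : qA x N * (1 - x ^ (2 * N + 1)) =
        (∏ i ∈ Finset.range N, (1 - x ^ (2 * (i + 1) + 1)) / (1 - x ^ (2 * i + 2))) *
          (1 - x) := by
      rw [qA, Finset.prod_div_distrib, Finset.prod_div_distrib, div_mul_eq_mul_div, ← t,
        div_mul_eq_mul_div]
    have t3 : x ^ N = ∏ _i ∈ Finset.range N, x := by simp
    rw [t2, ← mul_assoc, mul_right_comm _ (1 - x), t3,
      ← Finset.prod_range_reflect (fun i => (1 - x ^ (2 * (i + 1) + 1)) / (1 - x ^ (2 * i + 2))),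
      ← Finset.prod_mul_distrib, ← Finset.prod_mul_distrib]
    congr 1
    refine Finset.prod_congr rfl fun i hi => ?_
    have hi := Finset.mem_range.1 hi
    clear t t2 t3 hE
    obtain ⟨t, rfl⟩ : ∃ t, N = t + i + 1 := ⟨N - 1 - i, by omega⟩
    have e : t + i + 1 - 1 - i = t := by omega
    rw [e]
    have := hx (2 * t + 1)
    field_simp
    ring
  have h2 : ∀ y : ℂ, (∏ i ∈ Finset.range r, (y * (1 - x ^ (2 * i + 2)))) *
      (qA x (r + 1) * (1 - x ^ (2 * (r + 1))) * y) =
      ∏ i ∈ Finset.range (r + 1), (y * (1 - x ^ (2 * i + 1))) := by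
    intro y
    have : (∏ i ∈ Finset.range r, (y * (1 - x ^ (2 * i + 2)))) * (y * (1 - x ^ (2 * (r + 1)))) =
      ∏ i ∈ Finset.range (r + 1), (y * (1 - x ^ (2 * i + 2))) := by
      rw [Finset.prod_range_succ]; rfl
    calc _ = ((∏ i ∈ Finset.range r, (y * (1 - x ^ (2 * i + 2)))) *
        (y * (1 - x ^ (2 * (r + 1))))) * qA x (r + 1) := by ring
      _ = _ := by
        rw [this, qA, ← Finset.prod_mul_distrib]
        refine Finset.prod_congr rfl fun i hi => ?_
        have := hx (2 * i + 1)
        field_simp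
  have e0 : (r + 1) + (r + 1) + 1 = (r + 1 + 1) + (r + 1) := by ring
  rw [prod_range_erase_split, e0, Finset.prod_range_add _ (r + 1 + 1) (r + 1),
    Finset.prod_range_succ _ (r + 1)]
  have a1 : ∏ i ∈ Finset.range r,
      (x ^ (2 * (r + 1) + 1) - x ^ (2 * (r + 1 + 1 + i) + 1)) =
      ∏ i ∈ Finset.range r, (x ^ (2 * (r + 1) + 1) * (1 - x ^ (2 * i + 2))) :=
    Finset.prod_congr rfl fun i _ => by ring
  have a2 : ∏ i ∈ Finset.range (r + 1),
      (x ^ (2 * (r + 1) + 1) - x ^ (2 * (r + 1 + 1 + i))) =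
      ∏ i ∈ Finset.range (r + 1), (x ^ (2 * (r + 1) + 1) * (1 - x ^ (2 * i + 1))) :=
    Finset.prod_congr rfl fun i _ => by ring
  rw [a1, a2, ← h2]
  have H1 := h1 (r + 1)
  generalize (∏ i ∈ Finset.range r, (x ^ (2 * (r + 1) + 1) * (1 - x ^ (2 * i + 2)))) = P2 at *
  generalize (∏ k ∈ Finset.range (r + 1), (x ^ (2 * (r + 1) + 1) - x ^ (2 * k + 1))) = P1 at *
  generalize (∏ k ∈ Finset.range (r + 1), (x ^ (2 * (r + 1) + 1) - x ^ (2 * k))) = D1 at *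
  generalize qA x (r + 1) = Q at *
  linear_combination (P2 * x ^ (3 * (r + 1) + 1) * Q * (1 - x ^ (2 * (r + 1)))) * H1

lemma finite_identity (x : ℂ) (hx0 : x ≠ 0) (hx : ∀ n : ℕ, 1 - x ^ (n + 1) ≠ 0) (N : ℕ)
    (hN : 1 ≤ N) :
    ∑ j ∈ Finset.range (N + N + 1),
      x ^ j * qA x j * qA x (N + N - j) / (x ^ (2 * j) - x ^ (2 * N + 1)) ^ 2 =
    1 / (x ^ (3 * N + 1) * qA x N ^ 2 * (1 - x ^ (2 * N)) * (1 - x ^ (2 * N + 1))) := by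
  obtain ⟨r, rfl⟩ : ∃ r, N = r + 1 := ⟨N - 1, by omega⟩
  have hinj : ∀ a b : ℕ, a < b → x ^ a ≠ x ^ b := by
    intro a b hab h
    obtain ⟨c, rfl⟩ : ∃ c, b = a + (c + 1) := ⟨b - a - 1, by omega⟩
    have h3 : x ^ a ≠ 0 := pow_ne_zero _ hx0
    apply mul_ne_zero h3 (hx c)
    rw [mul_sub, ← pow_add, ← h]; ring
  have hinj' : ∀ a b : ℕ, x ^ a = x ^ b → a = b := by
    intro a b h
    rcases lt_trichotomy a b with h1 | h1 | h1
    · exact absurd h (hinj _ _ h1)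
    · exact h1
    · exact absurd h.symm (hinj _ _ h1)
  set M := (r + 1) + r + 1 with hM
  set s := Finset.range ((r + 1) + (r + 1) + 1) with hs
  set v : ℕ → ℂ := fun j => x ^ (2 * j) with hv
  set y := x ^ (2 * (r + 1) + 1) with hy
  have hyv : ∀ i, y ≠ v i := fun i h => by have := hinj' _ _ h; omega
  let P : Polynomial ℂ := ∏ k ∈ (Finset.range M).erase (r + 1),
    (Polynomial.X - Polynomial.C (x ^ (2 * k + 1)))
  have hPe : ∀ z, P.eval z = ∏ k ∈ (Finset.range M).erase (r + 1), (z - x ^ (2 * k + 1)) := by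
    intro z; simp [P, Polynomial.eval_prod]
  have hdeg : P.degree < s.card := by
    have : P.degree = (((Finset.range M).erase (r + 1)).card : ℕ) := by
      simp only [P, Polynomial.degree_prod, Polynomial.degree_X_sub_C]
      simp
    rw [this, Finset.card_erase_of_mem (by simp [hM])]
    simp only [hs, Finset.card_range, hM]
    exact_mod_cast (by omega)
  have key := Lagrange.eq_interpolate (s := s) (v := v) (f := P)
    (fun a _ b _ h => by have := hinj' _ _ h; omega) hdeg
  have key2 : P.eval y = (Lagrange.nodal s v).eval y *
      ∑ i ∈ s, Lagrange.nodalWeight s v i * (y - v i)⁻¹ * P.eval (v i) := by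
    rw [← Lagrange.eval_interpolate_not_at_node _ (fun i _ => hyv i), ← key]
  have hterm : ∀ j ∈ s, Lagrange.nodalWeight s v j * (y - v j)⁻¹ * P.eval (v j) =
      - (x ^ j * qA x j * qA x ((r + 1) + (r + 1) - j) / (x ^ (2 * j) - y) ^ 2) := by
    intro j hj
    have hj' : j < (r + 1) + (r + 1) + 1 := Finset.mem_range.1 hj
    obtain ⟨t, ht⟩ : ∃ t, (r + 1) + (r + 1) = j + t := ⟨(r + 1) + (r + 1) - j, by omega⟩
    have h := node_coeff x hx0 hx j t
    have e : r + 1 + (r + 1) - j = t := by omega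
    rw [e, ← h, Lagrange.nodalWeight, hPe, ← ht]
    have hMe : r + 1 + (r + 1) = M := by omega
    have h5 : x ^ (2 * j) - y ≠ 0 := sub_ne_zero.2 (hyv j).symm
    have h6 : y - x ^ (2 * j) ≠ 0 := sub_ne_zero.2 (hyv j)
    rw [← Finset.mul_prod_erase (Finset.range (r + 1 + (r + 1))) _
      (show r + 1 ∈ Finset.range (r + 1 + (r + 1)) by simp), hMe]
    simp only [hv, hs, hMe]
    generalize (∏ m ∈ (Finset.range (M + 1)).erase j, (x ^ (2 * j) - x ^ (2 * m))⁻¹) = Z1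
    generalize (∏ k ∈ (Finset.range M).erase (r + 1), (x ^ (2 * j) - x ^ (2 * k + 1))) = Z2
    rw [← neg_sub (x ^ (2 * j)) y, inv_neg, ← hy]
    field_simp
  have hnod : (Lagrange.nodal s v).eval y ≠ 0 :=
    Lagrange.eval_nodal_not_at_node fun i _ => hyv i
  have hval := value_coeff x hx r
  rw [← hy, ← hM, ← hs, ← hPe, key2, Finset.sum_congr rfl hterm, Finset.sum_neg_distrib] at hval
  rw [Lagrange.eval_nodal] at hnod hval
  have hq := qA_ne_zero x hx (r + 1)
  have h7 := hx (2 * r + 1)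
  have h8 := hx (2 * (r + 1))
  have h9 : 1 - x ^ (2 * (r + 1)) ≠ 0 := h7
  rw [eq_div_iff (by
    refine mul_ne_zero (mul_ne_zero (mul_ne_zero (pow_ne_zero _ hx0) (pow_ne_zero _ hq)) h9) h8)]
  refine mul_left_cancel₀ hnod ?_
  simp only [hv] at hval ⊢
  linear_combination -hval

lemma finite_identity' (x : ℂ) (hx0 : x ≠ 0) (hx : ∀ n : ℕ, 1 - x ^ (n + 1) ≠ 0) (N : ℕ)
    (hN : 1 ≤ N) :
    (∑ m ∈ Finset.range (N + 1),
      x ^ (3 * m + 1) * qA x (N - m) * qA x (N + m) / (1 - x ^ (2 * m + 1)) ^ 2) +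
    (∑ m ∈ Finset.range N,
      x ^ m * qA x (N + 1 + m) * qA x (N - 1 - m) / (1 - x ^ (2 * m + 1)) ^ 2) =
    1 / (qA x N ^ 2 * (1 - x ^ (2 * N)) * (1 - x ^ (2 * N + 1))) := by
  have h := finite_identity x hx0 hx N hN
  have e0 : N + N + 1 = (N + 1) + N := by ring
  have hxN : x ^ (3 * N + 1) ≠ 0 := pow_ne_zero _ hx0
  have h' := congrArg (fun z => x ^ (3 * N + 1) * z) h
  rw [e0, Finset.sum_range_add, ← Finset.sum_range_reflect, mul_add, Finset.mul_sum,
    Finset.mul_sum] at h'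
  convert h' using 1
  · congr 1
    · refine Finset.sum_congr rfl fun m hm => ?_
      have hm := Finset.mem_range.1 hm
      obtain ⟨t, rfl⟩ : ∃ t, N = t + m := ⟨N - m, by omega⟩
      have e1 : t + m + 1 - 1 - m = t := by omega
      have e2 : t + m - m = t := by omega
      have e3 : t + m + (t + m) - t = t + m + m := by omega
      rw [e1, e2, e3]
      have e4 : x ^ (2 * t) - x ^ (2 * (t + m) + 1) = x ^ (2 * t) * (1 - x ^ (2 * m + 1)) := by ring
      rw [e4]
      have := hx (2 * m)
      have h3 : x ^ t ≠ 0 := pow_ne_zero _ hx0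
      rw [mul_comm 2 t, pow_mul]
      field_simp
      ring
    · refine Finset.sum_congr rfl fun m hm => ?_
      have hm := Finset.mem_range.1 hm
      have e3 : N + N - (N + 1 + m) = N - 1 - m := by omega
      rw [e3]
      have e4 : x ^ (2 * (N + 1 + m)) - x ^ (2 * N + 1) =
        - (x ^ (2 * N + 1) * (1 - x ^ (2 * m + 1))) := by ring
      rw [e4]
      have := hx (2 * m)
      have h3 : x ^ (2 * N + 1) ≠ 0 := pow_ne_zero _ hx0
      field_simp
      ring
  · have hq := qA_ne_zero x hx N
    rw [mul_one_div, mul_assoc (x ^ (3 * N + 1)), mul_assoc (x ^ (3 * N + 1)),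
      div_mul_cancel_left₀ hxN, one_div]

lemma one_sub_ne_s10 (x : ℂ) (hx1 : ‖x‖ < 1) (n : ℕ) : 1 - x ^ (n + 1) ≠ 0 := by
  intro h
  have : ‖x ^ (n + 1)‖ < 1 := by
    rw [norm_pow]; exact pow_lt_one₀ (norm_nonneg _) hx1 (by omega)
  rw [← sub_eq_zero.1 h] at this
  simp at this

open Filter Topology in
lemma limit_identity (x : ℂ) (hx0 : x ≠ 0) (hx1 : ‖x‖ < 1) (A : ℂ) (hA0 : A ≠ 0)
    (hA : Tendsto (qA x) atTop (𝓝 A)) :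
    ∑' m : ℕ, x ^ m * (1 + x ^ (2 * m + 1)) / (1 - x ^ (2 * m + 1)) ^ 2 = 1 / A ^ 4 := by
  have hx := one_sub_ne_s10 x hx1
  obtain ⟨B, hB⟩ : ∃ B, ∀ n, ‖qA x n‖ ≤ B := by
    obtain ⟨B, hB⟩ := hA.norm.bddAbove_range
    exact ⟨B, fun n => hB ⟨n, rfl⟩⟩
  have hB0 : 0 ≤ B := (norm_nonneg _).trans (hB 0)
  let F : ℕ → ℕ → ℂ := fun N m =>
    (if m < N + 1 then x ^ (3 * m + 1) * qA x (N - m) * qA x (N + m) / (1 - x ^ (2 * m + 1)) ^ 2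
      else 0) +
    (if m < N then x ^ m * qA x (N + 1 + m) * qA x (N - 1 - m) / (1 - x ^ (2 * m + 1)) ^ 2 else 0)
  have hsum : ∀ N, 1 ≤ N → ∑' m, F N m =
      1 / (qA x N ^ 2 * (1 - x ^ (2 * N)) * (1 - x ^ (2 * N + 1))) := by
    intro N hN
    rw [← finite_identity' x hx0 hx N hN, tsum_eq_sum (s := Finset.range (N + 1)),
      Finset.sum_add_distrib]
    · congr 1
      · exact Finset.sum_congr rfl fun m hm => if_pos (Finset.mem_range.1 hm)
      · rw [Finset.sum_range_succ, if_neg (lt_irrefl N), add_zero]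
        exact Finset.sum_congr rfl fun m hm => if_pos (Finset.mem_range.1 hm)
    · intro m hm
      have hm : ¬ m < N + 1 := fun h => hm (Finset.mem_range.2 h)
      simp only [F]
      rw [if_neg hm, if_neg (by omega), add_zero]
  have hpow : ∀ f : ℕ → ℕ, Tendsto f atTop atTop → Tendsto (fun N => x ^ f N) atTop (𝓝 0) :=
    fun f hf => (tendsto_pow_atTop_nhds_zero_of_norm_lt_one hx1).comp hf
  have hR : Tendsto (fun N => 1 / (qA x N ^ 2 * (1 - x ^ (2 * N)) * (1 - x ^ (2 * N + 1)))) atTop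
      (𝓝 (1 / (A ^ 2 * (1 - 0) * (1 - 0)))) := by
    refine Tendsto.div tendsto_const_nhds (((hA.pow 2).mul (tendsto_const_nhds.sub (hpow _ ?_))).mul
      (tendsto_const_nhds.sub (hpow _ ?_))) (by simpa using hA0)
    · exact tendsto_atTop_mono (fun n => by simp only [id]; omega) tendsto_id
    · exact tendsto_atTop_mono (fun n => by simp only [id]; omega) tendsto_id
  have hL : Tendsto (fun N => ∑' m, F N m) atTop
      (𝓝 (∑' m, A ^ 2 * (x ^ m * (1 + x ^ (2 * m + 1)) / (1 - x ^ (2 * m + 1)) ^ 2))) := by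
    have hden : ∀ m : ℕ, 1 - ‖x‖ ≤ ‖1 - x ^ (2 * m + 1)‖ := by
      intro m
      have h1 : ‖x ^ (2 * m + 1)‖ ≤ ‖x‖ := by
        rw [norm_pow]; exact pow_le_of_le_one (norm_nonneg _) hx1.le (by omega)
      have h2 := norm_sub_norm_le (1 : ℂ) (x ^ (2 * m + 1))
      rw [norm_one] at h2
      linarith
    have hpos : 0 < 1 - ‖x‖ := by linarith
    have hb : ∀ (e m : ℕ) (a b : ℂ), m ≤ e → ‖a‖ ≤ B → ‖b‖ ≤ B →
        ‖x ^ e * a * b / (1 - x ^ (2 * m + 1)) ^ 2‖ ≤ ‖x‖ ^ m * B * B / (1 - ‖x‖) ^ 2 := by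
      intro e m a b he ha hb
      rw [norm_div, norm_mul, norm_mul, norm_pow, norm_pow]
      have h1 : ‖x‖ ^ e ≤ ‖x‖ ^ m := pow_le_pow_of_le_one (norm_nonneg _) hx1.le he
      have h2 := hden m
      gcongr
    have hnn : ∀ m : ℕ, 0 ≤ ‖x‖ ^ m * B * B / (1 - ‖x‖) ^ 2 := fun m => by positivity
    refine tendsto_tsum_of_dominated_convergence
      (bound := fun m => ‖x‖ ^ m * B * B / (1 - ‖x‖) ^ 2 + ‖x‖ ^ m * B * B / (1 - ‖x‖) ^ 2) ?_ ?_ ?_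
    · have := (((summable_geometric_of_lt_one (norm_nonneg _) hx1).mul_right B).mul_right B).div_const
        ((1 - ‖x‖) ^ 2)
      exact this.add this
    · intro m
      have h1 : Tendsto (fun N : ℕ => N - m) atTop atTop := tendsto_sub_atTop_nat m
      have h2 : Tendsto (fun N : ℕ => N + m) atTop atTop := tendsto_add_atTop_nat m
      have h3 : Tendsto (fun N : ℕ => N + 1 + m) atTop atTop :=
        tendsto_atTop_mono (fun n => by simp only [id]; omega) tendsto_id
      have h4 : Tendsto (fun N : ℕ => N - 1 - m) atTop atTop := by
        simpa [Nat.sub_sub] using tendsto_sub_atTop_nat (1 + m)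
      have t1 := ((((tendsto_const_nhds (x := x ^ (3 * m + 1))).mul (hA.comp h1)).mul
        (hA.comp h2)).div_const ((1 - x ^ (2 * m + 1)) ^ 2)).add
        ((((tendsto_const_nhds (x := x ^ m)).mul (hA.comp h3)).mul
        (hA.comp h4)).div_const ((1 - x ^ (2 * m + 1)) ^ 2))
      have e : A ^ 2 * (x ^ m * (1 + x ^ (2 * m + 1)) / (1 - x ^ (2 * m + 1)) ^ 2) =
        x ^ (3 * m + 1) * A * A / (1 - x ^ (2 * m + 1)) ^ 2 +
          x ^ m * A * A / (1 - x ^ (2 * m + 1)) ^ 2 := by ring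
      rw [e]
      refine t1.congr' ?_
      filter_upwards [eventually_gt_atTop m] with N hN
      simp only [F]
      rw [if_pos (by omega), if_pos hN]
      rfl
    · filter_upwards with N m
      refine (norm_add_le _ _).trans (add_le_add ?_ ?_)
      · split_ifs
        · exact hb _ _ _ _ (by omega) (hB _) (hB _)
        · simpa using hnn m
      · split_ifs
        · exact hb _ _ _ _ le_rfl (hB _) (hB _)
        · simpa using hnn m
  have hL' := hL.congr' (by
    filter_upwards [eventually_ge_atTop 1] with N hN using hsum N hN)
  have := tendsto_nhds_unique hL' hR
  rw [tsum_mul_left] at this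
  have h2 : A ^ 2 ≠ 0 := pow_ne_zero _ hA0
  refine mul_left_cancel₀ h2 (this.trans ?_)
  field_simp
  ring

lemma hasSum_odd_geom {z : ℂ} (hz : ‖z‖ < 1) :
    HasSum (fun k : ℕ => ((2 * k + 1 : ℕ) : ℂ) * z ^ k) ((1 + z) / (1 - z) ^ 2) := by
  have h1 := ((hasSum_coe_mul_geometric_of_norm_lt_one hz).mul_left 2).add
    (hasSum_geometric_of_norm_lt_one hz)
  have hne : 1 - z ≠ 0 := by simpa using one_sub_ne_s10 z hz 0
  have e1 : (fun k : ℕ => ((2 * k + 1 : ℕ) : ℂ) * z ^ k) =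
      fun k : ℕ => 2 * ((k : ℂ) * z ^ k) + z ^ k := by
    ext k; push_cast; ring
  have e2 : (1 + z) / (1 - z) ^ 2 = 2 * (z / (1 - z) ^ 2) + (1 - z)⁻¹ := by
    field_simp; ring
  rw [e1, e2]
  exact h1

lemma lambert (x : ℂ) (hx1 : ‖x‖ < 1) :
    ∑' m : ℕ, x ^ m * (1 + x ^ (2 * m + 1)) / (1 - x ^ (2 * m + 1)) ^ 2 =
      ∑' n : ℕ, ((∑ d ∈ (2 * n + 1).divisors, d : ℕ) : ℂ) * x ^ n := by
  let f : ℕ × ℕ → ℂ := fun p => ((2 * p.2 + 1 : ℕ) : ℂ) * x ^ (p.1 + (2 * p.1 + 1) * p.2)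
  have hf : Summable f := by
    have s1 := summable_geometric_of_lt_one (norm_nonneg x) hx1
    have s2 : Summable (fun k : ℕ => ((2 * k + 1 : ℕ) : ℝ) * ‖x‖ ^ k) := by
      have := (hasSum_odd_geom hx1).summable.norm
      simpa only [norm_mul, norm_pow, Complex.norm_natCast] using this
    refine Summable.of_norm_bounded (s1.mul_of_nonneg s2 (fun m => by positivity)
      (fun m => by positivity)) ?_
    rintro ⟨m, k⟩
    simp only [f, norm_mul, norm_pow, Complex.norm_natCast]
    have : ‖x‖ ^ (m + (2 * m + 1) * k) ≤ ‖x‖ ^ (m + k) :=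
      pow_le_pow_of_le_one (norm_nonneg _) hx1.le (by nlinarith [Nat.zero_le (m * k)])
    calc _ ≤ ((2 * k + 1 : ℕ) : ℝ) * ‖x‖ ^ (m + k) := by gcongr
      _ = _ := by rw [pow_add]; ring
  have hrow : ∀ m : ℕ, HasSum (fun k => f (m, k))
      (x ^ m * (1 + x ^ (2 * m + 1)) / (1 - x ^ (2 * m + 1)) ^ 2) := by
    intro m
    have hz : ‖x ^ (2 * m + 1)‖ < 1 := by
      rw [norm_pow]; exact pow_lt_one₀ (norm_nonneg _) hx1 (by omega)
    have := (hasSum_odd_geom hz).mul_left (x ^ m)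
    have e1 : (fun k => f (m, k)) =
        fun k : ℕ => x ^ m * (((2 * k + 1 : ℕ) : ℂ) * (x ^ (2 * m + 1)) ^ k) := by
      ext k; simp only [f]; rw [pow_add, pow_mul]; ring
    rw [e1, mul_div_assoc]
    exact this
  have h1 := hf.hasSum.prod_fiberwise hrow
  rw [h1.tsum_eq]
  have h2 := hf.hasSum.tsum_fiberwise (fun p : ℕ × ℕ => p.1 + (2 * p.1 + 1) * p.2)
  rw [← h2.tsum_eq]
  refine tsum_congr fun n => ?_
  let S : Finset (ℕ × ℕ) := (Finset.range (n + 1) ×ˢ Finset.range (n + 1)).filter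
    fun p => p.1 + (2 * p.1 + 1) * p.2 = n
  have hS : ((fun p : ℕ × ℕ => p.1 + (2 * p.1 + 1) * p.2) ⁻¹' {n}) = (S : Set (ℕ × ℕ)) := by
    ext ⟨m, k⟩
    simp only [S, Set.mem_preimage, Set.mem_singleton_iff, Finset.coe_filter, Finset.mem_product,
      Finset.mem_range, Set.mem_ofPred_eq]
    constructor
    · intro h
      refine ⟨⟨?_, ?_⟩, h⟩ <;> nlinarith [Nat.zero_le (m * k)]
    · exact fun h => h.2
  rw [hS, Finset.tsum_subtype' S f]
  push_cast
  rw [Finset.sum_mul]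
  refine Finset.sum_bij (fun p _ => 2 * p.2 + 1) ?_ ?_ ?_ ?_
  · rintro ⟨m, k⟩ h
    have h := (Finset.mem_filter.1 h).2
    simp only at h
    refine Nat.mem_divisors.2 ⟨⟨2 * m + 1, ?_⟩, by omega⟩
    rw [← h]; ring
  · rintro ⟨m, k⟩ h ⟨m', k'⟩ h' e
    have h := (Finset.mem_filter.1 h).2
    have h' := (Finset.mem_filter.1 h').2
    simp only at h h' e
    have ek : k = k' := by omega
    subst ek
    have : (2 * m + 1) * (2 * k + 1) = (2 * m' + 1) * (2 * k + 1) := by nlinarith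
    have := Nat.eq_of_mul_eq_mul_right (by omega) this
    simp; omega
  · intro d hd
    obtain ⟨c, hc⟩ := (Nat.mem_divisors.1 hd).1
    have ho : Odd (d * c) := by rw [← hc]; exact ⟨n, rfl⟩
    obtain ⟨⟨k, rfl⟩, ⟨m, rfl⟩⟩ := Nat.odd_mul.1 ho
    have h : m + (2 * m + 1) * k = n := by nlinarith
    refine ⟨(m, k), ?_, rfl⟩
    have : (m, k) ∈ (S : Set (ℕ × ℕ)) := by rw [← hS]; exact h
    exact this
  · rintro ⟨m, k⟩ h
    have h := (Finset.mem_filter.1 h).2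
    simp only at h
    simp only [f]
    rw [h]

open Filter Topology in
lemma main_x (x : ℂ) (hx0 : x ≠ 0) (hx1 : ‖x‖ < 1) :
    ∑' n : ℕ, ((∑ d ∈ (2 * n + 1).divisors, d : ℕ) : ℂ) * x ^ n =
      (∏' n : ℕ, (1 - (x ^ 2) ^ (n + 1))) ^ 8 / (∏' n : ℕ, (1 - x ^ (n + 1))) ^ 4 := by
  have hx2 : ‖x ^ 2‖ < 1 := by
    rw [norm_pow]; exact pow_lt_one₀ (norm_nonneg _) hx1 (by omega)
  have hmul : ∀ z : ℂ, ‖z‖ < 1 → Multipliable (fun n : ℕ => 1 - z ^ (n + 1)) ∧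
      ∏' n : ℕ, (1 - z ^ (n + 1)) ≠ 0 := by
    intro z hz
    have hs : Summable (fun n : ℕ => ‖-z ^ (n + 1)‖) := by
      simp only [norm_neg, norm_pow]
      exact (summable_nat_add_iff 1).2 (summable_geometric_of_lt_one (norm_nonneg _) hz)
    constructor
    · simpa only [sub_eq_add_neg] using multipliable_one_add_of_summable hs
    · simpa only [sub_eq_add_neg] using tprod_one_add_ne_zero_of_summable
        (fun i => by simpa only [sub_eq_add_neg] using one_sub_ne_s10 z hz i) hs
  obtain ⟨hE, hE0⟩ := hmul _ hx2
  obtain ⟨hP, hP0⟩ := hmul _ hx1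
  set E := ∏' n : ℕ, (1 - (x ^ 2) ^ (n + 1)) with hEdef
  set P := ∏' n : ℕ, (1 - x ^ (n + 1)) with hPdef
  have tE := hE.tendsto_prod_tprod_nat
  have tP := hP.tendsto_prod_tprod_nat
  have tP2 := tP.comp (show Tendsto (fun n : ℕ => 2 * n) atTop atTop from
    tendsto_atTop_mono (fun n => by simp only [id]; omega) tendsto_id)
  have hA : Tendsto (qA x) atTop (𝓝 (P / E ^ 2)) := by
    refine (tP2.div (tE.pow 2) (pow_ne_zero _ hE0)).congr fun N => ?_
    simp only [Function.comp, Pi.div_apply]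
    induction N with
    | zero => simp [qA]
    | succ N ih =>
      have e : 2 * (N + 1) = 2 * N + 1 + 1 := by ring
      rw [e, Finset.prod_range_succ, Finset.prod_range_succ, Finset.prod_range_succ, qA,
        Finset.prod_range_succ, ← qA, ← ih]
      have h1 := one_sub_ne_s10 x hx1 (2 * N + 1)
      have h2 : 1 - (x ^ 2) ^ (N + 1) = 1 - x ^ (2 * N + 1 + 1) := by ring
      rw [h2, mul_pow]
      have h3 : ∏ i ∈ Finset.range N, (1 - (x ^ 2) ^ (i + 1)) ≠ 0 :=
        Finset.prod_ne_zero_iff.2 fun i _ => one_sub_ne_s10 _ hx2 i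
      have h4 : 1 - x ^ (2 * N + 2) = 1 - x ^ (2 * N + 1 + 1) := rfl
      rw [h4]
      field_simp
  rw [← lambert x hx1, limit_identity x hx0 hx1 _ (div_ne_zero hP0 (pow_ne_zero _ hE0)) hA]
  field_simp

/-- For `τ ∈ ℍ`: `E_odd(τ) = η(4τ)⁸/η(2τ)⁴`. -/
theorem stmt10 (τ : ℂ) (hτ : 0 < τ.im) :
    Eodd τ = dedekindEta (4 * τ) ^ 8 / dedekindEta (2 * τ) ^ 4 := by
  have hq0 : nome τ ≠ 0 := Complex.exp_ne_zero _
  have hq1 : ‖nome τ‖ < 1 := by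
    rw [nome, Complex.norm_exp, Real.exp_lt_one_iff]
    have : (2 * (π : ℂ) * I * τ).re = - (2 * π * τ.im) := by simp
    rw [this]
    have := Real.pi_pos
    nlinarith [mul_pos this hτ]
  have h2 : nome (2 * τ) = nome τ ^ 2 := by
    rw [nome, nome, ← Complex.exp_nat_mul]; congr 1; push_cast; ring
  have h4 : nome (4 * τ) = (nome τ ^ 2) ^ 2 := by
    rw [nome, nome, ← Complex.exp_nat_mul, ← Complex.exp_nat_mul]; congr 1; push_cast; ring
  have hx1 : ‖nome τ ^ 2‖ < 1 := by
    rw [norm_pow]; exact pow_lt_one₀ (norm_nonneg _) hq1 (by omega)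
  have hm := main_x (nome τ ^ 2) (pow_ne_zero _ hq0) hx1
  have hE : Eodd τ = nome τ * ∑' n : ℕ, ((∑ d ∈ (2 * n + 1).divisors, d : ℕ) : ℂ) *
      (nome τ ^ 2) ^ n := by
    rw [Eodd, ← tsum_mul_left]
    refine tsum_congr fun n => ?_
    ring
  have hexp : Complex.exp ((π : ℂ) * I * (4 * τ) / 12) ^ 8 =
      nome τ * Complex.exp ((π : ℂ) * I * (2 * τ) / 12) ^ 4 := by
    rw [nome, ← Complex.exp_nat_mul, ← Complex.exp_nat_mul, ← Complex.exp_add]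
    congr 1; push_cast; ring
  rw [hE, hm, dedekindEta, dedekindEta, h2, h4, mul_pow, mul_pow, hexp]
  have := Complex.exp_ne_zero ((π : ℂ) * I * (2 * τ) / 12)
  field_simp
end
end
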